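/- Let K be a field, t ∈ K^× and κ ∈ Z^ℓ a multicharge, and suppose (K,t) separates Std(P_n). Let α = {α_r(t)} be a seminormal coefficient system and choose a nonzero scalar γ_{t^λ} ∈ K^× for each ℓ-multipartition λ of n. Then there exist elements f_{st} ∈ H_n(K,t,κ), one for each pair (s,t) of standard tableaux of the same shape, and nonzero scalars γ_t ∈ K^× for t ∈ Std(P_n) with γ_{t^λ} as chosen, such that: (i) the f_{st} form a K-basis of H_n(K,t,κ); (ii) f_{st} L_k = [c_k(t)]_t f_{st} and L_k f_{st} = [c_k(s)]_t f_{st} for 1 ≤ k ≤ n; (iii) f_{st} T_r = α_r(t) f_{sv} − (1/[ρ_r(t)]_t) f_{st} and T_r f_{st} = α_r(s) f_{ut} − (1/[ρ_r(s)]_t) f_{st} for 1 ≤ r < n, where v = t(r,r+1), u = s(r,r+1), and f_{sv} = 0 (resp. f_{ut} = 0) if v (resp. u) is not standard; (iv) f_{st} f_{uv} = δ_{tu} γ_t f_{sv} for all same-shape pairs (s,t), (u,v). Moreover the family (f_{st}) with these properties is uniquely determined by α and the chosen scalars {γ_{t^λ}}. -/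

import Mathlib

open scoped BigOperators
open scoped Classical

namespace Paper

/-! ## Quantum integers -/

/-- The quantum integer `[d]_x` in a field, for `d ∈ ℤ`. -/
noncomputable def qint {K : Type*} [Field K] (x : K) (d : ℤ) : K :=
  if 0 ≤ d then ∑ k ∈ Finset.range d.toNat, x ^ k
  else -∑ k ∈ Finset.range (-d).toNat, x ^ (-((k : ℤ) + 1))

/-- The quantum integer `[d]_t` in a commutative ring, for an invertible `t` and `d ∈ ℤ`. -/
def qintU {O : Type*} [CommRing O] (t : Oˣ) (d : ℤ) : O :=
  if 0 ≤ d then ∑ k ∈ Finset.range d.toNat, (t : O) ^ k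
  else -∑ k ∈ Finset.range (-d).toNat, ((t ^ (-((k : ℤ) + 1)) : Oˣ) : O)

/-! ## Nodes, multipartitions and standard tableaux -/

/-- A node `(l, r, c)`: component `l`, row `r`, column `c` (all `0`-based). -/
abbrev Node : Type := ℕ × ℕ × ℕ

/-- `nodeBelow A B` holds when `B` is strictly below `A`, i.e. `A < B` lexicographically. -/
def nodeBelow (A B : Node) : Prop :=
  A.1 < B.1 ∨ (A.1 = B.1 ∧ (A.2.1 < B.2.1 ∨ (A.2.1 = B.2.1 ∧ A.2.2 < B.2.2)))

/-- An `ℓ`-multipartition of `n`. -/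
structure Multipartition (ℓ n : ℕ) : Type where
  part : ℕ → ℕ → ℕ
  comp_bound : ∀ l, ℓ ≤ l → ∀ r, part l r = 0
  antitone : ∀ l, Antitone (part l)
  row_bound : ∀ l r, n ≤ r → part l r = 0
  size : (∑ l ∈ Finset.range ℓ, ∑ r ∈ Finset.range n, part l r) = n

/-- The diagram of a multipartition. -/
def Multipartition.diagram {ℓ n : ℕ} (μ : Multipartition ℓ n) : Set Node :=
  {A | A.2.2 < μ.part A.1 A.2.1}

/-- A standard tableau: a bijection from the diagram of its shape onto `{1, …, n}`
that increases along rows and down columns of each component (it takes the value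
`0` off the diagram, so that it is determined by its entries). -/
structure StdTableau (ℓ n : ℕ) : Type where
  shape : Multipartition ℓ n
  entry : Node → ℕ
  entry_zero : ∀ A, A ∉ shape.diagram → entry A = 0
  bijOn : Set.BijOn entry shape.diagram (Set.Icc 1 n)
  row_inc : ∀ l r c, (l, r, c + 1) ∈ shape.diagram → entry (l, r, c) < entry (l, r, c + 1)
  col_inc : ∀ l r c, (l, r + 1, c) ∈ shape.diagram → entry (l, r, c) < entry (l, r + 1, c)

/-- The node of a standard tableau containing the entry `k`. -/
noncomputable def StdTableau.node {ℓ n : ℕ} (T : StdTableau ℓ n) (k : ℕ) : Node :=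
  Function.invFunOn T.entry T.shape.diagram k

/-- The content `c_k(T) = κ_l + c - r` of the entry `k` in the tableau `T`
(`1 ≤ k ≤ n`). -/
noncomputable def content {ℓ n : ℕ} (κ : ℕ → ℤ) (T : StdTableau ℓ n) (k : ℕ) : ℤ :=
  κ (T.node k).1 + ((T.node k).2.2 : ℤ) - ((T.node k).2.1 : ℤ)

/-- The residue sequence of a standard tableau, in `I^n` with `I = ℤ/eℤ`. -/
noncomputable def resSeq {ℓ n : ℕ} (e : ℕ) (κ : ℕ → ℤ) (T : StdTableau ℓ n) :
    Fin n → ZMod e :=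
  fun k => ((content κ T (k.1 + 1) : ℤ) : ZMod e)

/-- The residue of a node. -/
def resNode (e : ℕ) (κ : ℕ → ℤ) (A : Node) : ZMod e :=
  ((κ A.1 + (A.2.2 : ℤ) - (A.2.1 : ℤ) : ℤ) : ZMod e)

/-- A set of nodes is the diagram of a multipartition (with at most `ℓ` components)
iff it is finite and downward closed in rows and columns. -/
def IsDiagramSet (ℓ : ℕ) (S : Set Node) : Prop :=
  S.Finite ∧ (∀ A ∈ S, A.1 < ℓ) ∧
    (∀ l r c, (l, r, c + 1) ∈ S → (l, r, c) ∈ S) ∧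
    (∀ l r c, (l, r + 1, c) ∈ S → (l, r, c) ∈ S)

/-- `A` is an addable node of the diagram `S`. -/
def Addable (ℓ : ℕ) (S : Set Node) (A : Node) : Prop :=
  A ∉ S ∧ IsDiagramSet ℓ (S ∪ {A})

/-- `A` is a removable node of the diagram `S`. -/
def Removable (ℓ : ℕ) (S : Set Node) (A : Node) : Prop :=
  A ∈ S ∧ IsDiagramSet ℓ (S \ {A})

/-- `d_A(S)`: the number of addable nodes of `S` of the same residue as `A` strictly
below `A`, minus the number of removable ones. -/
noncomputable def dNode (ℓ e : ℕ) (κ : ℕ → ℤ) (S : Set Node) (A : Node) : ℤ :=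
  (Set.ncard {B | Addable ℓ S B ∧ resNode e κ B = resNode e κ A ∧ nodeBelow A B} : ℤ) -
    (Set.ncard {B | Removable ℓ S B ∧ resNode e κ B = resNode e κ A ∧ nodeBelow A B} : ℤ)

/-- The Brundan–Kleshchev–Wang degree `deg_e(T)` of a standard tableau, written as the
telescoping sum of the recursion `deg_e(T) = deg_e(T↓(n-1)) + d_A(Shape(T))`. -/
noncomputable def degE {ℓ n : ℕ} (e : ℕ) (κ : ℕ → ℤ) (T : StdTableau ℓ n) : ℤ :=
  ∑ m ∈ Finset.Icc 1 n,
    dNode ℓ e κ {A | A ∈ T.shape.diagram ∧ T.entry A ≤ m} (T.node m)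

/-- The restriction of the diagram of `T` to entries `≤ m` (the diagram of `Shape(T↓m)`). -/
def restDiag {ℓ n : ℕ} (T : StdTableau ℓ n) (m : ℕ) : Set Node :=
  {A | A ∈ T.shape.diagram ∧ T.entry A ≤ m}

/-- Dominance order on standard tableaux: `domTab S T` iff `S ⊵ T`. -/
def domTab {ℓ n : ℕ} (S T : StdTableau ℓ n) : Prop :=
  ∀ m l i : ℕ,
    Set.ncard {A | A ∈ restDiag T m ∧ (A.1 < l ∨ (A.1 = l ∧ A.2.1 ≤ i))} ≤
      Set.ncard {A | A ∈ restDiag S m ∧ (A.1 < l ∨ (A.1 = l ∧ A.2.1 ≤ i))}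

/-- Interchange the entries `r` and `r + 1` in an entry function. -/
def swapEntry (f : Node → ℕ) (r : ℕ) : Node → ℕ :=
  fun A => if f A = r then r + 1 else if f A = r + 1 then r else f A

/-- `ρ_r(T) = c_r(T) - c_{r+1}(T)`, the axial distance. -/
noncomputable def rhoTab {ℓ n : ℕ} (κ : ℕ → ℤ) (T : StdTableau ℓ n) (r : ℕ) : ℤ :=
  content κ T r - content κ T (r + 1)

/-- The entry function of the row-reading initial tableau `t^λ`. -/
noncomputable def tlamEntry {ℓ n : ℕ} (μ : Multipartition ℓ n) (A : Node) : ℕ :=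
  if A ∈ μ.diagram then
    (∑ l ∈ Finset.range A.1, ∑ r ∈ Finset.range n, μ.part l r) +
      (∑ r ∈ Finset.range A.2.1, μ.part A.1 r) + A.2.2 + 1
  else 0

/-- The finite set of possible contents of standard tableaux of size `n`. -/
noncomputable def contFinset (ℓ n : ℕ) (κ : ℕ → ℤ) : Finset ℤ :=
  ((Finset.range ℓ ×ˢ Finset.range n ×ˢ Finset.range n).image
      (fun x => κ x.1 + (x.2.2 : ℤ) - (x.2.1 : ℤ))).filter
    (fun c => ∃ T : StdTableau ℓ n, ∃ k, 1 ≤ k ∧ k ≤ n ∧ content κ T k = c)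

/-- The standard tableau (if any) obtained from `T` by interchanging the entries
`r` and `r + 1`; i.e. `T·s_r` if it is standard, and `none` otherwise. -/
noncomputable def oSwapO {ℓ n : ℕ} (T : StdTableau ℓ n) (r : ℕ) :
    Option (StdTableau ℓ n) :=
  if h : ∃ V : StdTableau ℓ n, V.entry = swapEntry T.entry r then some (Classical.choose h)
  else none

/-- `oSwap` extended to `Option`. -/
noncomputable def oSwap {ℓ n : ℕ} (X : Option (StdTableau ℓ n)) (r : ℕ) :
    Option (StdTableau ℓ n) :=
  X.bind fun T => oSwapO T r

/-- Evaluate a seminormal coefficient system on an optional tableau (by `0` if none). -/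
noncomputable def aE {ℓ n : ℕ} {K : Type*} [Field K] (α : ℕ → StdTableau ℓ n → K) (r : ℕ)
    (X : Option (StdTableau ℓ n)) : K :=
  X.elim 0 (α r)

/-! ## Separation and idempotent subrings -/

/-- `(K, t)` separates `Std(P_n)` (field version):
`[n]!_t ∏_{1 ≤ l < m ≤ ℓ} ∏_{-n < d < n} [κ_l - κ_m + d]_t ≠ 0`. -/
def SeparatesF {K : Type*} [Field K] (t : Kˣ) (n ℓ : ℕ) (κ : ℕ → ℤ) : Prop :=
  ((∏ d ∈ Finset.Icc 1 n, qint (t : K) (d : ℤ)) *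
      ∏ l ∈ Finset.range ℓ, ∏ m ∈ Finset.Ioo l ℓ,
        ∏ d ∈ Finset.Ioo (-(n : ℤ)) (n : ℤ), qint (t : K) (κ l - κ m + d)) ≠ 0

/-- `(O, t)` separates `Std(P_n)` (subring version): the separation element is a unit. -/
def SeparatesU {O : Type*} [CommRing O] (t : Oˣ) (n ℓ : ℕ) (κ : ℕ → ℤ) : Prop :=
  IsUnit ((∏ d ∈ Finset.Icc 1 n, qintU t (d : ℤ)) *
      ∏ l ∈ Finset.range ℓ, ∏ m ∈ Finset.Ioo l ℓ,
        ∏ d ∈ Finset.Ioo (-(n : ℤ)) (n : ℤ), qintU t (κ l - κ m + d))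

/-- `(O, t)` is an `e`-idempotent subring of the field `K`. -/
def IsIdempotentSubring {K : Type*} [Field K] (O : Subring K) (t : Oˣ) (e n ℓ : ℕ)
    (κ : ℕ → ℤ) : Prop :=
  SeparatesU t n ℓ κ ∧
    (∀ k : ℤ, ¬(e : ℤ) ∣ k → IsUnit (qintU t k)) ∧
    (∀ k : ℤ, (e : ℤ) ∣ k → qintU t k ∈ Ideal.jacobson (⊥ : Ideal O))

/-! ## The cyclotomic Hecke algebra, by generators and relations -/

/-- Generators `L_1, …, L_n`, `T_1, …, T_{n-1}` (here `0`-based). -/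
inductive HeckeGen (n : ℕ) : Type
  | L : Fin n → HeckeGen n
  | T : Fin (n - 1) → HeckeGen n

/-- The position `r` of the pair `(r, r+1)` interchanged by the `r`-th transposition. -/
def pL {n : ℕ} (r : Fin (n - 1)) : Fin n := ⟨r.1, by have := r.2; omega⟩

/-- The position `r + 1` of the pair interchanged by the `r`-th transposition. -/
def pR {n : ℕ} (r : Fin (n - 1)) : Fin n := ⟨r.1 + 1, by have := r.2; omega⟩

/-- The position `r + 2`, used in braid relations. -/
def pM {n : ℕ} (r : Fin (n - 1)) (hr : r.1 + 1 < n - 1) : Fin n := ⟨r.1 + 2, by omega⟩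

/-- The free algebra generator `L_k`. -/
def hL (R : Type*) [CommRing R] {n : ℕ} (k : Fin n) : FreeAlgebra R (HeckeGen n) :=
  FreeAlgebra.ι R (HeckeGen.L k)

/-- The free algebra generator `T_r`. -/
def hT (R : Type*) [CommRing R] {n : ℕ} (r : Fin (n - 1)) : FreeAlgebra R (HeckeGen n) :=
  FreeAlgebra.ι R (HeckeGen.T r)

/-- The defining relations of the integral cyclotomic Hecke algebra `H_n(R, t, κ)`. -/
inductive HeckeRel (R : Type*) [CommRing R] (t : Rˣ) (n ℓ : ℕ) (κ : ℕ → ℤ) :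
    FreeAlgebra R (HeckeGen n) → FreeAlgebra R (HeckeGen n) → Prop
  | cyc (h : 0 < n) :
      HeckeRel R t n ℓ κ
        (((List.range ℓ).map fun l =>
          hL R (⟨0, h⟩ : Fin n) - algebraMap R _ (qintU t (κ l))).prod) 0
  | quad (r : Fin (n - 1)) :
      HeckeRel R t n ℓ κ ((hT R r + 1) * (hT R r - algebraMap R _ (t : R))) 0
  | LL (k m : Fin n) : HeckeRel R t n ℓ κ (hL R k * hL R m) (hL R m * hL R k)
  | TTfar (r s : Fin (n - 1)) (h : r.1 + 1 < s.1 ∨ s.1 + 1 < r.1) :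
      HeckeRel R t n ℓ κ (hT R r * hT R s) (hT R s * hT R r)
  | braid (r s : Fin (n - 1)) (h : s.1 = r.1 + 1) :
      HeckeRel R t n ℓ κ (hT R r * hT R s * hT R r) (hT R s * hT R r * hT R s)
  | TL (r : Fin (n - 1)) (k : Fin n) (h : k.1 ≠ r.1 ∧ k.1 ≠ r.1 + 1) :
      HeckeRel R t n ℓ κ (hT R r * hL R k) (hL R k * hT R r)
  | LT (r : Fin (n - 1)) :
      HeckeRel R t n ℓ κ (hL R (pR r) * (hT R r - algebraMap R _ (t : R) + 1))
        (hT R r * hL R (pL r) + 1)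

/-- The integral cyclotomic Hecke algebra of type `A`, `H_n(R, t, κ)`. -/
noncomputable abbrev CycHecke (R : Type*) [CommRing R] (t : Rˣ) (n ℓ : ℕ) (κ : ℕ → ℤ) :
    Type _ :=
  RingQuot (HeckeRel R t n ℓ κ)

/-- The generator `L_k` of the cyclotomic Hecke algebra. -/
noncomputable def Lgen (R : Type*) [CommRing R] (t : Rˣ) (n ℓ : ℕ) (κ : ℕ → ℤ)
    (k : Fin n) : CycHecke R t n ℓ κ :=
  RingQuot.mkAlgHom R (HeckeRel R t n ℓ κ) (hL R k)

/-- The generator `T_r` of the cyclotomic Hecke algebra. -/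
noncomputable def Tgen (R : Type*) [CommRing R] (t : Rˣ) (n ℓ : ℕ) (κ : ℕ → ℤ)
    (r : Fin (n - 1)) : CycHecke R t n ℓ κ :=
  RingQuot.mkAlgHom R (HeckeRel R t n ℓ κ) (hT R r)

end Paper
/-! ## Quiver Hecke (KLR) algebras, by generators and relations -/

namespace Paper

/-- Generators `e(i)` (`i ∈ I^n`), `ψ_1, …, ψ_{n-1}`, `y_1, …, y_n` (here `0`-based). -/
inductive KLRGen (n e : ℕ) : Type
  | idem : (Fin n → ZMod e) → KLRGen n e
  | psi : Fin (n - 1) → KLRGen n e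
  | y : Fin n → KLRGen n e

/-- The free algebra generator `e(i)`. -/
def kE (R : Type*) [CommRing R] {n e : ℕ} (i : Fin n → ZMod e) :
    FreeAlgebra R (KLRGen n e) :=
  FreeAlgebra.ι R (KLRGen.idem i)

/-- The free algebra generator `ψ_r`. -/
def kPsi (R : Type*) [CommRing R] {n e : ℕ} (r : Fin (n - 1)) :
    FreeAlgebra R (KLRGen n e) :=
  FreeAlgebra.ι R (KLRGen.psi r)

/-- The free algebra generator `y_k`. -/
def kY (R : Type*) [CommRing R] {n e : ℕ} (k : Fin n) : FreeAlgebra R (KLRGen n e) :=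
  FreeAlgebra.ι R (KLRGen.y k)

/-- `s_r · i`: interchange the entries of `i` at positions `r` and `r + 1`. -/
def swapSeq {n e : ℕ} (i : Fin n → ZMod e) (r : Fin (n - 1)) : Fin n → ZMod e :=
  fun k => if k = pL r then i (pR r) else if k = pR r then i (pL r) else i k

/-- The defining relations of the cyclotomic quiver Hecke algebra `R_n^Λ(R)` where
`Λ = Σ_l Λ_{κ_l mod e}`. -/
inductive KLRRel (R : Type*) [CommRing R] (n e ℓ : ℕ) [NeZero e] (κ : ℕ → ℤ) :
    FreeAlgebra R (KLRGen n e) → FreeAlgebra R (KLRGen n e) → Prop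
  | cyc (h : 0 < n) (i : Fin n → ZMod e) :
      KLRRel R n e ℓ κ
        ((kY R (⟨0, h⟩ : Fin n)) ^
            (((Finset.range ℓ).filter fun l => ((κ l : ZMod e) = i ⟨0, h⟩)).card) *
          kE R i) 0
  | orth (i j : Fin n → ZMod e) (h : i ≠ j) : KLRRel R n e ℓ κ (kE R i * kE R j) 0
  | idem (i : Fin n → ZMod e) : KLRRel R n e ℓ κ (kE R i * kE R i) (kE R i)
  | complete : KLRRel R n e ℓ κ (∑ i : Fin n → ZMod e, kE R i) 1
  | yE (k : Fin n) (i : Fin n → ZMod e) :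
      KLRRel R n e ℓ κ (kY R k * kE R i) (kE R i * kY R k)
  | psiE (r : Fin (n - 1)) (i : Fin n → ZMod e) :
      KLRRel R n e ℓ κ (kPsi R r * kE R i) (kE R (swapSeq i r) * kPsi R r)
  | yy (k m : Fin n) : KLRRel R n e ℓ κ (kY R k * kY R m) (kY R m * kY R k)
  | psiyEq (r : Fin (n - 1)) (i : Fin n → ZMod e) (h : i (pL r) = i (pR r)) :
      KLRRel R n e ℓ κ (kPsi R r * kY R (pR r) * kE R i)
        ((kY R (pL r) * kPsi R r + 1) * kE R i)
  | psiyNe (r : Fin (n - 1)) (i : Fin n → ZMod e) (h : i (pL r) ≠ i (pR r)) :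
      KLRRel R n e ℓ κ (kPsi R r * kY R (pR r) * kE R i)
        (kY R (pL r) * kPsi R r * kE R i)
  | ypsiEq (r : Fin (n - 1)) (i : Fin n → ZMod e) (h : i (pL r) = i (pR r)) :
      KLRRel R n e ℓ κ (kY R (pR r) * kPsi R r * kE R i)
        ((kPsi R r * kY R (pL r) + 1) * kE R i)
  | ypsiNe (r : Fin (n - 1)) (i : Fin n → ZMod e) (h : i (pL r) ≠ i (pR r)) :
      KLRRel R n e ℓ κ (kY R (pR r) * kPsi R r * kE R i)
        (kPsi R r * kY R (pL r) * kE R i)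
  | psiyFar (r : Fin (n - 1)) (k : Fin n) (h : k.1 ≠ r.1 ∧ k.1 ≠ r.1 + 1) :
      KLRRel R n e ℓ κ (kPsi R r * kY R k) (kY R k * kPsi R r)
  | psipsiFar (r s : Fin (n - 1)) (h : r.1 + 1 < s.1 ∨ s.1 + 1 < r.1) :
      KLRRel R n e ℓ κ (kPsi R r * kPsi R s) (kPsi R s * kPsi R r)
  | quadEq (r : Fin (n - 1)) (i : Fin n → ZMod e) (h : i (pL r) = i (pR r)) :
      KLRRel R n e ℓ κ (kPsi R r ^ 2 * kE R i) 0
  | quadR (r : Fin (n - 1)) (i : Fin n → ZMod e)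
      (h1 : i (pR r) = i (pL r) + 1) (h2 : i (pL r) ≠ i (pR r) + 1) :
      KLRRel R n e ℓ κ (kPsi R r ^ 2 * kE R i) ((kY R (pL r) - kY R (pR r)) * kE R i)
  | quadL (r : Fin (n - 1)) (i : Fin n → ZMod e)
      (h1 : i (pL r) = i (pR r) + 1) (h2 : i (pR r) ≠ i (pL r) + 1) :
      KLRRel R n e ℓ κ (kPsi R r ^ 2 * kE R i) ((kY R (pR r) - kY R (pL r)) * kE R i)
  | quadBoth (r : Fin (n - 1)) (i : Fin n → ZMod e)
      (h1 : i (pR r) = i (pL r) + 1) (h2 : i (pL r) = i (pR r) + 1) :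
      KLRRel R n e ℓ κ (kPsi R r ^ 2 * kE R i)
        ((kY R (pR r) - kY R (pL r)) * (kY R (pL r) - kY R (pR r)) * kE R i)
  | quadNone (r : Fin (n - 1)) (i : Fin n → ZMod e) (h1 : i (pL r) ≠ i (pR r))
      (h2 : i (pR r) ≠ i (pL r) + 1) (h3 : i (pL r) ≠ i (pR r) + 1) :
      KLRRel R n e ℓ κ (kPsi R r ^ 2 * kE R i) (kE R i)
  | braidR (r : Fin (n - 1)) (hr : r.1 + 1 < n - 1) (i : Fin n → ZMod e)
      (h0 : i (pM r hr) = i (pL r)) (h1 : i (pR r) = i (pL r) + 1)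
      (h2 : i (pL r) ≠ i (pR r) + 1) :
      KLRRel R n e ℓ κ (kPsi R r * kPsi R ⟨r.1 + 1, hr⟩ * kPsi R r * kE R i)
        ((kPsi R ⟨r.1 + 1, hr⟩ * kPsi R r * kPsi R ⟨r.1 + 1, hr⟩ - 1) * kE R i)
  | braidL (r : Fin (n - 1)) (hr : r.1 + 1 < n - 1) (i : Fin n → ZMod e)
      (h0 : i (pM r hr) = i (pL r)) (h1 : i (pL r) = i (pR r) + 1)
      (h2 : i (pR r) ≠ i (pL r) + 1) :
      KLRRel R n e ℓ κ (kPsi R r * kPsi R ⟨r.1 + 1, hr⟩ * kPsi R r * kE R i)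
        ((kPsi R ⟨r.1 + 1, hr⟩ * kPsi R r * kPsi R ⟨r.1 + 1, hr⟩ + 1) * kE R i)
  | braidBoth (r : Fin (n - 1)) (hr : r.1 + 1 < n - 1) (i : Fin n → ZMod e)
      (h0 : i (pM r hr) = i (pL r)) (h1 : i (pR r) = i (pL r) + 1)
      (h2 : i (pL r) = i (pR r) + 1) :
      KLRRel R n e ℓ κ (kPsi R r * kPsi R ⟨r.1 + 1, hr⟩ * kPsi R r * kE R i)
        ((kPsi R ⟨r.1 + 1, hr⟩ * kPsi R r * kPsi R ⟨r.1 + 1, hr⟩ +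
            kY R (pL r) - 2 * kY R (pR r) + kY R (pM r hr)) * kE R i)
  | braidNone (r : Fin (n - 1)) (hr : r.1 + 1 < n - 1) (i : Fin n → ZMod e)
      (h : ¬(i (pM r hr) = i (pL r) ∧
        (i (pR r) = i (pL r) + 1 ∨ i (pL r) = i (pR r) + 1))) :
      KLRRel R n e ℓ κ (kPsi R r * kPsi R ⟨r.1 + 1, hr⟩ * kPsi R r * kE R i)
        (kPsi R ⟨r.1 + 1, hr⟩ * kPsi R r * kPsi R ⟨r.1 + 1, hr⟩ * kE R i)

/-- The cyclotomic quiver Hecke algebra `R_n^Λ(R)`, `Λ = Σ_l Λ_{κ_l mod e}`. -/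
noncomputable abbrev KLR (R : Type*) [CommRing R] (n e ℓ : ℕ) [NeZero e] (κ : ℕ → ℤ) :
    Type _ :=
  RingQuot (KLRRel R n e ℓ κ)

/-- The generator `e(i)` of the cyclotomic quiver Hecke algebra. -/
noncomputable def KeGen (R : Type*) [CommRing R] (n e ℓ : ℕ) [NeZero e] (κ : ℕ → ℤ)
    (i : Fin n → ZMod e) : KLR R n e ℓ κ :=
  RingQuot.mkAlgHom R (KLRRel R n e ℓ κ) (kE R i)

/-- The generator `ψ_r` of the cyclotomic quiver Hecke algebra. -/
noncomputable def KpsiGen (R : Type*) [CommRing R] (n e ℓ : ℕ) [NeZero e] (κ : ℕ → ℤ)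
    (r : Fin (n - 1)) : KLR R n e ℓ κ :=
  RingQuot.mkAlgHom R (KLRRel R n e ℓ κ) (kPsi R r)

/-- The generator `y_k` of the cyclotomic quiver Hecke algebra. -/
noncomputable def KyGen (R : Type*) [CommRing R] (n e ℓ : ℕ) [NeZero e] (κ : ℕ → ℤ)
    (k : Fin n) : KLR R n e ℓ κ :=
  RingQuot.mkAlgHom R (KLRRel R n e ℓ κ) (kY R k)

end Paper
/-! ## The deformed cyclotomic quiver Hecke algebra -/

namespace Paper

/-- `y_k^⟨d⟩ = t^d y_k + [d]_t` in the free algebra. -/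
def ydot (R : Type*) [CommRing R] (t : Rˣ) {n e : ℕ} (d : ℤ) (k : Fin n) :
    FreeAlgebra R (KLRGen n e) :=
  algebraMap R _ ((t ^ d : Rˣ) : R) * kY R k + algebraMap R _ (qintU t d)

/-- `ρ_r(i) = î_r - î_{r+1}` for `i ∈ I^n`. -/
def rhoI {n e : ℕ} (i : Fin n → ZMod e) (r : Fin (n - 1)) : ℤ :=
  ((i (pL r)).val : ℤ) - ((i (pR r)).val : ℤ)

/-- The defining relations of the deformed cyclotomic quiver Hecke algebra `R_n(O)`. -/
inductive DefKLRRel (R : Type*) [CommRing R] (t : Rˣ) (n e ℓ : ℕ) [NeZero e] (κ : ℕ → ℤ) :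
    FreeAlgebra R (KLRGen n e) → FreeAlgebra R (KLRGen n e) → Prop
  | cyc (h : 0 < n) (i : Fin n → ZMod e) :
      DefKLRRel R t n e ℓ κ
        ((((List.range ℓ).map fun l =>
            if ((κ l : ZMod e) = i ⟨0, h⟩) then
              kY R (⟨0, h⟩ : Fin n) -
                algebraMap R _ (qintU t (κ l - ((i ⟨0, h⟩).val : ℤ)))
            else 1).prod) * kE R i) 0
  | orth (i j : Fin n → ZMod e) (h : i ≠ j) : DefKLRRel R t n e ℓ κ (kE R i * kE R j) 0
  | idem (i : Fin n → ZMod e) : DefKLRRel R t n e ℓ κ (kE R i * kE R i) (kE R i)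
  | complete : DefKLRRel R t n e ℓ κ (∑ i : Fin n → ZMod e, kE R i) 1
  | yE (k : Fin n) (i : Fin n → ZMod e) :
      DefKLRRel R t n e ℓ κ (kY R k * kE R i) (kE R i * kY R k)
  | psiE (r : Fin (n - 1)) (i : Fin n → ZMod e) :
      DefKLRRel R t n e ℓ κ (kPsi R r * kE R i) (kE R (swapSeq i r) * kPsi R r)
  | yy (k m : Fin n) : DefKLRRel R t n e ℓ κ (kY R k * kY R m) (kY R m * kY R k)
  | psiyEq (r : Fin (n - 1)) (i : Fin n → ZMod e) (h : i (pL r) = i (pR r)) :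
      DefKLRRel R t n e ℓ κ (kPsi R r * kY R (pR r) * kE R i)
        ((kY R (pL r) * kPsi R r + 1) * kE R i)
  | psiyNe (r : Fin (n - 1)) (i : Fin n → ZMod e) (h : i (pL r) ≠ i (pR r)) :
      DefKLRRel R t n e ℓ κ (kPsi R r * kY R (pR r) * kE R i)
        (kY R (pL r) * kPsi R r * kE R i)
  | ypsiEq (r : Fin (n - 1)) (i : Fin n → ZMod e) (h : i (pL r) = i (pR r)) :
      DefKLRRel R t n e ℓ κ (kY R (pR r) * kPsi R r * kE R i)
        ((kPsi R r * kY R (pL r) + 1) * kE R i)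
  | ypsiNe (r : Fin (n - 1)) (i : Fin n → ZMod e) (h : i (pL r) ≠ i (pR r)) :
      DefKLRRel R t n e ℓ κ (kY R (pR r) * kPsi R r * kE R i)
        (kPsi R r * kY R (pL r) * kE R i)
  | psiyFar (r : Fin (n - 1)) (k : Fin n) (h : k.1 ≠ r.1 ∧ k.1 ≠ r.1 + 1) :
      DefKLRRel R t n e ℓ κ (kPsi R r * kY R k) (kY R k * kPsi R r)
  | psipsiFar (r s : Fin (n - 1)) (h : r.1 + 1 < s.1 ∨ s.1 + 1 < r.1) :
      DefKLRRel R t n e ℓ κ (kPsi R r * kPsi R s) (kPsi R s * kPsi R r)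
  | quadEq (r : Fin (n - 1)) (i : Fin n → ZMod e) (h : i (pL r) = i (pR r)) :
      DefKLRRel R t n e ℓ κ (kPsi R r ^ 2 * kE R i) 0
  | quadR (r : Fin (n - 1)) (i : Fin n → ZMod e)
      (h1 : i (pR r) = i (pL r) + 1) (h2 : i (pL r) ≠ i (pR r) + 1) :
      DefKLRRel R t n e ℓ κ (kPsi R r ^ 2 * kE R i)
        ((ydot R t (1 + rhoI i r) (pL r) - kY R (pR r)) * kE R i)
  | quadL (r : Fin (n - 1)) (i : Fin n → ZMod e)
      (h1 : i (pL r) = i (pR r) + 1) (h2 : i (pR r) ≠ i (pL r) + 1) :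
      DefKLRRel R t n e ℓ κ (kPsi R r ^ 2 * kE R i)
        ((ydot R t (1 - rhoI i r) (pR r) - kY R (pL r)) * kE R i)
  | quadBoth (r : Fin (n - 1)) (i : Fin n → ZMod e)
      (h1 : i (pR r) = i (pL r) + 1) (h2 : i (pL r) = i (pR r) + 1) :
      DefKLRRel R t n e ℓ κ (kPsi R r ^ 2 * kE R i)
        ((ydot R t (1 + rhoI i r) (pL r) - kY R (pR r)) *
          (ydot R t (1 - rhoI i r) (pR r) - kY R (pL r)) * kE R i)
  | quadNone (r : Fin (n - 1)) (i : Fin n → ZMod e) (h1 : i (pL r) ≠ i (pR r))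
      (h2 : i (pR r) ≠ i (pL r) + 1) (h3 : i (pL r) ≠ i (pR r) + 1) :
      DefKLRRel R t n e ℓ κ (kPsi R r ^ 2 * kE R i) (kE R i)
  | braidBoth (r : Fin (n - 1)) (hr : r.1 + 1 < n - 1) (i : Fin n → ZMod e)
      (h0 : i (pM r hr) = i (pL r)) (h1 : i (pR r) = i (pL r) + 1)
      (h2 : i (pL r) = i (pR r) + 1) :
      DefKLRRel R t n e ℓ κ
        ((kPsi R r * kPsi R ⟨r.1 + 1, hr⟩ * kPsi R r -
            kPsi R ⟨r.1 + 1, hr⟩ * kPsi R r * kPsi R ⟨r.1 + 1, hr⟩) * kE R i)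
        ((ydot R t (1 + rhoI i r) (pL r) + ydot R t (1 + rhoI i r) (pM r hr) -
            ydot R t (1 + rhoI i r) (pR r) - ydot R t (1 - rhoI i r) (pR r)) * kE R i)
  | braidR (r : Fin (n - 1)) (hr : r.1 + 1 < n - 1) (i : Fin n → ZMod e)
      (h0 : i (pM r hr) = i (pL r)) (h1 : i (pR r) = i (pL r) + 1)
      (h2 : i (pL r) ≠ i (pR r) + 1) :
      DefKLRRel R t n e ℓ κ
        ((kPsi R r * kPsi R ⟨r.1 + 1, hr⟩ * kPsi R r -
            kPsi R ⟨r.1 + 1, hr⟩ * kPsi R r * kPsi R ⟨r.1 + 1, hr⟩) * kE R i)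
        (algebraMap R _ (-(((t ^ (1 + rhoI i r) : Rˣ) : R))) * kE R i)
  | braidL (r : Fin (n - 1)) (hr : r.1 + 1 < n - 1) (i : Fin n → ZMod e)
      (h0 : i (pM r hr) = i (pL r)) (h1 : i (pL r) = i (pR r) + 1)
      (h2 : i (pR r) ≠ i (pL r) + 1) :
      DefKLRRel R t n e ℓ κ
        ((kPsi R r * kPsi R ⟨r.1 + 1, hr⟩ * kPsi R r -
            kPsi R ⟨r.1 + 1, hr⟩ * kPsi R r * kPsi R ⟨r.1 + 1, hr⟩) * kE R i)
        (kE R i)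
  | braidNone (r : Fin (n - 1)) (hr : r.1 + 1 < n - 1) (i : Fin n → ZMod e)
      (h : ¬(i (pM r hr) = i (pL r) ∧
        (i (pR r) = i (pL r) + 1 ∨ i (pL r) = i (pR r) + 1))) :
      DefKLRRel R t n e ℓ κ
        ((kPsi R r * kPsi R ⟨r.1 + 1, hr⟩ * kPsi R r -
            kPsi R ⟨r.1 + 1, hr⟩ * kPsi R r * kPsi R ⟨r.1 + 1, hr⟩) * kE R i) 0

/-- The deformed cyclotomic quiver Hecke algebra `R_n(R)`. -/
noncomputable abbrev DefKLR (R : Type*) [CommRing R] (t : Rˣ) (n e ℓ : ℕ) [NeZero e]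
    (κ : ℕ → ℤ) : Type _ :=
  RingQuot (DefKLRRel R t n e ℓ κ)

/-- The generator `f_i` of the deformed cyclotomic quiver Hecke algebra. -/
noncomputable def DfGen (R : Type*) [CommRing R] (t : Rˣ) (n e ℓ : ℕ) [NeZero e]
    (κ : ℕ → ℤ) (i : Fin n → ZMod e) : DefKLR R t n e ℓ κ :=
  RingQuot.mkAlgHom R (DefKLRRel R t n e ℓ κ) (kE R i)

/-- The generator `ψ_r` of the deformed cyclotomic quiver Hecke algebra. -/
noncomputable def DpsiGen (R : Type*) [CommRing R] (t : Rˣ) (n e ℓ : ℕ) [NeZero e]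
    (κ : ℕ → ℤ) (r : Fin (n - 1)) : DefKLR R t n e ℓ κ :=
  RingQuot.mkAlgHom R (DefKLRRel R t n e ℓ κ) (kPsi R r)

/-- The generator `y_k` of the deformed cyclotomic quiver Hecke algebra. -/
noncomputable def DyGen (R : Type*) [CommRing R] (t : Rˣ) (n e ℓ : ℕ) [NeZero e]
    (κ : ℕ → ℤ) (k : Fin n) : DefKLR R t n e ℓ κ :=
  RingQuot.mkAlgHom R (DefKLRRel R t n e ℓ κ) (kY R k)

/-! ## Seminormal idempotents -/

/-- The seminormal idempotent `F_T` of the semisimple cyclotomic Hecke algebra: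
`F_T = ∏_{k=1}^n ∏_{c ∈ Cont(n), [c_k(T)] ≠ [c]} (L_k - [c]) / ([c_k(T)] - [c])`. -/
noncomputable def Fidem (K : Type*) [Field K] (tK : Kˣ) (n ℓ : ℕ) (κ : ℕ → ℤ)
    (T : StdTableau ℓ n) : CycHecke K tK n ℓ κ :=
  ((List.finRange n).map (fun k =>
    (((contFinset ℓ n κ).sort (· ≤ ·)).map (fun c =>
      if qint (tK : K) (content κ T (k.1 + 1)) ≠ qint (tK : K) c then
        (Lgen K tK n ℓ κ k - algebraMap K _ (qint (tK : K) c)) *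
          algebraMap K _ ((qint (tK : K) (content κ T (k.1 + 1)) - qint (tK : K) c)⁻¹)
      else 1)).prod)).prod

/-- The residue idempotent `f_i = Σ_{T ∈ Std(i)} F_T`. -/
noncomputable def fres (K : Type*) [Field K] (tK : Kˣ) (n ℓ e : ℕ) (κ : ℕ → ℤ)
    (i : Fin n → ZMod e) : CycHecke K tK n ℓ κ :=
  ∑ᶠ T : {T : StdTableau ℓ n // resSeq e κ T = i}, Fidem K tK n ℓ κ T.1

/-- The simultaneous two-sided eigenspace `H_{S,T}` of the Jucys–Murphy elements. -/
noncomputable def eigSub (K : Type*) [Field K] (tK : Kˣ) (n ℓ : ℕ) (κ : ℕ → ℤ)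
    (S T : StdTableau ℓ n) : Submodule K (CycHecke K tK n ℓ κ) where
  carrier := {h | ∀ k : Fin n,
      Lgen K tK n ℓ κ k * h = qint (tK : K) (content κ S (k.1 + 1)) • h ∧
      h * Lgen K tK n ℓ κ k = qint (tK : K) (content κ T (k.1 + 1)) • h}
  add_mem' := by
    intro a b ha hb
    intro k
    obtain ⟨h1, h2⟩ := ha k
    obtain ⟨h3, h4⟩ := hb k
    exact ⟨by rw [mul_add, h1, h3, smul_add], by rw [add_mul, h2, h4, smul_add]⟩
  zero_mem' := by intro k; simp
  smul_mem' := by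
    intro c a ha
    intro k
    obtain ⟨h1, h2⟩ := ha k
    constructor
    · rw [mul_smul_comm, h1, smul_comm]
    · rw [smul_mul_assoc, h2, smul_comm]

end Paper

namespace Paper

/-- The properties of a `∗`-seminormal basis `{f_{S,T}}` with structure coefficients
given by the seminormal coefficient system `α` and `γ`-coefficients `γ` normalised by
`γ_{t^λ} = γ₀(λ)`:
(i) it is a `K`-basis of `H_n(K, t, κ)`;
(ii) `f_{S,T} L_k = [c_k(T)] f_{S,T}` and `L_k f_{S,T} = [c_k(S)] f_{S,T}`;
(iii) `f_{S,T} T_r = α_r(T) f_{S,V} - [ρ_r(T)]⁻¹ f_{S,T}` with `V = T(r, r+1)`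
(and `f_{S,V} = 0` if `V` is not standard), together with the left-handed analogue;
(iv) `f_{S,T} f_{U,V} = δ_{T,U} γ_T f_{S,V}`. -/
def SeminormalProps (K : Type) [Field K] (t : Kˣ) (n ℓ : ℕ) (κ : ℕ → ℤ)
    (α : ℕ → StdTableau ℓ n → K) (γ0 : Multipartition ℓ n → Kˣ)
    (f : StdTableau ℓ n → StdTableau ℓ n → CycHecke K t n ℓ κ)
    (γ : StdTableau ℓ n → Kˣ) : Prop :=
  (LinearIndependent K
      (fun p : {p : StdTableau ℓ n × StdTableau ℓ n // p.1.shape = p.2.shape} =>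
        f p.1.1 p.1.2) ∧
    Submodule.span K
      (Set.range
        (fun p : {p : StdTableau ℓ n × StdTableau ℓ n // p.1.shape = p.2.shape} =>
          f p.1.1 p.1.2)) = ⊤) ∧
  (∀ S T : StdTableau ℓ n, S.shape = T.shape → ∀ k : Fin n,
      f S T * Lgen K t n ℓ κ k = qint (t : K) (content κ T (k.1 + 1)) • f S T ∧
      Lgen K t n ℓ κ k * f S T = qint (t : K) (content κ S (k.1 + 1)) • f S T) ∧
  (∀ S T : StdTableau ℓ n, S.shape = T.shape → ∀ r : Fin (n - 1),
      (∀ V, oSwapO T (r.1 + 1) = some V →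
        f S T * Tgen K t n ℓ κ r =
          α (r.1 + 1) T • f S V -
            (qint (t : K) (rhoTab κ T (r.1 + 1)))⁻¹ • f S T) ∧
      (oSwapO T (r.1 + 1) = none →
        f S T * Tgen K t n ℓ κ r =
          -((qint (t : K) (rhoTab κ T (r.1 + 1)))⁻¹ • f S T))) ∧
  (∀ S T : StdTableau ℓ n, S.shape = T.shape → ∀ r : Fin (n - 1),
      (∀ U, oSwapO S (r.1 + 1) = some U →
        Tgen K t n ℓ κ r * f S T =
          α (r.1 + 1) S • f U T -
            (qint (t : K) (rhoTab κ S (r.1 + 1)))⁻¹ • f S T) ∧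
      (oSwapO S (r.1 + 1) = none →
        Tgen K t n ℓ κ r * f S T =
          -((qint (t : K) (rhoTab κ S (r.1 + 1)))⁻¹ • f S T))) ∧
  (∀ S T U V : StdTableau ℓ n, S.shape = T.shape → U.shape = V.shape →
      (T = U → f S T * f U V = (γ T : K) • f S V) ∧
      (T ≠ U → f S T * f U V = 0)) ∧
  (∀ T : StdTableau ℓ n, T.entry = tlamEntry T.shape → γ T = γ0 T.shape)

end Paper

open scoped BigOperators
open scoped Classical
namespace Paper

/-! ## Quantum integers -/

theorem qint_succ {K : Type*} [Field K] {x : K} (hx : x ≠ 0) (d : ℤ) :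
    qint x (d + 1) = qint x d + x ^ d := by
  unfold qint
  rcases le_or_gt 0 d with h | h
  · lift d to ℕ using h
    have h2 : (0 : ℤ) ≤ (d : ℤ) + 1 := by omega
    rw [if_pos h2, if_pos (Int.natCast_nonneg d)]
    have : ((d : ℤ) + 1).toNat = d + 1 := by omega
    rw [this, Finset.sum_range_succ]
    simp
  · obtain ⟨m, rfl⟩ : ∃ m : ℕ, d = -((m : ℤ) + 1) := ⟨(-d - 1).toNat, by omega⟩
    have hn1 : ¬ (0 : ℤ) ≤ -((m : ℤ) + 1) := by omega
    rw [if_neg hn1]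
    have e1 : (- -((m : ℤ) + 1)).toNat = m + 1 := by omega
    rw [e1, Finset.sum_range_succ]
    rcases Nat.eq_zero_or_pos m with rfl | hm
    · simp
    · have hn2 : ¬ (0 : ℤ) ≤ -((m : ℤ) + 1) + 1 := by omega
      rw [if_neg hn2]
      have e2 : (-(-((m : ℤ) + 1) + 1)).toNat = m := by omega
      rw [e2]
      ring

theorem qint_zero {K : Type*} [Field K] (x : K) : qint x 0 = 0 := by simp [qint]

theorem qint_one {K : Type*} [Field K] (x : K) : qint x 1 = 1 := by simp [qint]

theorem qint_add {K : Type*} [Field K] {x : K} (hx : x ≠ 0) (a b : ℤ) :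
    qint x (a + b) = qint x a + x ^ a * qint x b := by
  induction b using Int.induction_on with
  | zero => simp [qint_zero]
  | succ i ih =>
    rw [← add_assoc, qint_succ hx, ih, qint_succ hx, zpow_add₀ hx]; ring
  | pred i ih =>
    have h1 := qint_succ hx (a + (-(i : ℤ) - 1))
    have h2 := qint_succ hx (-(i : ℤ) - 1)
    have e1 : a + (-(i : ℤ) - 1) + 1 = a + -(i : ℤ) := by ring
    have e2 : (-(i : ℤ) - 1) + 1 = -(i : ℤ) := by ring
    rw [e1, ih] at h1
    rw [e2] at h2
    rw [h2] at h1
    rw [zpow_add₀ hx] at h1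
    linear_combination -h1

/-- `x^d = 1 + (x-1)[d]`. -/
theorem qint_zpow {K : Type*} [Field K] {x : K} (hx : x ≠ 0) (d : ℤ) :
    x ^ d = 1 + (x - 1) * qint x d := by
  have h1 := qint_add hx d 1
  have h2 := qint_add hx 1 d
  rw [add_comm 1 d] at h2
  rw [qint_one] at h1 h2
  rw [zpow_one] at h2
  linear_combination h2 - h1

theorem qint_sub {K : Type*} [Field K] {x : K} (hx : x ≠ 0) (a b : ℤ) :
    qint x a - qint x b = x ^ b * qint x (a - b) := by
  have h := qint_add hx b (a - b)
  rw [add_sub_cancel] at h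
  linear_combination h

theorem qint_neg_ne {K : Type*} [Field K] {x : K} (hx : x ≠ 0) {a : ℤ} (h : qint x (-a) ≠ 0) :
    qint x a ≠ 0 := by
  intro h0
  have := qint_add hx (-a) a
  rw [neg_add_cancel, qint_zero, h0] at this
  apply h
  linear_combination -this

theorem qintU_eq {K : Type*} [Field K] (t : Kˣ) (d : ℤ) : qintU t d = qint (t : K) d := by
  unfold qintU qint
  simp only [Units.val_zpow_eq_zpow_val]

/-! ## Separation -/

structure Sep {K : Type*} [Field K] (t : K) (n ℓ : ℕ) (κ : ℕ → ℤ) : Prop where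
  ne : t ≠ 0
  small : ∀ d : ℤ, d ≠ 0 → |d| ≤ n → qint t d ≠ 0
  cross : ∀ l m : ℕ, l < ℓ → m < ℓ → l ≠ m → ∀ d : ℤ, |d| < n → qint t (κ l - κ m + d) ≠ 0

theorem Sep.of {K : Type*} [Field K] {t : Kˣ} {n ℓ : ℕ} {κ : ℕ → ℤ} (h : SeparatesF t n ℓ κ) :
    Sep (t : K) n ℓ κ := by
  unfold SeparatesF at h
  have h1 := left_ne_zero_of_mul h
  have h2 := right_ne_zero_of_mul h
  rw [Finset.prod_ne_zero_iff] at h1 h2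
  have hpos : ∀ d : ℤ, 0 < d → d ≤ n → qint (t : K) d ≠ 0 := by
    intro d hd hn
    have := h1 d.toNat (by rw [Finset.mem_Icc]; omega)
    rwa [Int.toNat_of_nonneg hd.le] at this
  have hlt : ∀ l m : ℕ, m < ℓ → l < m → ∀ d : ℤ, |d| < n →
      qint (t : K) (κ l - κ m + d) ≠ 0 := by
    intro l m hm hlm d hd
    have h3 := h2 l (by rw [Finset.mem_range]; omega)
    rw [Finset.prod_ne_zero_iff] at h3
    have h4 := h3 m (by rw [Finset.mem_Ioo]; omega)
    rw [Finset.prod_ne_zero_iff] at h4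
    exact h4 d (by rw [Finset.mem_Ioo]; rw [abs_lt] at hd; exact hd)
  refine ⟨t.ne_zero, ?_, ?_⟩
  · intro d hd hn
    rcases lt_or_gt_of_ne hd with h | h
    · apply qint_neg_ne t.ne_zero
      apply hpos
      · omega
      · rw [abs_of_neg h] at hn; exact hn
    · apply hpos _ h
      rw [abs_of_pos h] at hn; exact hn
  · intro l m hl hm hlm d hd
    rcases lt_or_gt_of_ne hlm with h | h
    · exact hlt l m hm h d hd
    · apply qint_neg_ne t.ne_zero
      have := hlt m l hl h (-d) (by rwa [abs_neg])
      convert this using 2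
      ring

/-! ## Paths -/

/-- `B` is addable to the set of nodes `A 0, …, A (m-1)`. -/
def AddP (ℓ : ℕ) (A : ℕ → Node) (m : ℕ) (B : Node) : Prop :=
  B.1 < ℓ ∧ (∀ j < m, A j ≠ B) ∧
    (∀ r, B.2.1 = r + 1 → ∃ j < m, A j = (B.1, r, B.2.2)) ∧
    (∀ c, B.2.2 = c + 1 → ∃ j < m, A j = (B.1, B.2.1, c))

/-- A sequence of nodes building up a multipartition node by node. -/
def IsPath (ℓ m : ℕ) (A : ℕ → Node) : Prop := ∀ k < m, AddP ℓ A k (A k)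

/-- content of a node -/
def cont (κ : ℕ → ℤ) (A : Node) : ℤ := κ A.1 + (A.2.2 : ℤ) - (A.2.1 : ℤ)

theorem IsPath.mono {ℓ m k : ℕ} {A : ℕ → Node} (h : IsPath ℓ m A) (hk : k ≤ m) : IsPath ℓ k A :=
  fun j hj => h j (lt_of_lt_of_le hj hk)

theorem IsPath.inj {ℓ m : ℕ} {A : ℕ → Node} (h : IsPath ℓ m A) {i j : ℕ} (hi : i < m) (hj : j < m)
    (e : A i = A j) : i = j := by
  rcases lt_trichotomy i j with h1 | h1 | h1
  · exact absurd e ((h j hj).2.1 i h1)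
  · exact h1
  · exact absurd e.symm ((h i hi).2.1 j h1)

theorem AddP.congr {ℓ m : ℕ} {A A' : ℕ → Node} {B : Node} (h : AddP ℓ A m B)
    (e : ∀ j < m, A j = A' j) : AddP ℓ A' m B := by
  obtain ⟨h1, h2, h3, h4⟩ := h
  refine ⟨h1, fun j hj => e j hj ▸ h2 j hj, fun r hr => ?_, fun r hr => ?_⟩
  · obtain ⟨j, hj, hh⟩ := h3 r hr
    exact ⟨j, hj, e j hj ▸ hh⟩
  · obtain ⟨j, hj, hh⟩ := h4 r hr
    exact ⟨j, hj, e j hj ▸ hh⟩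

theorem IsPath.congr {ℓ m : ℕ} {A A' : ℕ → Node} (h : IsPath ℓ m A)
    (e : ∀ j < m, A j = A' j) : IsPath ℓ m A' := by
  intro k hk
  rw [← e k hk]
  exact (h k hk).congr fun j hj => e j (hj.trans hk)

/-- the diagram of a path is closed -/
theorem IsPath.closed {ℓ m : ℕ} {A : ℕ → Node} (h : IsPath ℓ m A) :
    ∀ (d j l r c r' c' : ℕ), j < m → A j = (l, r, c) → r' ≤ r → c' ≤ c → d = r - r' + (c - c') →
      ∃ i ≤ j, A i = (l, r', c') := by
  intro d
  induction d with
  | zero =>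
    intro j l r c r' c' hj e hr hc hd
    have e1 : r = r' := by omega
    have e2 : c = c' := by omega
    subst e1; subst e2
    exact ⟨j, le_rfl, e⟩
  | succ d ih =>
    intro j l r c r' c' hj e hr hc hd
    have hA := h j hj
    by_cases h1 : r' < r
    · obtain ⟨i, hi, ei⟩ := hA.2.2.1 (r - 1) (by rw [e]; simp only; omega)
      rw [e] at ei
      obtain ⟨i', hi', ei'⟩ := ih i l (r - 1) c r' c' (hi.trans hj) ei (by omega) hc (by omega)
      exact ⟨i', by omega, ei'⟩
    · obtain ⟨i, hi, ei⟩ := hA.2.2.2 (c - 1) (by rw [e]; simp only; omega)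
      rw [e] at ei
      obtain ⟨i', hi', ei'⟩ := ih i l r (c - 1) r' c' (hi.trans hj) ei hr (by omega) (by omega)
      exact ⟨i', by omega, ei'⟩

theorem AddP.closed {ℓ m : ℕ} {A : ℕ → Node} (h : IsPath ℓ m A) {l r c r' c' : ℕ}
    (hB : AddP ℓ A m (l, r, c)) (hr : r' ≤ r) (hc : c' ≤ c) (hne : r' < r ∨ c' < c) :
    ∃ i < m, A i = (l, r', c') := by
  rcases hne with h1 | h1
  · obtain ⟨i, hi, ei⟩ := hB.2.2.1 (r - 1) (by simp only; omega)
    obtain ⟨i', hi', ei'⟩ := h.closed _ i l (r - 1) c r' c' hi ei (by omega) hc rfl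
    exact ⟨i', by omega, ei'⟩
  · obtain ⟨i, hi, ei⟩ := hB.2.2.2 (c - 1) (by simp only; omega)
    obtain ⟨i', hi', ei'⟩ := h.closed _ i l r (c - 1) r' c' hi ei hr (by omega) rfl
    exact ⟨i', by omega, ei'⟩

theorem path_card {m : ℕ} {A : ℕ → Node} (S : Finset Node) (hS : ∀ B ∈ S, ∃ i < m, A i = B) :
    S.card ≤ m := by
  calc S.card ≤ ((Finset.range m).image A).card := by
        apply Finset.card_le_card
        intro B hB
        obtain ⟨i, hi, e⟩ := hS B hB
        exact Finset.mem_image.2 ⟨i, Finset.mem_range.2 hi, e⟩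
    _ ≤ m := by simpa using Finset.card_image_le (s := Finset.range m) (f := A)

/-- arm-leg bound -/
theorem arm_leg {ℓ m : ℕ} {A : ℕ → Node} (h : IsPath ℓ m A) {l r c l' r' c' : ℕ}
    (hB : AddP ℓ A m (l, r, c)) (hC : AddP ℓ A m (l', r', c')) :
    c + r' ≤ m + 1 ∧ (l ≠ l' → c + r' ≤ m) := by
  constructor
  · have hd : Disjoint ((Finset.range c).image (fun j => ((l, 0, j) : Node)))
        ((Finset.range (r' - 1)).image (fun j => ((l', j + 1, 0) : Node))) := by
      rw [Finset.disjoint_left]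
      intro x hx hx'
      simp only [Finset.mem_image] at hx hx'
      obtain ⟨a, _, rfl⟩ := hx
      obtain ⟨b, _, hb⟩ := hx'
      simp at hb
    have := path_card (m := m) (A := A) (hS := fun B hB' => ?_) (S :=
      ((Finset.range c).image (fun j => ((l, 0, j) : Node))) ∪
        ((Finset.range (r' - 1)).image (fun j => ((l', j + 1, 0) : Node))))
    · rw [Finset.card_union_of_disjoint hd, Finset.card_image_of_injective,
        Finset.card_image_of_injective] at this
      · simp at this; omega
      · intro a b hab; simpa using hab
      · intro a b hab; simpa using hab
    · simp only [Finset.mem_union, Finset.mem_image, Finset.mem_range] at hB'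
      rcases hB' with ⟨j, hj, rfl⟩ | ⟨j, hj, rfl⟩
      · exact hB.closed h (Nat.zero_le _) hj.le (Or.inr hj)
      · exact hC.closed h (by omega) (Nat.zero_le _) (Or.inl (by omega))
  · intro hl
    have hd : Disjoint ((Finset.range c).image (fun j => ((l, 0, j) : Node)))
        ((Finset.range r').image (fun j => ((l', j, 0) : Node))) := by
      rw [Finset.disjoint_left]
      intro x hx hx'
      simp only [Finset.mem_image] at hx hx'
      obtain ⟨a, _, rfl⟩ := hx
      obtain ⟨b, _, hb⟩ := hx'
      simp at hb
      exact hl hb.1.symm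
    have := path_card (m := m) (A := A) (hS := fun B hB' => ?_) (S :=
      ((Finset.range c).image (fun j => ((l, 0, j) : Node))) ∪
        ((Finset.range r').image (fun j => ((l', j, 0) : Node))))
    · rw [Finset.card_union_of_disjoint hd, Finset.card_image_of_injective,
        Finset.card_image_of_injective] at this
      · simp at this; omega
      · intro a b hab; simpa using hab
      · intro a b hab; simpa using hab
    · simp only [Finset.mem_union, Finset.mem_image, Finset.mem_range] at hB'
      rcases hB' with ⟨j, hj, rfl⟩ | ⟨j, hj, rfl⟩
      · exact hB.closed h (Nat.zero_le _) hj.le (Or.inr hj)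
      · exact hC.closed h hj.le (Nat.zero_le _) (Or.inl hj)

/-- Two distinct addable nodes in the same component are in general position. -/
theorem addable_corner {ℓ m : ℕ} {A : ℕ → Node} (h : IsPath ℓ m A) {l r c r' c' : ℕ}
    (hB : AddP ℓ A m (l, r, c)) (hC : AddP ℓ A m (l, r', c')) (hne : (r, c) ≠ (r', c')) :
    (r < r' ∧ c' < c) ∨ (r' < r ∧ c < c') := by
  by_contra hcon
  have h3 : (r ≤ r' ∧ c ≤ c') ∨ (r' ≤ r ∧ c' ≤ c) := by omega
  rcases h3 with ⟨h1, h2⟩ | ⟨h1, h2⟩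
  · have : r < r' ∨ c < c' := by
      by_contra h5
      exact hne (by rw [Prod.mk.injEq]; omega)
    obtain ⟨i, hi, ei⟩ := hC.closed h h1 h2 this
    exact hB.2.1 i hi ei
  · have : r' < r ∨ c' < c := by
      by_contra h5
      exact hne (by rw [Prod.mk.injEq]; omega)
    obtain ⟨i, hi, ei⟩ := hB.closed h h1 h2 this
    exact hC.2.1 i hi ei

/-- key separation lemma: `[c_B - c_C + ε] ≠ 0`. -/
theorem sep_addable {K : Type*} [Field K] {t : K} {n ℓ : ℕ} {κ : ℕ → ℤ} (hs : Sep t n ℓ κ)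
    {m : ℕ} {A : ℕ → Node} (h : IsPath ℓ m A) {B C : Node} (hB : AddP ℓ A m B)
    (hC : AddP ℓ A m C) (hne : B ≠ C) (ε : ℤ) (hε : |ε| ≤ 1) (hm : (m : ℤ) + 1 + |ε| ≤ n) :
    qint t (cont κ B - cont κ C + ε) ≠ 0 := by
  obtain ⟨l, r, c⟩ := B
  obtain ⟨l', r', c'⟩ := C
  have b1 := arm_leg h hB hC
  have b2 := arm_leg h hC hB
  have he := abs_le.1 (le_refl |ε|)
  have he1 := abs_le.1 hε
  by_cases hl : l = l'
  · subst hl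
    have hcor := addable_corner h hB hC (by rintro h; apply hne; rw [h])
    apply hs.small
    · simp only [cont]; omega
    · rw [abs_le]; simp only [cont]; omega
  · have e : cont κ (l, r, c) - cont κ (l', r', c') + ε
        = κ l - κ l' + ((c : ℤ) - r - c' + r' + ε) := by simp only [cont]; ring
    rw [e]
    have b1' := b1.2 hl
    have b2' := b2.2 (Ne.symm hl)
    apply hs.cross l l' hB.1 hC.1 hl
    rw [abs_lt]; omega

theorem sep_addable' {K : Type*} [Field K] {t : K} {n ℓ : ℕ} {κ : ℕ → ℤ} (hs : Sep t n ℓ κ)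
    {m : ℕ} {A : ℕ → Node} (h : IsPath ℓ m A) {B C : Node} (hB : AddP ℓ A m B)
    (hC : AddP ℓ A m C) (hm : m + 1 ≤ n) (he : qint t (cont κ B) = qint t (cont κ C)) :
    B = C := by
  by_contra hne
  have := sep_addable hs h hB hC hne 0 (by simp) (by simp; omega)
  have h2 := qint_sub hs.ne (cont κ B) (cont κ C)
  rw [he, sub_self] at h2
  rw [add_zero] at this
  exact (mul_ne_zero (zpow_ne_zero _ hs.ne) this) h2.symm

theorem sep_addable_pm {K : Type*} [Field K] {t : K} {n ℓ : ℕ} {κ : ℕ → ℤ} (hs : Sep t n ℓ κ)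
    {m : ℕ} {A : ℕ → Node} (h : IsPath ℓ m A) {B C : Node} (hB : AddP ℓ A m B)
    (hC : AddP ℓ A m C) (hm : m + 2 ≤ n) (ε : ℤ) (hε : |ε| = 1) :
    qint t (cont κ B) ≠ qint t (cont κ C + ε) := by
  intro he
  have h2 := qint_sub hs.ne (cont κ B) (cont κ C + ε)
  rw [he, sub_self] at h2
  refine (mul_ne_zero (zpow_ne_zero _ hs.ne) ?_) h2.symm
  by_cases hne : B = C
  · subst hne
    apply hs.small
    · intro h3
      have : ε = 0 := by omega
      simp [this] at hε
    · have : cont κ B - (cont κ B + ε) = -ε := by ring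
      rw [this, abs_neg, hε]; omega
  · have := sep_addable hs h hB hC hne (-ε) (by rw [abs_neg, hε]) (by rw [abs_neg, hε]; omega)
    convert this using 2
    ring

/-- The sequence `A` with positions `k`, `k+1` exchanged. -/
def swp (k : ℕ) (A : ℕ → Node) : ℕ → Node := fun j => A (Equiv.swap k (k + 1) j)

theorem swp_left (k : ℕ) (A : ℕ → Node) : swp k A k = A (k + 1) := by simp [swp]
theorem swp_right (k : ℕ) (A : ℕ → Node) : swp k A (k + 1) = A k := by simp [swp]
theorem swp_of_ne {k j : ℕ} (A : ℕ → Node) (h1 : j ≠ k) (h2 : j ≠ k + 1) : swp k A j = A j := by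
  simp [swp, Equiv.swap_apply_of_ne_of_ne h1 h2]
theorem swp_swp (k : ℕ) (A : ℕ → Node) : swp k (swp k A) = A := by
  funext j; simp [swp]

theorem exists_swp {k m : ℕ} {A : ℕ → Node} {B : Node} (hk : k + 1 < m) :
    (∃ j < m, swp k A j = B) ↔ ∃ j < m, A j = B := by
  constructor
  · rintro ⟨j, hj, e⟩
    refine ⟨Equiv.swap k (k + 1) j, ?_, e⟩
    rw [Equiv.swap_apply_def]; split_ifs <;> omega
  · rintro ⟨j, hj, e⟩
    refine ⟨Equiv.swap k (k + 1) j, ?_, by simpa [swp] using e⟩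
    rw [Equiv.swap_apply_def]; split_ifs <;> omega

theorem addP_swp {ℓ k m : ℕ} {A : ℕ → Node} {B : Node} (hk : k + 1 < m) :
    AddP ℓ (swp k A) m B ↔ AddP ℓ A m B := by
  unfold AddP
  have e : (∀ j < m, swp k A j ≠ B) ↔ (∀ j < m, A j ≠ B) := by
    have := (exists_swp (A := A) (B := B) hk).not
    push Not at this
    exact this
  simp only [exists_swp hk, e]

/-- If the node in position `k+1` was already addable before step `k`, swapping gives a path. -/
theorem IsPath.swp {ℓ k m : ℕ} {A : ℕ → Node} (h : IsPath ℓ m A) (hk : k + 1 < m)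
    (hadd : AddP ℓ A k (A (k + 1))) : IsPath ℓ m (swp k A) := by
  intro j hj
  rcases lt_trichotomy j k with h1 | h1 | h1
  · rw [swp_of_ne A (by omega) (by omega)]
    exact (h j hj).congr fun i hi => (swp_of_ne A (by omega) (by omega)).symm
  · subst h1
    rw [swp_left]
    exact hadd.congr fun i hi => (swp_of_ne A (by omega) (by omega)).symm
  · by_cases h2 : j = k + 1
    · subst h2
      rw [swp_right]
      obtain ⟨a1, a2, a3, a4⟩ := h k (by omega)
      have key : ∀ i < k, Paper.swp k A i = A i := fun i hi => swp_of_ne A (by omega) (by omega)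
      refine ⟨a1, ?_, ?_, ?_⟩
      · intro i hi
        rcases Nat.lt_succ_iff_lt_or_eq.1 hi with h3 | h3
        · rw [key i h3]; exact a2 i h3
        · subst h3; rw [swp_left]
          intro e
          have := h.inj hk (by omega) e
          omega
      · intro r hr
        obtain ⟨i, hi, e⟩ := a3 r hr
        exact ⟨i, by omega, by rw [key i hi, e]⟩
      · intro r hr
        obtain ⟨i, hi, e⟩ := a4 r hr
        exact ⟨i, by omega, by rw [key i hi, e]⟩
    · rw [swp_of_ne A (by omega) h2]
      rw [addP_swp (by omega)]
      exact h j hj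

/-- a node is directly right of, or below, another one -/
def Nxt (A B : Node) : Prop := B = (A.1, A.2.1, A.2.2 + 1) ∨ B = (A.1, A.2.1 + 1, A.2.2)

theorem add_of_not_nxt {ℓ k m : ℕ} {A : ℕ → Node} (h : IsPath ℓ m A) (hk : k + 1 < m)
    (hn : ¬ Nxt (A k) (A (k + 1))) : AddP ℓ A k (A (k + 1)) := by
  obtain ⟨a1, a2, a3, a4⟩ := h (k + 1) hk
  refine ⟨a1, fun j hj => a2 j (by omega), ?_, ?_⟩
  · intro r hr
    obtain ⟨i, hi, e⟩ := a3 r hr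
    rcases Nat.lt_succ_iff_lt_or_eq.1 hi with h3 | h3
    · exact ⟨i, h3, e⟩
    · subst h3
      exfalso; apply hn; right
      rw [e, ← hr]
  · intro r hr
    obtain ⟨i, hi, e⟩ := a4 r hr
    rcases Nat.lt_succ_iff_lt_or_eq.1 hi with h3 | h3
    · exact ⟨i, h3, e⟩
    · subst h3
      exfalso; apply hn; left
      rw [e, ← hr]

theorem not_add_of_nxt {ℓ k m : ℕ} {A : ℕ → Node} (h : IsPath ℓ m A) (hk : k + 1 < m)
    (hn : Nxt (A k) (A (k + 1))) : ¬ AddP ℓ A k (A (k + 1)) := by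
  intro hadd
  rcases hn with hn | hn
  · obtain ⟨i, hi, e⟩ := hadd.2.2.2 (A k).2.2 (by rw [hn])
    rw [hn] at e
    have := h.inj (i := i) (j := k) (by omega) (by omega) e
    omega
  · obtain ⟨i, hi, e⟩ := hadd.2.2.1 (A k).2.1 (by rw [hn])
    rw [hn] at e
    have := h.inj (i := i) (j := k) (by omega) (by omega) e
    omega

theorem cont_nxt {κ : ℕ → ℤ} {A B : Node} (h : Nxt A B) :
    ∃ ε : ℤ, |ε| = 1 ∧ cont κ B = cont κ A + ε := by
  rcases h with rfl | rfl
  · exact ⟨1, by simp, by simp [cont]; ring⟩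
  · exact ⟨-1, by simp, by simp [cont]; ring⟩

/-- `swp` is a path iff ... -/
theorem isPath_swp_iff {ℓ k m : ℕ} {A : ℕ → Node} (h : IsPath ℓ m A) (hk : k + 1 < m) :
    IsPath ℓ m (swp k A) ↔ ¬ Nxt (A k) (A (k + 1)) := by
  constructor
  · intro h1 h2
    apply not_add_of_nxt h hk h2
    have := h1 k (by omega)
    rw [swp_left] at this
    exact this.congr fun i hi => swp_of_ne A (by omega) (by omega)
  · intro h1
    exact h.swp hk (add_of_not_nxt h hk h1)

theorem path_bound {ℓ m : ℕ} {A : ℕ → Node} (h : IsPath ℓ m A) {k : ℕ} (hk : k < m) :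
    (A k).2.1 < m ∧ (A k).2.2 < m := by
  have ha := h k hk
  have := arm_leg (h.mono hk.le) ha ha
  have key : (A k).2.2 ≤ k ∧ (A k).2.1 ≤ k := by
    constructor
    · have := path_card (m := k) (A := A) ((Finset.range (A k).2.2).image
        (fun j => (((A k).1, 0, j) : Node))) (fun B hB' => ?_)
      · rw [Finset.card_image_of_injective _ (fun a b hab => by simpa using hab)] at this
        simpa using this
      · simp only [Finset.mem_image, Finset.mem_range] at hB'
        obtain ⟨j, hj, rfl⟩ := hB'
        exact ha.closed (h.mono hk.le) (Nat.zero_le _) hj.le (Or.inr hj)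
    · have := path_card (m := k) (A := A) ((Finset.range (A k).2.1).image
        (fun j => (((A k).1, j, 0) : Node))) (fun B hB' => ?_)
      · rw [Finset.card_image_of_injective _ (fun a b hab => by simpa using hab)] at this
        simpa using this
      · simp only [Finset.mem_image, Finset.mem_range] at hB'
        obtain ⟨j, hj, rfl⟩ := hB'
        exact ha.closed (h.mono hk.le) hj.le (Nat.zero_le _) (Or.inl hj)
  omega

/-- code of a node: monotone for the reading order -/
def code (n : ℕ) (A : Node) : ℕ := A.1 * (n * n) + A.2.1 * n + A.2.2

end Paper

namespace Paper

/-! ## Standard tableaux as paths -/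

theorem Multipartition.ext_diag {ℓ n : ℕ} {μ ν : Multipartition ℓ n}
    (h : μ.diagram = ν.diagram) : μ = ν := by
  have hp : μ.part = ν.part := by
    funext l r
    have key : ∀ c, c < μ.part l r ↔ c < ν.part l r := by
      intro c
      have := Set.ext_iff.1 h (l, r, c)
      simpa [Multipartition.diagram] using this
    rcases lt_trichotomy (μ.part l r) (ν.part l r) with h1 | h1 | h1
    · exact absurd ((key _).2 h1) (lt_irrefl _)
    · exact h1
    · exact absurd ((key _).1 h1) (lt_irrefl _)
  cases μ; cases ν
  simp only at hp
  subst hp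
  rfl

theorem StdTableau.diag_eq {ℓ n : ℕ} (T : StdTableau ℓ n) :
    T.shape.diagram = {A | T.entry A ≠ 0} := by
  ext A
  constructor
  · intro hA h0
    have := T.bijOn.mapsTo hA
    rw [h0] at this
    simp at this
  · intro hA
    by_contra h
    exact hA (T.entry_zero A h)

theorem StdTableau.shape_eq {ℓ n : ℕ} {S T : StdTableau ℓ n}
    (h : ∀ A, S.entry A = 0 ↔ T.entry A = 0) : S.shape = T.shape := by
  apply Multipartition.ext_diag
  rw [S.diag_eq, T.diag_eq]
  ext A
  simp [h A]

theorem StdTableau.ext_entry {ℓ n : ℕ} {S T : StdTableau ℓ n} (h : S.entry = T.entry) : S = T := by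
  have hs : S.shape = T.shape := StdTableau.shape_eq (by simp [h])
  cases S; cases T
  simp only at h hs
  subst h; subst hs
  rfl

theorem StdTableau.node_mem {ℓ n : ℕ} (T : StdTableau ℓ n) {k : ℕ} (h1 : 1 ≤ k) (h2 : k ≤ n) :
    T.node k ∈ T.shape.diagram :=
  Function.invFunOn_mem (T.bijOn.surjOn ⟨h1, h2⟩)

theorem StdTableau.entry_node {ℓ n : ℕ} (T : StdTableau ℓ n) {k : ℕ} (h1 : 1 ≤ k) (h2 : k ≤ n) :
    T.entry (T.node k) = k :=
  Function.invFunOn_eq (T.bijOn.surjOn ⟨h1, h2⟩)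

theorem StdTableau.node_entry {ℓ n : ℕ} (T : StdTableau ℓ n) {A : Node}
    (h : A ∈ T.shape.diagram) : T.node (T.entry A) = A := by
  have := T.bijOn.mapsTo h
  exact T.bijOn.injOn (T.node_mem this.1 this.2) h (T.entry_node this.1 this.2)

theorem StdTableau.eq_node {ℓ n : ℕ} (T : StdTableau ℓ n) {A : Node} {k : ℕ} (hk : 1 ≤ k)
    (h : T.entry A = k) : T.node k = A := by
  subst h
  apply T.node_entry
  rw [T.diag_eq]; simp; omega

/-- `0`-based node sequence of a tableau -/
noncomputable def nd {ℓ n : ℕ} (T : StdTableau ℓ n) (k : ℕ) : Node := T.node (k + 1)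

theorem content_eq {ℓ n : ℕ} (κ : ℕ → ℤ) (T : StdTableau ℓ n) (k : ℕ) :
    content κ T (k + 1) = cont κ (nd T k) := rfl

theorem nd_mem {ℓ n : ℕ} (T : StdTableau ℓ n) {k : ℕ} (hk : k < n) : nd T k ∈ T.shape.diagram :=
  T.node_mem (by omega) (by omega)

theorem entry_nd {ℓ n : ℕ} (T : StdTableau ℓ n) {k : ℕ} (hk : k < n) : T.entry (nd T k) = k + 1 :=
  T.entry_node (by omega) (by omega)

theorem exists_nd {ℓ n : ℕ} (T : StdTableau ℓ n) {A : Node} (h : A ∈ T.shape.diagram) :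
    ∃ k < n, nd T k = A ∧ T.entry A = k + 1 := by
  have := T.bijOn.mapsTo h
  have h1 := this.1
  have h2 := this.2
  refine ⟨T.entry A - 1, by omega, ?_, by omega⟩
  unfold nd
  rw [Nat.sub_add_cancel h1]
  exact T.node_entry h

theorem nd_isPath {ℓ n : ℕ} (T : StdTableau ℓ n) : IsPath ℓ n (nd T) := by
  intro k hk
  have hm := nd_mem T hk
  have he := entry_nd T hk
  generalize hN : nd T k = N at hm he
  obtain ⟨l, r, c⟩ := N
  refine ⟨?_, ?_, ?_, ?_⟩
  · by_contra hl
    have := T.shape.comp_bound l (by simpa using hl) r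
    simp [Multipartition.diagram, this] at hm
  · intro j hj e
    have := entry_nd T (hj.trans hk)
    rw [e, he] at this
    omega
  · intro r' hr
    simp only at hr ⊢
    subst hr
    have hm' : (l, r', c) ∈ T.shape.diagram := by
      simp only [Multipartition.diagram, Set.mem_setOf_eq] at hm ⊢
      exact lt_of_lt_of_le hm (T.shape.antitone l (Nat.le_succ r'))
    obtain ⟨j, hj, e, e'⟩ := exists_nd T hm'
    refine ⟨j, ?_, e⟩
    have := T.col_inc l r' c hm
    omega
  · intro c' hc
    simp only at hc ⊢
    subst hc
    have hm' : (l, r, c') ∈ T.shape.diagram := by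
      simp only [Multipartition.diagram, Set.mem_setOf_eq] at hm ⊢
      omega
    obtain ⟨j, hj, e, e'⟩ := exists_nd T hm'
    refine ⟨j, ?_, e⟩
    have := T.row_inc l r c' hm
    omega

theorem nd_ext {ℓ n : ℕ} {S T : StdTableau ℓ n} (h : ∀ k < n, nd S k = nd T k) : S = T := by
  apply StdTableau.ext_entry
  funext A
  by_cases hA : A ∈ S.shape.diagram
  · obtain ⟨k, hk, e, e'⟩ := exists_nd S hA
    rw [e', ← e, h k hk, entry_nd T hk]
  · rw [S.entry_zero A hA]
    by_cases hA' : A ∈ T.shape.diagram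
    · obtain ⟨k, hk, e, e'⟩ := exists_nd T hA'
      exfalso; apply hA
      rw [← e, ← h k hk]
      exact nd_mem S hk
    · rw [T.entry_zero A hA']

theorem exists_tab {ℓ n : ℕ} {A : ℕ → Node} (h : IsPath ℓ n A) :
    ∃ T : StdTableau ℓ n, ∀ k < n, nd T k = A k := by
  -- the diagram
  have hfin : ∀ l r, ∃ c, ¬ ∃ i < n, A i = (l, r, c) := by
    intro l r
    refine ⟨n, ?_⟩
    rintro ⟨i, hi, e⟩
    have := path_bound h hi
    rw [e] at this
    simp at this
  let p : ℕ → ℕ → ℕ := fun l r => Nat.find (hfin l r)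
  have hp : ∀ l r c, c < p l r ↔ ∃ i < n, A i = (l, r, c) := by
    intro l r c
    show c < Nat.find (hfin l r) ↔ _
    rw [Nat.lt_find_iff]
    constructor
    · intro h1
      have := h1 c le_rfl
      rwa [not_not] at this
    · intro h1 m hm
      rw [not_not]
      obtain ⟨i, hi, e⟩ := h1
      obtain ⟨j, hj, e'⟩ := h.closed _ i l r c r m hi e le_rfl hm rfl
      exact ⟨j, by omega, e'⟩
  have hple : ∀ l r, p l r ≤ n := by
    intro l r
    by_contra hcon
    push Not at hcon
    obtain ⟨i, hi, e⟩ := (hp l r n).1 hcon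
    have := path_bound h hi
    rw [e] at this
    simp at this
  let μ : Multipartition ℓ n :=
    { part := p
      comp_bound := by
        intro l hl r
        by_contra hcon
        obtain ⟨i, hi, e⟩ := (hp l r 0).1 (Nat.pos_of_ne_zero hcon)
        have := (h i hi).1
        rw [e] at this
        simp at this
        omega
      antitone := by
        intro l r r' hr
        by_contra hcon
        push Not at hcon
        obtain ⟨i, hi, e⟩ := (hp l r' _).1 hcon
        obtain ⟨j, hj, e'⟩ := h.closed _ i l r' _ r _ hi e hr le_rfl rfl
        exact absurd ((hp l r _).2 ⟨j, by omega, e'⟩) (lt_irrefl _)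
      row_bound := by
        intro l r hr
        by_contra hcon
        obtain ⟨i, hi, e⟩ := (hp l r 0).1 (Nat.pos_of_ne_zero hcon)
        have := path_bound h hi
        rw [e] at this
        simp at this
        omega
      size := by
        have e1 : ∀ l r, p l r = ∑ c ∈ Finset.range n, if ∃ i < n, A i = (l, r, c) then 1 else 0 := by
          intro l r
          rw [← Finset.card_filter]
          have : (Finset.range n).filter (fun c => ∃ i < n, A i = (l, r, c))
              = Finset.range (p l r) := by
            ext c
            rw [Finset.mem_filter, Finset.mem_range, Finset.mem_range, ← hp l r c]
            have := hple l r
            omega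
          rw [this, Finset.card_range]
        calc (∑ l ∈ Finset.range ℓ, ∑ r ∈ Finset.range n, p l r)
            = ∑ x ∈ Finset.range ℓ ×ˢ Finset.range n ×ˢ Finset.range n,
                if ∃ i < n, A i = x then 1 else 0 := by
              rw [Finset.sum_product]
              apply Finset.sum_congr rfl
              intro l _
              rw [Finset.sum_product]
              apply Finset.sum_congr rfl
              intro r _
              exact e1 l r
          _ = ((Finset.range n).image A).card := by
              rw [← Finset.card_filter]
              congr 1
              ext x
              simp only [Finset.mem_filter, Finset.mem_product, Finset.mem_range, Finset.mem_image]
              constructor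
              · rintro ⟨_, i, hi, e⟩; exact ⟨i, hi, e⟩
              · rintro ⟨i, hi, rfl⟩
                have := path_bound h hi
                exact ⟨⟨(h i hi).1, this.1, this.2⟩, i, hi, rfl⟩
          _ = n := by
              rw [Finset.card_image_of_injOn, Finset.card_range]
              intro i hi j hj e
              simp at hi hj
              exact h.inj hi hj e }
  have hμ : ∀ B, B ∈ μ.diagram ↔ ∃ i < n, A i = B := by
    rintro ⟨l, r, c⟩
    exact hp l r c
  let en : Node → ℕ := fun B => if hB : ∃ i, i < n ∧ A i = B then hB.choose + 1 else 0
  have hen : ∀ i < n, en (A i) = i + 1 := by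
    intro i hi
    have hB : ∃ j, j < n ∧ A j = A i := ⟨i, hi, rfl⟩
    simp only [en, dif_pos hB]
    have := h.inj hB.choose_spec.1 hi hB.choose_spec.2
    omega
  let T : StdTableau ℓ n :=
    { shape := μ
      entry := en
      entry_zero := by
        intro B hB
        rw [hμ] at hB
        exact dif_neg hB
      bijOn := by
        refine ⟨?_, ?_, ?_⟩
        · intro B hB
          obtain ⟨i, hi, rfl⟩ := (hμ B).1 hB
          rw [hen i hi, Set.mem_Icc]
          omega
        · intro B hB C hC e
          obtain ⟨i, hi, rfl⟩ := (hμ B).1 hB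
          obtain ⟨j, hj, rfl⟩ := (hμ C).1 hC
          rw [hen i hi, hen j hj] at e
          have : i = j := by omega
          rw [this]
        · intro k hk
          rw [Set.mem_Icc] at hk
          refine ⟨A (k - 1), (hμ _).2 ⟨k - 1, by omega, rfl⟩, ?_⟩
          rw [hen _ (by omega)]
          omega
      row_inc := by
        intro l r c hB
        obtain ⟨i, hi, e⟩ := (hμ _).1 hB
        obtain ⟨j, hj, e'⟩ := (h i hi).2.2.2 c (by rw [e])
        rw [e] at e'
        simp only at e'
        rw [← e, ← e', hen i hi, hen j (by omega)]
        omega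
      col_inc := by
        intro l r c hB
        obtain ⟨i, hi, e⟩ := (hμ _).1 hB
        obtain ⟨j, hj, e'⟩ := (h i hi).2.2.1 r (by rw [e])
        rw [e] at e'
        simp only at e'
        rw [← e, ← e', hen i hi, hen j (by omega)]
        omega }
  refine ⟨T, fun k hk => ?_⟩
  exact T.eq_node (by omega) (hen k hk)

instance finite_stdTableau (ℓ n : ℕ) : Finite (StdTableau ℓ n) := by
  have hb : ∀ (T : StdTableau ℓ n) (k : Fin n), (nd T k).1 < ℓ ∧ (nd T k).2.1 < n ∧ (nd T k).2.2 < n :=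
    fun T k => ⟨(nd_isPath T k k.2).1, path_bound (nd_isPath T) k.2⟩
  apply Finite.of_injective (β := Fin n → Fin ℓ × Fin n × Fin n)
    (fun T k => (⟨(nd T k).1, (hb T k).1⟩, ⟨(nd T k).2.1, (hb T k).2.1⟩, ⟨(nd T k).2.2, (hb T k).2.2⟩))
  intro S T e
  apply nd_ext
  intro k hk
  have := congrFun e ⟨k, hk⟩
  simp only [Prod.mk.injEq, Fin.mk.injEq] at this
  exact Prod.ext this.1 (Prod.ext this.2.1 this.2.2)

noncomputable instance fintype_stdTableau (ℓ n : ℕ) : Fintype (StdTableau ℓ n) :=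
  Fintype.ofFinite _

/-! ### Swapping -/

/-- `T` can be swapped at positions `k, k+1` -/
def Sw {ℓ n : ℕ} (k : ℕ) (T : StdTableau ℓ n) : Prop := ¬ Nxt (nd T k) (nd T (k + 1))

/-- the swapped tableau, or `T` itself if it is not standard -/
noncomputable def sw {ℓ n : ℕ} (k : ℕ) (T : StdTableau ℓ n) : StdTableau ℓ n :=
  (oSwapO T (k + 1)).getD T

theorem oSwapO_eq_some {ℓ n : ℕ} {T V : StdTableau ℓ n} {r : ℕ} :
    oSwapO T r = some V ↔ V.entry = swapEntry T.entry r := by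
  unfold oSwapO
  constructor
  · intro h
    split_ifs at h with h1
    · rw [Option.some.injEq] at h
      rw [← h]
      exact h1.choose_spec
  · intro h
    have h1 : ∃ V : StdTableau ℓ n, V.entry = swapEntry T.entry r := ⟨V, h⟩
    rw [dif_pos h1, Option.some.injEq]
    exact StdTableau.ext_entry (h1.choose_spec.trans h.symm)

theorem nd_of_swapEntry {ℓ n : ℕ} {T V : StdTableau ℓ n} {k : ℕ} (hk : k + 1 < n)
    (h : V.entry = swapEntry T.entry (k + 1)) : ∀ j < n, nd V j = swp k (nd T) j := by
  intro j hj
  apply V.eq_node (by omega)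
  rw [h]
  unfold swapEntry
  rcases eq_or_ne j k with rfl | h1
  · rw [swp_left, entry_nd T hk, if_neg (by omega), if_pos rfl]
  · rcases eq_or_ne j (k + 1) with rfl | h2
    · rw [swp_right, entry_nd T (by omega), if_pos rfl]
    · rw [swp_of_ne _ h1 h2, entry_nd T hj, if_neg (by omega), if_neg (by omega)]

theorem swapEntry_of_nd {ℓ n : ℕ} {T V : StdTableau ℓ n} {k : ℕ} (hk : k + 1 < n)
    (h : ∀ j < n, nd V j = swp k (nd T) j) : V.entry = swapEntry T.entry (k + 1) := by
  funext A
  by_cases hA : A ∈ T.shape.diagram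
  · obtain ⟨j, hj, e, e'⟩ := exists_nd T hA
    unfold swapEntry
    rw [e', ← e]
    rcases eq_or_ne j k with rfl | h1
    · rw [if_pos rfl, ← swp_right j (nd T), ← h _ hk, entry_nd V hk]
    · rcases eq_or_ne j (k + 1) with rfl | h2
      · rw [if_neg (by omega), if_pos rfl, ← swp_left k (nd T), ← h _ (by omega),
          entry_nd V (by omega)]
      · rw [if_neg (by omega), if_neg (by omega), ← swp_of_ne (nd T) h1 h2, ← h _ hj,
          entry_nd V hj]
  · have h0 := T.entry_zero A hA
    have hA' : A ∉ V.shape.diagram := by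
      intro hA'
      obtain ⟨j, hj, e, e'⟩ := exists_nd V hA'
      apply hA
      rw [← e, h j hj]
      unfold swp
      apply nd_mem
      rw [Equiv.swap_apply_def]; split_ifs <;> omega
    rw [V.entry_zero A hA']
    unfold swapEntry
    rw [h0, if_neg (by omega), if_neg (by omega)]

theorem Sw.some {ℓ n : ℕ} {k : ℕ} {T : StdTableau ℓ n} (hk : k + 1 < n) (h : Sw k T) :
    oSwapO T (k + 1) = some (sw k T) := by
  obtain ⟨V, hV⟩ := exists_tab ((isPath_swp_iff (nd_isPath T) hk).2 h)
  have := oSwapO_eq_some.2 (swapEntry_of_nd hk hV)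
  unfold sw
  rw [this]
  rfl

theorem not_Sw_none {ℓ n : ℕ} {k : ℕ} {T : StdTableau ℓ n} (hk : k + 1 < n) (h : ¬ Sw k T) :
    oSwapO T (k + 1) = none := by
  by_contra hcon
  obtain ⟨V, hV⟩ := Option.ne_none_iff_exists'.1 hcon
  apply h
  rw [oSwapO_eq_some] at hV
  exact (isPath_swp_iff (nd_isPath T) hk).1 ((nd_isPath V).congr (nd_of_swapEntry hk hV))

theorem sw_of_not {ℓ n : ℕ} {k : ℕ} {T : StdTableau ℓ n} (hk : k + 1 < n) (h : ¬ Sw k T) :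
    sw k T = T := by
  unfold sw; rw [not_Sw_none hk h]; rfl

theorem nd_sw {ℓ n : ℕ} {k : ℕ} {T : StdTableau ℓ n} (hk : k + 1 < n) (h : Sw k T) :
    ∀ j < n, nd (sw k T) j = swp k (nd T) j :=
  nd_of_swapEntry hk (oSwapO_eq_some.1 (h.some hk))

theorem nd_sw_left {ℓ n : ℕ} {k : ℕ} {T : StdTableau ℓ n} (hk : k + 1 < n) (h : Sw k T) :
    nd (sw k T) k = nd T (k + 1) := by
  rw [nd_sw hk h k (by omega), swp_left]

theorem nd_sw_right {ℓ n : ℕ} {k : ℕ} {T : StdTableau ℓ n} (hk : k + 1 < n) (h : Sw k T) :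
    nd (sw k T) (k + 1) = nd T k := by
  rw [nd_sw hk h (k + 1) (by omega), swp_right]

theorem nd_sw_ne {ℓ n : ℕ} {k : ℕ} {T : StdTableau ℓ n} (hk : k + 1 < n) (h : Sw k T) {j : ℕ}
    (hj : j < n) (h1 : j ≠ k) (h2 : j ≠ k + 1) :
    nd (sw k T) j = nd T j := by
  rw [nd_sw hk h j hj, swp_of_ne _ h1 h2]

theorem Sw_sw {ℓ n : ℕ} {k : ℕ} {T : StdTableau ℓ n} (hk : k + 1 < n) (h : Sw k T) :
    Sw k (sw k T) := by
  apply (isPath_swp_iff (nd_isPath _) hk).1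
  refine (nd_isPath T).congr fun j hj => ?_
  unfold swp
  rw [nd_sw hk h]
  · simp [swp]
  · rw [Equiv.swap_apply_def]; split_ifs <;> omega

theorem sw_sw {ℓ n : ℕ} {k : ℕ} {T : StdTableau ℓ n} (hk : k + 1 < n) (h : Sw k T) :
    sw k (sw k T) = T := by
  apply nd_ext
  intro j hj
  rw [nd_sw hk (Sw_sw hk h) j hj]
  unfold swp
  rw [nd_sw hk h]
  · simp [swp]
  · rw [Equiv.swap_apply_def]; split_ifs <;> omega

theorem sw_shape {ℓ n : ℕ} {k : ℕ} {T : StdTableau ℓ n} (hk : k + 1 < n) :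
    (sw k T).shape = T.shape := by
  by_cases h : Sw k T
  · apply StdTableau.shape_eq
    intro A
    rw [oSwapO_eq_some.1 (h.some hk)]
    unfold swapEntry
    split_ifs with h1 h2
    · simp [h1]
    · simp [h2]
    · exact Iff.rfl
  · rw [sw_of_not hk h]

/-! ### Descents and the initial tableau -/

/-- descent at `k` -/
def Des {ℓ n : ℕ} (k : ℕ) (T : StdTableau ℓ n) : Prop :=
  k + 1 < n ∧ code n (nd T (k + 1)) < code n (nd T k)

theorem code_nxt {n : ℕ} (hn : 0 < n) {A B : Node} (h : Nxt A B) : code n A < code n B := by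
  rcases h with rfl | rfl
  · simp only [code]; omega
  · simp only [code]; nlinarith

theorem Des.sw {ℓ n : ℕ} {k : ℕ} {T : StdTableau ℓ n} (h : Des k T) : Sw k T := by
  intro h1
  have := code_nxt (n := n) (by have := h.1; omega) h1
  have := h.2
  omega

/-- a measure decreasing along descents -/
noncomputable def meas {ℓ n : ℕ} (T : StdTableau ℓ n) : ℕ :=
  ∑ k ∈ Finset.range n, (n - k) * code n (nd T k)

theorem meas_lt {ℓ n : ℕ} {k : ℕ} {T : StdTableau ℓ n} (h : Des k T) :
    meas (sw k T) < meas T := by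
  have hk := h.1
  unfold meas
  have m1 : k ∈ Finset.range n := Finset.mem_range.2 (by omega)
  have m2 : k + 1 ∈ (Finset.range n).erase k :=
    Finset.mem_erase.2 ⟨by omega, Finset.mem_range.2 hk⟩
  rw [← Finset.add_sum_erase _ _ m1, ← Finset.add_sum_erase _ _ m2]
  rw [← Finset.add_sum_erase (Finset.range n) (fun j => (n - j) * code n (nd T j)) m1,
    ← Finset.add_sum_erase _ (fun j => (n - j) * code n (nd T j)) m2]
  have e : ∑ x ∈ ((Finset.range n).erase k).erase (k + 1), (n - x) * code n (nd (Paper.sw k T) x)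
      = ∑ x ∈ ((Finset.range n).erase k).erase (k + 1), (n - x) * code n (nd T x) := by
    apply Finset.sum_congr rfl
    intro j hj
    simp only [Finset.mem_erase, Finset.mem_range] at hj
    rw [nd_sw_ne hk h.sw hj.2.2 hj.2.1 hj.1]
  rw [e, nd_sw_left hk h.sw, nd_sw_right hk h.sw]
  have h2 := h.2
  obtain ⟨d, hd⟩ : ∃ d, n - k = d + 1 := ⟨n - k - 1, by omega⟩
  have hd' : n - (k + 1) = d := by omega
  simp only [hd, hd']
  nlinarith

theorem code_lt_of_below {n : ℕ} {A B : Node} (hA : A.2.1 < n ∧ A.2.2 < n) (h : nodeBelow A B) :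
    code n A < code n B := by
  obtain ⟨l, r, c⟩ := A
  obtain ⟨l', r', c'⟩ := B
  simp only [nodeBelow, code] at *
  rcases h with h | ⟨rfl, h | ⟨rfl, h⟩⟩
  · have h1 : (r + 1) * n ≤ n * n := Nat.mul_le_mul_right _ hA.1
    have h2 : (l + 1) * (n * n) ≤ l' * (n * n) := Nat.mul_le_mul_right _ h
    have h3 : 0 ≤ r' * n := Nat.zero_le _
    nlinarith
  · have h1 : (r + 1) * n ≤ r' * n := Nat.mul_le_mul_right _ h
    nlinarith
  · omega

theorem below_trichotomy (A B : Node) : nodeBelow A B ∨ A = B ∨ nodeBelow B A := by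
  obtain ⟨l, r, c⟩ := A
  obtain ⟨l', r', c'⟩ := B
  simp only [nodeBelow, Prod.mk.injEq]
  omega

theorem below_of_code_lt {n : ℕ} {A B : Node} (hB : B.2.1 < n ∧ B.2.2 < n)
    (h : code n A < code n B) : nodeBelow A B := by
  rcases below_trichotomy A B with h1 | rfl | h1
  · exact h1
  · omega
  · have := code_lt_of_below hB h1
    omega

theorem tlam_mono {ℓ n : ℕ} {μ : Multipartition ℓ n} {A B : Node} (hA : A ∈ μ.diagram)
    (hB : B ∈ μ.diagram) (h : nodeBelow A B) : tlamEntry μ A < tlamEntry μ B := by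
  unfold tlamEntry
  rw [if_pos hA, if_pos hB]
  obtain ⟨l, r, c⟩ := A
  obtain ⟨l', r', c'⟩ := B
  simp only [nodeBelow, Multipartition.diagram, Set.mem_setOf_eq] at *
  have hr : r < n := by
    by_contra h1
    rw [μ.row_bound l r (by omega)] at hA
    omega
  have h1 : ∀ s, r < s → (∑ r ∈ Finset.range r, μ.part l r) + c + 1
      ≤ ∑ r ∈ Finset.range s, μ.part l r := by
    intro s hs
    calc (∑ r ∈ Finset.range r, μ.part l r) + c + 1
        ≤ ∑ r ∈ Finset.range (r + 1), μ.part l r := by rw [Finset.sum_range_succ]; omega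
      _ ≤ _ := Finset.sum_le_sum_of_subset (Finset.range_mono hs)
  rcases h with h | ⟨rfl, h | ⟨rfl, h⟩⟩
  · have h2 : (∑ l ∈ Finset.range l, ∑ r ∈ Finset.range n, μ.part l r)
        + ∑ r ∈ Finset.range n, μ.part l r
        ≤ ∑ l ∈ Finset.range l', ∑ r ∈ Finset.range n, μ.part l r := by
      rw [← Finset.sum_range_succ (fun l => ∑ r ∈ Finset.range n, μ.part l r)]
      exact Finset.sum_le_sum_of_subset (Finset.range_mono h)
    have := h1 n hr
    omega
  · have := h1 r' h
    omega
  · omega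

theorem tlam_le {ℓ n : ℕ} {μ : Multipartition ℓ n} {A : Node} (hA : A ∈ μ.diagram) :
    tlamEntry μ A ≤ n := by
  unfold tlamEntry
  rw [if_pos hA]
  obtain ⟨l, r, c⟩ := A
  simp only [Multipartition.diagram, Set.mem_setOf_eq] at *
  have hr : r < n := by
    by_contra h1
    rw [μ.row_bound l r (by omega)] at hA
    omega
  have hl : l < ℓ := by
    by_contra h1
    rw [μ.comp_bound l (by omega)] at hA
    omega
  have h1 : (∑ r ∈ Finset.range r, μ.part l r) + c + 1
      ≤ ∑ r ∈ Finset.range n, μ.part l r := by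
    calc (∑ r ∈ Finset.range r, μ.part l r) + c + 1
        ≤ ∑ r ∈ Finset.range (r + 1), μ.part l r := by rw [Finset.sum_range_succ]; omega
      _ ≤ _ := Finset.sum_le_sum_of_subset (Finset.range_mono hr)
  have h2 : (∑ l ∈ Finset.range l, ∑ r ∈ Finset.range n, μ.part l r)
      + ∑ r ∈ Finset.range n, μ.part l r ≤ n := by
    rw [← Finset.sum_range_succ (fun l => ∑ r ∈ Finset.range n, μ.part l r)]
    calc _ ≤ ∑ l ∈ Finset.range ℓ, ∑ r ∈ Finset.range n, μ.part l r :=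
          Finset.sum_le_sum_of_subset (Finset.range_mono hl)
      _ = n := μ.size
  omega

theorem not_des_of_tlam {ℓ n : ℕ} {T : StdTableau ℓ n} (h : T.entry = tlamEntry T.shape) (k : ℕ) :
    ¬ Des k T := by
  rintro ⟨hk, h1⟩
  have hb := below_of_code_lt (path_bound (nd_isPath T) (by omega)) h1
  have := tlam_mono (nd_mem T hk) (nd_mem T (by omega)) hb
  rw [← h, entry_nd T hk, entry_nd T (by omega)] at this
  omega

theorem tlam_of_not_des {ℓ n : ℕ} {T : StdTableau ℓ n} (h : ∀ k, ¬ Des k T) :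
    T.entry = tlamEntry T.shape := by
  have hstep : ∀ k, k + 1 < n → tlamEntry T.shape (nd T k) < tlamEntry T.shape (nd T (k + 1)) := by
    intro k hk
    apply tlam_mono (nd_mem T (by omega)) (nd_mem T hk)
    rcases below_trichotomy (nd T k) (nd T (k + 1)) with h1 | h1 | h1
    · exact h1
    · have := (nd_isPath T).inj (by omega) hk h1
      omega
    · exact absurd ⟨hk, code_lt_of_below (path_bound (nd_isPath T) hk) h1⟩ (h k)
  have hlow : ∀ k, k < n → k + 1 ≤ tlamEntry T.shape (nd T k) := by
    intro k
    induction k with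
    | zero =>
      intro hk
      unfold tlamEntry; rw [if_pos (nd_mem T hk)]; omega
    | succ k ih =>
      intro hk
      have := ih (by omega)
      have := hstep k hk
      omega
  have hup : ∀ d k, k + d + 1 = n → tlamEntry T.shape (nd T k) ≤ k + 1 := by
    intro d
    induction d with
    | zero =>
      intro k hk
      have := tlam_le (nd_mem T (show k < n by omega))
      omega
    | succ d ih =>
      intro k hk
      have := ih (k + 1) (by omega)
      have := hstep k (by omega)
      omega
  funext A
  by_cases hA : A ∈ T.shape.diagram
  · obtain ⟨k, hk, e, e'⟩ := exists_nd T hA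
    rw [e', ← e]
    have h1 := hlow k hk
    have h2 := hup (n - k - 1) k (by omega)
    omega
  · rw [T.entry_zero A hA]
    unfold tlamEntry
    rw [if_neg hA]

theorem initial_unique {ℓ n : ℕ} {S T : StdTableau ℓ n} (hS : ∀ k, ¬ Des k S)
    (hT : ∀ k, ¬ Des k T) (h : S.shape = T.shape) : S = T := by
  apply StdTableau.ext_entry
  rw [tlam_of_not_des hS, tlam_of_not_des hT, h]

end Paper

namespace Paper

/-! ## Abstract Hecke relations and weight vectors -/

structure HA {K H : Type*} [Field K] [Ring H] [Algebra K H] (t : K) (n ℓ : ℕ) (κ : ℕ → ℤ)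
    (L T : ℕ → H) : Prop where
  LL : ∀ j k, j < n → k < n → L j * L k = L k * L j
  quad : ∀ k, k + 1 < n → T k * T k = (t - 1) • T k + t • (1 : H)
  far : ∀ j k, j + 1 < n → k + 1 < n → (j + 1 < k ∨ k + 1 < j) → T j * T k = T k * T j
  braid : ∀ k, k + 2 < n → T k * T (k + 1) * T k = T (k + 1) * T k * T (k + 1)
  TL : ∀ k j, k + 1 < n → j < n → j ≠ k → j ≠ k + 1 → T k * L j = L j * T k
  LT : ∀ k, k + 1 < n → L (k + 1) * T k = T k * L k + 1 + (t - 1) • L (k + 1)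
  TL' : ∀ k, k + 1 < n → T k * L (k + 1) = L k * T k + 1 + (t - 1) • L (k + 1)
  cyc : 0 < n → Polynomial.aeval (L 0)
    (∏ l ∈ Finset.range ℓ, (Polynomial.X - Polynomial.C (qint t (κ l)))) = 0

/-- the coefficient of the intertwiner -/
noncomputable def bb {K : Type*} [Field K] (t x y : K) : K := (1 + (t - 1) * y) / (y - x)

theorem bb_mul {K : Type*} [Field K] (t : K) {x y : K} (h : x ≠ y) :
    bb t x y * (y - x) = 1 + (t - 1) * y := by
  unfold bb
  rw [div_mul_cancel₀]
  exact sub_ne_zero.2 h.symm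

theorem bb_add {K : Type*} [Field K] (t : K) {x y : K} (h : x ≠ y) :
    bb t x y + bb t y x = t - 1 := by
  unfold bb
  have h1 : y - x ≠ 0 := sub_ne_zero.2 h.symm
  have h2 : x - y ≠ 0 := sub_ne_zero.2 h
  field_simp
  ring

theorem bb_bb {K : Type*} [Field K] (t : K) {x y : K} (h : x ≠ y) :
    t + bb t x y * bb t y x = (t * x + 1 - y) * (t * y + 1 - x) / (- (y - x) ^ 2) := by
  unfold bb
  have h1 : y - x ≠ 0 := sub_ne_zero.2 h.symm
  have h2 : x - y ≠ 0 := sub_ne_zero.2 h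
  field_simp
  ring

theorem bb_star {K : Type*} [Field K] (t : K) {a b c : K} (h1 : a ≠ b) (h2 : b ≠ c) (h3 : a ≠ c) :
    bb t a b * bb t b c + bb t a c * (t - 1 - bb t a b - bb t b c) = 0 := by
  unfold bb
  have h1 : b - a ≠ 0 := sub_ne_zero.2 h1.symm
  have h2 : c - b ≠ 0 := sub_ne_zero.2 h2.symm
  have h3 : c - a ≠ 0 := sub_ne_zero.2 h3.symm
  field_simp
  ring

/-- the residue of a node -/
noncomputable def qc {K : Type*} [Field K] (t : K) (κ : ℕ → ℤ) (A : Node) : K :=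
  qint t (cont κ A)

theorem qint_d_ne {K : Type*} [Field K] {t : K} (ht : t ≠ 0) (c : ℤ) :
    1 + (t - 1) * qint t c ≠ 0 := by
  rw [← qint_zpow ht]; exact zpow_ne_zero _ ht

theorem qint_plus {K : Type*} [Field K] {t : K} (ht : t ≠ 0) (c : ℤ) :
    qint t (c + 1) = t * qint t c + 1 := by
  rw [add_comm c 1, qint_add ht, qint_one, zpow_one]; ring

theorem qint_minus {K : Type*} [Field K] {t : K} (ht : t ≠ 0) (c : ℤ) :
    t * qint t (c - 1) = qint t c - 1 := by
  have := qint_plus ht (c - 1)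
  rw [sub_add_cancel] at this
  rw [this]; ring

section
variable {K H : Type*} [Field K] [Ring H] [Algebra K H] {t : K} {n ℓ : ℕ} {κ : ℕ → ℤ}
    {L T : ℕ → H}

theorem commute_aeval' {x y : H} (h : Commute x y) (p : Polynomial K) :
    Commute x (Polynomial.aeval y p) := by
  induction p using Polynomial.induction_on' with
  | add p q hp hq => rw [map_add]; exact hp.add_right hq
  | monomial k a =>
    rw [Polynomial.aeval_monomial]
    exact Commute.mul_right (Algebra.commutes a x).symm (h.pow_right k)

/-- weight vectors -/
def Wt (t : K) (κ : ℕ → ℤ) (L : ℕ → H) (A : ℕ → Node) (m : ℕ) (v : H) : Prop :=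
  ∀ k < m, L k * v = qc t κ (A k) • v

theorem Wt.mono {A : ℕ → Node} {m j : ℕ} {v : H} (h : Wt t κ L A m v) (hj : j ≤ m) :
    Wt t κ L A j v := fun k hk => h k (by omega)

theorem Wt.sub {A : ℕ → Node} {m : ℕ} {v w : H} (h : Wt t κ L A m v) (h' : Wt t κ L A m w) :
    Wt t κ L A m (v - w) := fun k hk => by rw [mul_sub, h k hk, h' k hk, smul_sub]

theorem Wt.add {A : ℕ → Node} {m : ℕ} {v w : H} (h : Wt t κ L A m v) (h' : Wt t κ L A m w) :
    Wt t κ L A m (v + w) := fun k hk => by rw [mul_add, h k hk, h' k hk, smul_add]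

theorem Wt.smul {A : ℕ → Node} {m : ℕ} {v : H} (h : Wt t κ L A m v) (c : K) :
    Wt t κ L A m (c • v) := fun k hk => by rw [mul_smul_comm, h k hk, smul_comm]

theorem Wt.T_mul (hH : HA t n ℓ κ L T) {A : ℕ → Node} {m k : ℕ} {v : H} (h : Wt t κ L A m v)
    (hk : k + 1 < n) (hm : m ≤ k) : Wt t κ L A m (T k * v) := fun j hj => by
  rw [← mul_assoc, ← hH.TL k j hk (by omega) (by omega) (by omega), mul_assoc, h j hj,
    mul_smul_comm]

theorem Wt.aeval (hH : HA t n ℓ κ L T) {A : ℕ → Node} {m k : ℕ} {v : H} (h : Wt t κ L A m v)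
    (hk : k < n) (hm : m ≤ n) (p : Polynomial K) :
    Wt t κ L A m (Polynomial.aeval (L k) p * v) := fun j hj => by
  have : Commute (L j) (Polynomial.aeval (L k) p) := by
    have h1 : Commute (L j) (L k) := hH.LL j k (by omega) hk
    exact commute_aeval' h1 p
  rw [← mul_assoc, this.eq, mul_assoc, h j hj, mul_smul_comm]

theorem inter_k1 (hH : HA t n ℓ κ L T) {k : ℕ} (hk : k + 1 < n) {v : H} {x y : K} (hxy : x ≠ y)
    (hx : L k * v = x • v) (hy : L (k + 1) * v = y • v) :
    L (k + 1) * (T k * v - bb t x y • v) = x • (T k * v - bb t x y • v) := by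
  have hb := bb_mul t hxy
  rw [mul_sub, ← mul_assoc, hH.LT k hk, add_mul, add_mul, mul_assoc, hx, mul_smul_comm,
    smul_mul_assoc, one_mul, mul_smul_comm, hy]
  have : (1 + (t - 1) * y) • v = (bb t x y * (y - x)) • v := by rw [hb]
  linear_combination (norm := module) this

theorem inter_k (hH : HA t n ℓ κ L T) {k : ℕ} (hk : k + 1 < n) {v : H} {x y : K} (hxy : x ≠ y)
    (hx : L k * v = x • v) (hy : L (k + 1) * v = y • v) :
    L k * (T k * v - bb t x y • v) = y • (T k * v - bb t x y • v) := by
  have hb := bb_mul t hxy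
  have e : L k * (T k * v) = T k * (L (k + 1) * v) - v - (t - 1) • (L (k + 1) * v) := by
    rw [← mul_assoc, ← mul_assoc, hH.TL' k hk, add_mul, add_mul, one_mul, smul_mul_assoc]
    abel
  rw [mul_sub, e, mul_smul_comm, hx, hy, mul_smul_comm]
  have : (1 + (t - 1) * y) • v = (bb t x y * (y - x)) • v := by rw [hb]
  linear_combination (norm := module) -this

theorem inter_far (hH : HA t n ℓ κ L T) {k j : ℕ} (hk : k + 1 < n) (hj : j < n) (h1 : j ≠ k)
    (h2 : j ≠ k + 1) {v : H} {x c : K} (hx : L j * v = x • v) :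
    L j * (T k * v - c • v) = x • (T k * v - c • v) := by
  rw [mul_sub, ← mul_assoc, ← hH.TL k j hk hj h1 h2, mul_assoc, hx, mul_smul_comm, mul_smul_comm,
    hx, smul_sub, smul_comm c x]

theorem inter_sq (hH : HA t n ℓ κ L T) {k : ℕ} (hk : k + 1 < n) (v : H) {x y : K} (hxy : x ≠ y) :
    T k * (T k * v - bb t x y • v) - bb t y x • (T k * v - bb t x y • v) =
      (t + bb t x y * bb t y x) • v := by
  have e : bb t y x = t - 1 - bb t x y := by rw [← bb_add t hxy]; ring
  rw [mul_sub, ← mul_assoc, hH.quad k hk, add_mul, smul_mul_assoc, smul_mul_assoc, one_mul,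
    mul_smul_comm, e]
  module

theorem Wt.inter (hH : HA t n ℓ κ L T) {A : ℕ → Node} {m k : ℕ} {v : H} (h : Wt t κ L A m v)
    (hk : k + 1 < m) (hm : m ≤ n) (hne : qc t κ (A k) ≠ qc t κ (A (k + 1))) :
    Wt t κ L (swp k A) m (T k * v - bb t (qc t κ (A k)) (qc t κ (A (k + 1))) • v) := by
  intro j hj
  by_cases h1 : j = k
  · subst h1
    rw [swp_left]
    exact inter_k hH (by omega) hne (h _ hj) (h _ hk)
  by_cases h2 : j = k + 1
  · subst h2
    rw [swp_right]
    exact inter_k1 hH (by omega) hne (h _ (by omega)) (h _ hk)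
  · rw [swp_of_ne A h1 h2]
    exact inter_far hH (by omega) (by omega) h1 h2 (h _ hj)

end

/-- `t + b b' ≠ 0` at a swappable position -/
theorem bb_ne {K : Type*} [Field K] {t : K} {n ℓ : ℕ} {κ : ℕ → ℤ} (hs : Sep t n ℓ κ)
    {m : ℕ} {A : ℕ → Node} (h : IsPath ℓ m A) {B C : Node} (hB : AddP ℓ A m B)
    (hC : AddP ℓ A m C) (hm : m + 2 ≤ n) (hne : B ≠ C) :
    t + bb t (qc t κ B) (qc t κ C) * bb t (qc t κ C) (qc t κ B) ≠ 0 := by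
  have h1 : qc t κ B ≠ qc t κ C := fun e => hne (sep_addable' hs h hB hC (by omega) e)
  rw [bb_bb t h1]
  have h2 := sep_addable_pm hs h hC hB hm 1 (by simp)
  have h3 := sep_addable_pm hs h hB hC hm 1 (by simp)
  rw [qint_plus hs.ne] at h2 h3
  apply div_ne_zero
  · exact mul_ne_zero (sub_ne_zero.2 h2.symm) (sub_ne_zero.2 h3.symm)
  · exact neg_ne_zero.2 (pow_ne_zero _ (sub_ne_zero.2 h1.symm))

end Paper

namespace Paper

open Polynomial in
theorem aeval_eig {K H : Type*} [Field K] [Ring H] [Algebra K H] {Y w : H} {y : K}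
    (h : Y * w = y • w) (p : Polynomial K) : aeval Y p * w = p.eval y • w := by
  induction p using Polynomial.induction_on' with
  | add p q hp hq => rw [map_add, add_mul, hp, hq, eval_add, add_smul]
  | monomial k a =>
    rw [aeval_monomial, mul_assoc, eval_monomial, mul_smul, ← Algebra.smul_def]
    congr 1
    induction k with
    | zero => simp
    | succ k ih => rw [pow_succ, mul_assoc, h, mul_smul_comm, ih, smul_smul, pow_succ, mul_comm]

open Polynomial in
theorem sq_free {K H : Type*} [Field K] [Ring H] [Algebra K H] {Y v u : H} {a : K}
    {s : Finset K} (h : aeval Y (∏ x ∈ s, (X - C x)) * v = 0) (h1 : Y * v = a • v + u)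
    (h2 : Y * u = a • u) : u = 0 := by
  have hu : (aeval Y (X - C a)) * v = u := by
    rw [map_sub, aeval_X, aeval_C, sub_mul, h1, ← Algebra.smul_def]; abel
  by_cases ha : a ∈ s
  · rw [← Finset.prod_erase_mul s _ ha, map_mul, mul_assoc, hu, aeval_eig h2] at h
    refine (smul_eq_zero.1 h).resolve_left ?_
    rw [eval_prod]
    refine Finset.prod_ne_zero_iff.2 ?_
    intro x hx
    simp only [eval_sub, eval_X, eval_C]
    exact sub_ne_zero.2 (Finset.ne_of_mem_erase hx).symm
  · have h3 : aeval Y (∏ x ∈ s, (X - C x)) * u = 0 := by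
      rw [← hu, ← mul_assoc, ← map_mul, mul_comm, map_mul, mul_assoc, h, mul_zero]
    rw [aeval_eig h2] at h3
    refine (smul_eq_zero.1 h3).resolve_left ?_
    rw [eval_prod]
    refine Finset.prod_ne_zero_iff.2 ?_
    intro x hx
    simp only [eval_sub, eval_X, eval_C]
    refine sub_ne_zero.2 ?_
    rintro rfl
    exact ha hx

open Polynomial in
theorem lag {K H : Type*} [Field K] [Ring H] [Algebra K H] {Y v : H}
    {s : Finset K} (h : aeval Y (∏ x ∈ s, (X - C x)) * v = 0) :
    ∃ p : K → Polynomial K, v = ∑ x ∈ s, aeval Y (p x) * v ∧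
      ∀ x ∈ s, Y * (aeval Y (p x) * v) = x • (aeval Y (p x) * v) := by
  refine ⟨fun x => Lagrange.basis s id x, ?_, ?_⟩
  · rcases s.eq_empty_or_nonempty with rfl | hs
    · simpa using h
    · rw [← Finset.sum_mul, ← map_sum, Lagrange.sum_basis (v := id) (fun x _ y _ e => e) hs, map_one, one_mul]
  · intro x hx
    have e : (X - C x) * Lagrange.basis s id x =
        (C (∏ y ∈ s.erase x, (x - y)⁻¹)) * ∏ y ∈ s, (X - C y) := by
      rw [← Finset.mul_prod_erase s _ hx, Lagrange.basis]
      simp only [Lagrange.basisDivisor, id]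
      rw [Finset.prod_mul_distrib, map_prod]
      ring
    have h2 : aeval Y (X - C x) * (aeval Y (Lagrange.basis s id x) * v) = 0 := by
      rw [← mul_assoc, ← map_mul, e, map_mul, mul_assoc, h, mul_zero]
    rw [map_sub, aeval_X, aeval_C, sub_mul, ← Algebra.smul_def] at h2
    exact sub_eq_zero.1 h2

/-- the spectral statement -/
def Spec {K H : Type*} [Field K] [Ring H] [Algebra K H] (t : K) (ℓ : ℕ) (κ : ℕ → ℤ) (L : ℕ → H)
    (m : ℕ) : Prop :=
  ∀ A, IsPath ℓ m A → ∀ v, Wt t κ L A m v → ∃ s : Finset K,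
    (∀ x ∈ s, ∃ B, AddP ℓ A m B ∧ qc t κ B = x) ∧
    Polynomial.aeval (L m) (∏ x ∈ s, (Polynomial.X - Polynomial.C x)) * v = 0

section
variable {K H : Type*} [Field K] [Ring H] [Algebra K H] {t : K} {n ℓ : ℕ} {κ : ℕ → ℤ}
    {L T : ℕ → H}

theorem Spec.eig {m : ℕ} (h : Spec t ℓ κ L m) {A : ℕ → Node} (hA : IsPath ℓ m A) {w : H}
    (hw : Wt t κ L A m w) {y : K} (hy : L m * w = y • w) (h0 : w ≠ 0) :
    ∃ B, AddP ℓ A m B ∧ qc t κ B = y := by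
  obtain ⟨s, hs, h1⟩ := h A hA w hw
  rw [aeval_eig hy] at h1
  have h2 := (smul_eq_zero.1 h1).resolve_right h0
  rw [Polynomial.eval_prod, Finset.prod_eq_zero_iff] at h2
  obtain ⟨x, hx, e⟩ := h2
  simp only [Polynomial.eval_sub, Polynomial.eval_X, Polynomial.eval_C] at e
  obtain rfl := sub_eq_zero.1 e
  exact hs _ hx

theorem Spec.pm (hs : Sep t n ℓ κ) {m : ℕ} (hm : m + 2 ≤ n) (h : Spec t ℓ κ L m) {A : ℕ → Node}
    (hA : IsPath ℓ m A) {w : H}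
    (hw : Wt t κ L A m w) {N : Node} (hN : AddP ℓ A m N) {ε : ℤ} (hε : |ε| = 1)
    (hy : L m * w = qint t (cont κ N + ε) • w) : w = 0 := by
  by_contra h0
  obtain ⟨B, hB, e⟩ := h.eig hA hw hy h0
  exact sep_addable_pm hs hA hB hN hm ε hε e

theorem Spec.eq_zero (hH : HA t n ℓ κ L T) {k : ℕ} (hk : k + 1 < n) (h : Spec t ℓ κ L k)
    {A : ℕ → Node} (hA : IsPath ℓ k A) {v : H} (hv : Wt t κ L A k v) {a : K}
    (ha : 1 + (t - 1) * a ≠ 0) (h1 : L k * v = a • v) (h2 : L (k + 1) * v = a • v) : v = 0 := by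
  obtain ⟨s, hs, h3⟩ := h A hA (T k * v) (hv.T_mul hH hk le_rfl)
  have e : L k * (T k * v) = a • (T k * v) + (-(1 + (t - 1) * a)) • v := by
    have : L k * (T k * v) = T k * (L (k + 1) * v) - v - (t - 1) • (L (k + 1) * v) := by
      rw [← mul_assoc, ← mul_assoc, hH.TL' k hk, add_mul, add_mul, one_mul, smul_mul_assoc]
      abel
    rw [this, h2, mul_smul_comm]; module
  have := sq_free h3 e (by rw [mul_smul_comm, h1, smul_comm])
  exact (smul_eq_zero.1 this).resolve_left (neg_ne_zero.2 ha)

/-- the bad configuration does not occur -/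
theorem bad (hs : Sep t n ℓ κ) (hH : HA t n ℓ κ L T) {k : ℕ} (hk : k + 1 < n)
    (hS : ∀ j ≤ k, Spec t ℓ κ L j) (d : ℕ) : ∀ (j : ℕ), j + 1 + d = k →
    ∀ {A : ℕ → Node}, IsPath ℓ (k + 1) A → ∀ {v : H}, Wt t κ L A (k + 1) v →
    L (k + 1) * v = qc t κ (A j) • v → Nxt (A j) (A k) →
    (∀ i, i < k → ¬ Nxt (A j) (A i)) → v = 0 := by
  induction d with
  | zero =>
    intro j hj A hA v hv hx hN _
    obtain rfl : k = j + 1 := by omega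
    obtain ⟨ε, hε, e⟩ := cont_nxt (κ := κ) hN
    have hAj : AddP ℓ A j (A j) := hA j (by omega)
    have hAj' : IsPath ℓ j A := hA.mono (by omega)
    have hne : qc t κ (A j) ≠ qc t κ (A (j + 1)) := by
      have := sep_addable_pm hs hAj' hAj hAj (by omega) ε hε
      rwa [← e] at this
    have w1 := hv.inter hH (k := j) (by omega) (by omega) hne
    have z1 : T j * v - bb t (qc t κ (A j)) (qc t κ (A (j + 1))) • v = 0 := by
      refine Spec.pm hs (by omega) (hS j (by omega)) hAj' (w := _) ?_ hAj hε ?_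
      · intro i hi
        have := w1 i (by omega)
        rwa [swp_of_ne A (by omega) (by omega)] at this
      · have := w1 j (by omega)
        rw [swp_left] at this
        rw [← e]
        exact this
    have y1 := hv j (by omega)
    have y2 := hv (j + 1) (by omega)
    have z2 : T (j + 1) * v - bb t (qc t κ (A (j + 1))) (qc t κ (A j)) • v = 0 := by
      refine Spec.eq_zero hH (by omega) (hS j (by omega)) hAj' (v := _) (a := qc t κ (A j)) ?_
        (qint_d_ne hs.ne _) ?_ ?_
      · intro i hi
        exact inter_far hH (by omega) (by omega) (by omega) (by omega) (hv i (by omega))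
      · exact inter_far hH (by omega) (by omega) (by omega) (by omega) y1
      · exact inter_k hH (by omega) hne.symm y2 hx
    rw [sub_eq_zero] at z1 z2
    set b := bb t (qc t κ (A j)) (qc t κ (A (j + 1)))
    set b' := bb t (qc t κ (A (j + 1))) (qc t κ (A j))
    have hbb : b + b' = t - 1 := bb_add t hne
    have hbr : (T j * T (j + 1) * T j) * v = (T (j + 1) * T j * T (j + 1)) * v := by
      rw [hH.braid j (by omega)]
    simp only [mul_assoc, z1, z2, mul_smul_comm] at hbr
    have hq : T j * T j * v = ((t - 1) • T j + t • (1 : H)) * v := by rw [hH.quad j (by omega)]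
    rw [add_mul, mul_assoc, z1, mul_smul_comm, z1, smul_mul_assoc, smul_mul_assoc, one_mul, z1] at hq
    by_contra h0
    have q1 : b * b = (t - 1) * b + t := by
      have : (b * b - ((t - 1) * b + t)) • v = 0 := by
        linear_combination (norm := module) hq
      exact sub_eq_zero.1 ((smul_eq_zero.1 this).resolve_right h0)
    have q2 : b * b' * b = b' * b * b' := by
      have : (b * b' * b - b' * b * b') • v = 0 := by
        linear_combination (norm := module) hbr
      exact sub_eq_zero.1 ((smul_eq_zero.1 this).resolve_right h0)
    have q3 : b' = t - 1 - b := by rw [← hbb]; ring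
    have q4 : b * b' = -t := by rw [q3]; linear_combination -q1
    have q5 : b = b' := by
      have : (b * b') * (b - b') = 0 := by linear_combination q2
      rw [q4] at this
      exact sub_eq_zero.1 ((mul_eq_zero.1 this).resolve_left (neg_ne_zero.2 hs.ne))
    have q6 : (b + 1) * (b - t) = 0 := by linear_combination q1
    have q7 : t + 1 ≠ 0 := by
      have := hs.small (1 + 1) (by norm_num) (by rw [abs_of_pos] <;> norm_num; omega)
      rw [qint_plus hs.ne, qint_one, mul_one] at this
      exact this
    rcases mul_eq_zero.1 q6 with h | h
    · apply q7
      linear_combination -hbb - q5 + 2 * h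
    · apply q7
      linear_combination hbb - 2 * h + q5
  | succ d ih =>
    intro j hj A hA v hv hx hN hn
    have hsw : ¬ Nxt (A j) (A (j + 1)) := hn (j + 1) (by omega)
    have hadd := add_of_not_nxt hA (k := j) (by omega) hsw
    have hAj' : IsPath ℓ j A := hA.mono (by omega)
    have hAj : AddP ℓ A j (A j) := hA j (by omega)
    have hneA : A j ≠ A (j + 1) := fun e => by
      have := hA.inj (by omega) (by omega) e
      omega
    have hne : qc t κ (A j) ≠ qc t κ (A (j + 1)) := fun e =>
      hneA (sep_addable' hs hAj' hAj hadd (by omega) e)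
    have w1 := hv.inter hH (k := j) (by omega) (by omega) hne
    have hp : IsPath ℓ (k + 1) (swp j A) := hA.swp (by omega) hadd
    have z := ih (j + 1) (by omega) hp w1 (by
        rw [swp_right]
        exact inter_far hH (by omega) (by omega) (by omega) (by omega) hx)
      (by rw [swp_right, swp_of_ne A (by omega) (by omega)]; exact hN)
      (by
        intro i hi
        rw [swp_right]
        apply hn
        rw [Equiv.swap_apply_def]
        split_ifs <;> omega)
    have e := inter_sq hH (k := j) (by omega) v hne
    rw [z, mul_zero, smul_zero, sub_zero] at e
    exact (smul_eq_zero.1 e.symm).resolve_left (bb_ne hs hAj' hAj hadd (by omega) hneA)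

end
end Paper

namespace Paper

section
variable {K H : Type*} [Field K] [Ring H] [Algebra K H] {t : K} {n ℓ : ℕ} {κ : ℕ → ℤ}
    {L T : ℕ → H}

theorem addP_zero {A : ℕ → Node} {l : ℕ} (hl : l < ℓ) : AddP ℓ A 0 (l, 0, 0) :=
  ⟨hl, fun j hj => absurd hj (by omega), fun r hr => absurd hr (by simp),
    fun r hr => absurd hr (by simp)⟩

theorem spec_zero (hs : Sep t n ℓ κ) (hH : HA t n ℓ κ L T) (hn : 0 < n) : Spec t ℓ κ L 0 := by
  intro A hA v _
  refine ⟨(Finset.range ℓ).image fun l => qint t (κ l), ?_, ?_⟩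
  · intro x hx
    obtain ⟨l, hl, rfl⟩ := Finset.mem_image.1 hx
    refine ⟨(l, 0, 0), addP_zero (Finset.mem_range.1 hl), by simp [qc, cont]⟩
  · rw [Finset.prod_image, hH.cyc hn, zero_mul]
    intro l hl m hm e
    have hl' : l < ℓ := by simpa using hl
    have hm' : m < ℓ := by simpa using hm
    have := sep_addable' hs hA (addP_zero hl') (addP_zero hm') (by omega)
      (by simpa [cont] using e)
    exact (Prod.mk.injEq _ _ _ _ ▸ this).1

/-- intertwining of polynomials -/
theorem phi_aeval {Y Z φ : H} (h : Z * φ = φ * Y) (p : Polynomial K) :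
    Polynomial.aeval Z p * φ = φ * Polynomial.aeval Y p := by
  induction p using Polynomial.induction_on' with
  | add p q hp hq => rw [map_add, map_add, add_mul, mul_add, hp, hq]
  | monomial k a =>
    rw [Polynomial.aeval_monomial, Polynomial.aeval_monomial, mul_assoc]
    have : Z ^ k * φ = φ * Y ^ k := by
      induction k with
      | zero => simp
      | succ k ih => rw [pow_succ, mul_assoc, h, ← mul_assoc, ih, mul_assoc, ← pow_succ]
    rw [this, ← mul_assoc, ← mul_assoc, Algebra.commutes]

theorem phi_inter (hH : HA t n ℓ κ L T) {k : ℕ} (hk : k + 1 < n) :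
    L k * (T k * (L k - L (k + 1)) + 1 + (t - 1) • L (k + 1)) =
      (T k * (L k - L (k + 1)) + 1 + (t - 1) • L (k + 1)) * L (k + 1) := by
  have e : L k * T k = T k * L (k + 1) - 1 - (t - 1) • L (k + 1) := by
    rw [hH.TL' k hk]; abel
  have c := hH.LL k (k + 1) (by omega) hk
  have h1 : L k * (T k * (L k - L (k + 1))) = (T k * L (k + 1) - 1 - (t - 1) • L (k + 1)) *
      (L k - L (k + 1)) := by rw [← mul_assoc, e]
  rw [mul_add, mul_add, h1]
  simp only [mul_sub, sub_mul, add_mul, mul_smul_comm, smul_mul_assoc, mul_one, one_mul, mul_assoc, c]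
  module

/-- the quadratic equation -/
theorem quad_eq (hH : HA t n ℓ κ L T) {k : ℕ} (hk : k + 1 < n) {u : H} {a : K}
    (hu : L k * u = a • u)
    (hz : (T k * (L k - L (k + 1)) + 1 + (t - 1) • L (k + 1)) * u = 0) :
    L (k + 1) * (L (k + 1) * (t • u)) =
      (t * (2 * a) + (1 + (t - 1) * a) * (t - 1)) • (L (k + 1) * u)
      + (1 + (t - 1) * a - t * a ^ 2) • u := by
  set Y := L (k + 1) with hY
  set d := 1 + (t - 1) * a with hdd
  have z : T k * (a • u - Y * u) = -(u + (t - 1) • (Y * u)) := by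
    rw [add_mul, add_mul, mul_assoc, sub_mul, hu, one_mul, smul_mul_assoc] at hz
    linear_combination (norm := module) hz
  have e1 : T k * (Y * u) = L k * (T k * u) + u + (t - 1) • (Y * u) := by
    rw [← mul_assoc, hH.TL' k hk, add_mul, add_mul, one_mul, smul_mul_assoc, mul_assoc]
  have e2 : Y * (T k * u) = a • (T k * u) + u + (t - 1) • (Y * u) := by
    rw [← mul_assoc, hH.LT k hk, add_mul, add_mul, one_mul, smul_mul_assoc, mul_assoc, hu,
      mul_smul_comm]
  have e3 : L k * (T k * u) = a • (T k * u) := by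
    rw [mul_sub, mul_smul_comm, e1] at z
    linear_combination (norm := module) -z
  have e4 : T k * (T k * (a • u - Y * u)) =
      (t - 1) • (T k * (a • u - Y * u)) + t • (a • u - Y * u) := by
    rw [← mul_assoc, hH.quad k hk, add_mul, smul_mul_assoc, smul_mul_assoc, one_mul]
  rw [z, mul_neg, mul_add, mul_smul_comm, e1, e3] at e4
  have e5 : d • (T k * u) = t • (Y * u) - (t * a) • u := by
    rw [hdd]
    linear_combination (norm := module) -e4
  have e6 : Y * (d • (T k * u)) = a • (d • (T k * u)) + d • u + (d * (t - 1)) • (Y * u) := by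
    rw [mul_smul_comm, e2]; module
  rw [e5, mul_sub, mul_smul_comm, mul_smul_comm] at e6
  rw [mul_smul_comm, mul_smul_comm]
  linear_combination (norm := module) e6

/-- exclusion -/
theorem excl (hs : Sep t n ℓ κ) (hH : HA t n ℓ κ L T) {k : ℕ} (hk : k + 1 < n)
    (hS : ∀ j ≤ k, Spec t ℓ κ L j) {A : ℕ → Node} (hA : IsPath ℓ (k + 1) A) {u : H}
    (hu : Wt t κ L A (k + 1) u) {x : K} (hx : L (k + 1) * u = x • u) (h0 : u ≠ 0)
    (hc : x = qint t (cont κ (A k) + 1) ∨ x = qint t (cont κ (A k) - 1) ∨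
      ∃ B, AddP ℓ A k B ∧ qc t κ B = x) : ∃ B, AddP ℓ A (k + 1) B ∧ qc t κ B = x := by
  have hnew : ∀ {l r c r' c' : ℕ}, A k = (l, r, c) → r ≤ r' → c ≤ c' → (r < r' ∨ c < c') →
      ∀ j < k + 1, A j ≠ (l, r', c') := by
    intro l r c r' c' e h1 h2 h3 j hj e'
    have hAj := hA j hj
    rw [e'] at hAj
    obtain ⟨i, hi, e''⟩ := hAj.closed (hA.mono (by omega)) h1 h2 h3
    have := hA.inj (i := i) (j := k) (by omega) (by omega) (by rw [e'', e])
    omega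
  rcases hc with hc | hc | ⟨B, hB, e⟩
  · rcases hAk : A k with ⟨l, r, c⟩
    have hAkk := hA k (by omega)
    rw [hAk] at hAkk
    refine ⟨(l, r, c + 1), ?_, by rw [hc, qc, hAk]; congr 1; simp only [cont]; push_cast; ring⟩
    refine ⟨hAkk.1, hnew hAk le_rfl (by omega) (by omega), ?_, ?_⟩
    · intro r' hr
      simp only at hr
      subst hr
      by_contra hcon
      push Not at hcon
      obtain ⟨j, hj, ej⟩ := hAkk.2.2.1 r' rfl
      simp only at ej
      apply h0
      refine bad hs hH hk hS (k - 1 - j) j (by omega) hA hu ?_ ?_ ?_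
      · rw [hx, hc, hAk, ej, qc]; congr 2; simp only [cont]; push_cast; ring
      · rw [hAk, ej]; right; rfl
      · intro i hi hN
        rw [ej] at hN
        rcases hN with hN | hN
        · exact hcon i (by omega) hN
        · have := hA.inj (i := i) (j := k) (by omega) (by omega) (by rw [hN, hAk])
          omega
    · intro c' hc'
      simp only at hc'
      obtain rfl : c = c' := by omega
      exact ⟨k, by omega, hAk⟩
  · rcases hAk : A k with ⟨l, r, c⟩
    have hAkk := hA k (by omega)
    rw [hAk] at hAkk
    refine ⟨(l, r + 1, c), ?_, by rw [hc, qc, hAk]; congr 1; simp only [cont]; push_cast; ring⟩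
    refine ⟨hAkk.1, hnew hAk (by omega) le_rfl (by omega), ?_, ?_⟩
    · intro c' hc'
      simp only at hc'
      obtain rfl : r = c' := by omega
      exact ⟨k, by omega, hAk⟩
    · intro r' hr
      simp only at hr
      subst hr
      by_contra hcon
      push Not at hcon
      obtain ⟨j, hj, ej⟩ := hAkk.2.2.2 r' rfl
      simp only at ej
      apply h0
      refine bad hs hH hk hS (k - 1 - j) j (by omega) hA hu ?_ ?_ ?_
      · rw [hx, hc, hAk, ej, qc]; congr 2; simp only [cont]; push_cast; ring
      · rw [hAk, ej]; left; rfl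
      · intro i hi hN
        rw [ej] at hN
        rcases hN with hN | hN
        · have := hA.inj (i := i) (j := k) (by omega) (by omega) (by rw [hN, hAk])
          omega
        · exact hcon i (by omega) hN
  · have hne : B ≠ A k := by
      rintro rfl
      apply h0
      refine Spec.eq_zero hH hk (hS k le_rfl) (hA.mono (by omega)) (hu.mono (by omega))
        (a := x) ?_ ?_ hx
      · rw [← e]; exact qint_d_ne hs.ne _
      · rw [← e]; exact hu k (by omega)
    obtain ⟨b1, b2, b3, b4⟩ := hB
    refine ⟨B, ⟨b1, ?_, ?_, ?_⟩, e⟩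
    · intro j hj
      by_cases hjk : j = k
      · subst hjk; exact hne.symm
      · exact b2 j (by omega)
    · intro r hr
      obtain ⟨j, hj, ej⟩ := b3 r hr
      exact ⟨j, by omega, ej⟩
    · intro r hr
      obtain ⟨j, hj, ej⟩ := b4 r hr
      exact ⟨j, by omega, ej⟩

open Polynomial in
theorem spec_succ (hs : Sep t n ℓ κ) (hH : HA t n ℓ κ L T) {k : ℕ} (hk : k + 1 < n)
    (hS : ∀ j ≤ k, Spec t ℓ κ L j) : Spec t ℓ κ L (k + 1) := by
  intro A hA v hv
  have hA' : IsPath ℓ k A := hA.mono (by omega)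
  have hAk : AddP ℓ A k (A k) := hA k (by omega)
  have hvk := hv k (by omega)
  set φ : H := T k * (L k - L (k + 1)) + 1 + (t - 1) • L (k + 1) with hφ
  have hφW : Wt t κ L A k (φ * v) := by
    intro j hj
    have c1 : Commute (L j) (T k) := (hH.TL k j hk (by omega) (by omega) (by omega)).symm
    have c2 : Commute (L j) (L k) := hH.LL j k (by omega) (by omega)
    have c3 : Commute (L j) (L (k + 1)) := hH.LL j (k + 1) (by omega) (by omega)
    have c : Commute (L j) φ :=
      (((c1.mul_right (c2.sub_right c3)).add_right (Commute.one_right _)).add_right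
        (c3.smul_right _))
    rw [← mul_assoc, c.eq, mul_assoc, hv j (by omega), mul_smul_comm]
  obtain ⟨s, hs1, hs2⟩ := hS k le_rfl A hA' _ hφW
  rw [← mul_assoc, phi_aeval (phi_inter hH hk), mul_assoc] at hs2
  set P : Polynomial K := ∏ x ∈ s, (X - C x) with hP
  set a := qc t κ (A k) with ha
  set a1 := qint t (cont κ (A k) + 1) with ha1
  set a2 := qint t (cont κ (A k) - 1) with ha2
  have ea1 : a1 = t * a + 1 := qint_plus hs.ne _
  have ea2 : t * a2 = a - 1 := qint_minus hs.ne _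
  have huk : L k * (aeval (L (k + 1)) P * v) = a • (aeval (L (k + 1)) P * v) :=
    hv.aeval hH hk (by omega) P k (by omega)
  have hq := quad_eq hH hk huk hs2
  have n1 : a1 ∉ s := by
    intro h
    obtain ⟨B, hB, e⟩ := hs1 _ h
    exact sep_addable_pm hs hA' hB hAk (by omega) 1 (by simp) e
  have n2 : a2 ∉ s := by
    intro h
    obtain ⟨B, hB, e⟩ := hs1 _ h
    exact sep_addable_pm hs hA' hB hAk (by omega) (-1) (by simp) e
  have n3 : a1 ≠ a2 := by
    intro h
    have h2 := qint_sub hs.ne (cont κ (A k) + 1) (cont κ (A k) - 1)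
    rw [← ha1, ← ha2, h, sub_self] at h2
    refine (mul_ne_zero (zpow_ne_zero _ hs.ne) ?_) h2.symm
    apply hs.small
    · omega
    · have : cont κ (A k) + 1 - (cont κ (A k) - 1) = 2 := by ring
      rw [this]
      rw [abs_of_pos] <;> norm_num; omega
  have hkill : aeval (L (k + 1)) (∏ x ∈ insert a1 (insert a2 s), (X - C x)) * v = 0 := by
    rw [Finset.prod_insert (by simp [n1, n3]), Finset.prod_insert n2, ← hP, map_mul, map_mul,
      mul_assoc, mul_assoc]
    set u := aeval (L (k + 1)) P * v
    simp only [map_sub, aeval_X, aeval_C, sub_mul, ← Algebra.smul_def, mul_sub, mul_smul_comm]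
    have : t • (L (k + 1) * (L (k + 1) * u) - a2 • (L (k + 1) * u) -
        (a1 • (L (k + 1) * u) - a1 • a2 • u)) = 0 := by
      rw [mul_smul_comm, mul_smul_comm] at hq
      have f1 : (t * a2) • (L (k + 1) * u) = (a - 1) • (L (k + 1) * u) := by rw [ea2]
      have f2 : (t * a2) • u = (a - 1) • u := by rw [ea2]
      rw [ea1]
      linear_combination (norm := module) hq - f1 + (t * a + 1) • f2
    have h2 := (smul_eq_zero.1 this).resolve_left hs.ne
    rw [← h2]
    module
  obtain ⟨p, hp1, hp2⟩ := lag hkill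
  refine ⟨(insert a1 (insert a2 s)).filter fun x => aeval (L (k + 1)) (p x) * v ≠ 0, ?_, ?_⟩
  · intro x hx
    rw [Finset.mem_filter] at hx
    refine excl hs hH hk hS hA (hv.aeval hH hk (by omega) (p x)) (hp2 x hx.1) hx.2 ?_
    rcases Finset.mem_insert.1 hx.1 with h | h
    · exact Or.inl h
    rcases Finset.mem_insert.1 h with h | h
    · exact Or.inr (Or.inl h)
    · exact Or.inr (Or.inr (hs1 x h))
  · rw [show ∀ Q : H, Q * v = Q * ∑ x ∈ insert a1 (insert a2 s), aeval (L (k + 1)) (p x) * v from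
      fun Q => by rw [← hp1], Finset.mul_sum]
    refine Finset.sum_eq_zero fun x hx => ?_
    rw [aeval_eig (hp2 x hx), eval_prod]
    by_cases h0 : aeval (L (k + 1)) (p x) * v = 0
    · rw [h0, smul_zero]
    · rw [Finset.prod_eq_zero (Finset.mem_filter.2 ⟨hx, h0⟩) (by simp), zero_smul]

theorem spec_all (hs : Sep t n ℓ κ) (hH : HA t n ℓ κ L T) (m : ℕ) (hm : m < n) :
    Spec t ℓ κ L m := by
  induction m using Nat.strong_induction_on with
  | _ m ih =>
    rcases m with _ | k
    · exact spec_zero hs hH hm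
    · exact spec_succ hs hH hm fun j hj => ih j (by omega) (by omega)

theorem path_decomp (hs : Sep t n ℓ κ) (hH : HA t n ℓ κ L T) (m : ℕ) (hm : m ≤ n) (v : H) :
    v ∈ Submodule.span K {w : H | ∃ A, IsPath ℓ m A ∧ Wt t κ L A m w} := by
  induction m with
  | zero =>
    apply Submodule.subset_span
    exact ⟨fun _ => (0, 0, 0), fun k hk => absurd hk (by omega), fun k hk => absurd hk (by omega)⟩
  | succ m ih =>
    refine (Submodule.span_le.2 ?_) (ih (by omega))
    rintro w ⟨A, hA, hw⟩
    obtain ⟨s, hs1, hs2⟩ := spec_all hs hH m (by omega) A hA w hw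
    obtain ⟨p, hp1, hp2⟩ := lag hs2
    rw [hp1]
    refine Submodule.sum_mem _ fun x hx => Submodule.subset_span ?_
    obtain ⟨B, hB, e⟩ := hs1 x hx
    have key : ∀ j < m, A j = Function.update A m B j := fun j hj => by
      rw [Function.update_of_ne (by omega)]
    refine ⟨Function.update A m B, ?_, ?_⟩
    · intro k hk
      by_cases h : k = m
      · subst h
        rw [Function.update_self]
        exact hB.congr key
      · rw [← key k (by omega)]
        exact (hA k (by omega)).congr fun j hj => key j (by omega)
    · intro k hk
      by_cases h : k = m
      · subst h
        rw [Function.update_self, e]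
        exact hp2 x hx
      · rw [← key k (by omega)]
        exact hw.aeval hH (by omega) (by omega) (p x) k (by omega)

/-- existence of the decomposition of the identity -/
theorem tab_decomp (hs : Sep t n ℓ κ) (hH : HA t n ℓ κ L T) (v : H) :
    ∃ F : StdTableau ℓ n → H, (∀ S, Wt t κ L (nd S) n (F S)) ∧ v = ∑ S, F S := by
  have h := path_decomp hs hH n le_rfl v
  induction h using Submodule.span_induction with
  | mem w hw =>
    obtain ⟨A, hA, hw⟩ := hw
    obtain ⟨S, hS⟩ := exists_tab hA
    refine ⟨fun U => if U = S then w else 0, ?_, by simp⟩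
    intro U
    by_cases hU : U = S
    · subst hU
      simp only [if_true]
      intro k hk
      rw [hS k hk]
      exact hw k hk
    · simp only [hU, if_false]
      intro k hk
      simp
  | zero => exact ⟨fun _ => 0, fun S k hk => by simp, by simp⟩
  | add x y _ _ hx hy =>
    obtain ⟨F, hF, rfl⟩ := hx
    obtain ⟨G, hG, rfl⟩ := hy
    exact ⟨fun S => F S + G S, fun S => (hF S).add (hG S), by rw [Finset.sum_add_distrib]⟩
  | smul c x _ hx =>
    obtain ⟨F, hF, rfl⟩ := hx
    exact ⟨fun S => c • F S, fun S => (hF S).smul c, by rw [Finset.smul_sum]⟩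

end
end Paper

namespace Paper

/-! ## Separation of tableaux -/

theorem tab_sep {K : Type*} [Field K] {t : K} {n ℓ : ℕ} {κ : ℕ → ℤ} (hs : Sep t n ℓ κ)
    {S U : StdTableau ℓ n} (h : ∀ k < n, qc t κ (nd S k) = qc t κ (nd U k)) : S = U := by
  apply nd_ext
  intro k
  induction k using Nat.strong_induction_on with
  | _ k ih =>
    intro hk
    have h1 := nd_isPath S k hk
    have h2 := (nd_isPath U k hk).congr (A' := nd S) fun j hj => (ih j hj (by omega)).symm
    exact sep_addable' hs ((nd_isPath S).mono hk.le) h1 h2 hk (h k hk)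

theorem ne_adj {K : Type*} [Field K] {t : K} {n ℓ : ℕ} {κ : ℕ → ℤ} (hs : Sep t n ℓ κ)
    (S : StdTableau ℓ n) {k : ℕ} (hk : k + 1 < n) :
    qc t κ (nd S k) ≠ qc t κ (nd S (k + 1)) := by
  have hp := nd_isPath S
  have hk1 := hp k (by omega)
  by_cases h : Nxt (nd S k) (nd S (k + 1))
  · obtain ⟨ε, hε, e⟩ := cont_nxt (κ := κ) h
    have := sep_addable_pm hs (hp.mono (by omega)) hk1 hk1 (by omega) ε hε
    rwa [← e] at this
  · intro e
    have := sep_addable' hs (hp.mono (by omega)) hk1 (add_of_not_nxt hp hk h) (by omega) e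
    have := hp.inj (by omega) (by omega) this
    omega

theorem ne_two {K : Type*} [Field K] {t : K} {n ℓ : ℕ} {κ : ℕ → ℤ} (hs : Sep t n ℓ κ)
    (S : StdTableau ℓ n) {k : ℕ} (hk : k + 2 < n) :
    qc t κ (nd S k) ≠ qc t κ (nd S (k + 2)) := by
  have hp := nd_isPath S
  by_cases h1 : Sw k S
  · have := ne_adj hs (sw k S) (k := k + 1) (by omega)
    rw [nd_sw_right (by omega) h1, nd_sw_ne (by omega) h1 (by omega) (by omega) (by omega)] at this
    exact this
  by_cases h2 : Sw (k + 1) S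
  · have := ne_adj hs (sw (k + 1) S) (k := k) (by omega)
    rw [nd_sw_left (by omega) h2, nd_sw_ne (by omega) h2 (by omega) (by omega) (by omega)] at this
    exact this
  have h1' : Nxt (nd S k) (nd S (k + 1)) := by_contra h1
  have h2' : Nxt (nd S (k + 1)) (nd S (k + 2)) := by_contra h2
  intro e
  have h3 := qint_sub hs.ne (cont κ (nd S k)) (cont κ (nd S (k + 2)))
  unfold qc at e
  rw [e, sub_self] at h3
  refine (mul_ne_zero (zpow_ne_zero _ hs.ne) ?_) h3.symm
  rcases hA : nd S k with ⟨l, r, c⟩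
  rw [hA] at h1'
  have hclosed : ∀ i < k, ∀ r' c', r ≤ r' → c ≤ c' → (r < r' ∨ c < c') → nd S i ≠ (l, r', c') := by
    intro i hi r' c' x1 x2 x3 e'
    have hi' := hp i (by omega)
    rw [e'] at hi'
    obtain ⟨j, hj, e''⟩ := hi'.closed (hp.mono (by omega)) x1 x2 x3
    have := hp.inj (i := j) (j := k) (by omega) (by omega) (by rw [e'', hA])
    omega
  rcases h1' with h1' | h1' <;> rw [h1'] at h2' <;> rcases h2' with h2' | h2' <;>
    simp only at h1' h2'
  · rw [h2']
    apply hs.small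
    · simp only [cont]; push_cast; omega
    · rw [abs_le]; simp only [cont]; push_cast; omega
  · exfalso
    have h5 := hp (k + 2) (by omega)
    obtain ⟨i, hi, ei⟩ := h5.2.2.2 c (by rw [h2'])
    rw [h2'] at ei
    simp only at ei
    rcases Nat.lt_or_ge i k with h6 | h6
    · exact hclosed i h6 _ _ (by omega) (by omega) (by omega) ei
    · have : i = k ∨ i = k + 1 := by omega
      rcases this with rfl | rfl
      · rw [hA] at ei; simp at ei
      · rw [h1'] at ei; simp at ei
  · exfalso
    have h5 := hp (k + 2) (by omega)
    obtain ⟨i, hi, ei⟩ := h5.2.2.1 r (by rw [h2'])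
    rw [h2'] at ei
    simp only at ei
    rcases Nat.lt_or_ge i k with h6 | h6
    · exact hclosed i h6 _ _ (by omega) (by omega) (by omega) ei
    · have : i = k ∨ i = k + 1 := by omega
      rcases this with rfl | rfl
      · rw [hA] at ei; simp at ei
      · rw [h1'] at ei; simp at ei
  · rw [h2']
    apply hs.small
    · simp only [cont]; push_cast; omega
    · rw [abs_le]; simp only [cont]; push_cast; omega

theorem Des_or {ℓ n : ℕ} {k : ℕ} {V : StdTableau ℓ n} (hk : k + 1 < n) (h : Sw k V) :
    Des k V ∨ Des k (sw k V) := by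
  have hb1 := path_bound (nd_isPath V) (k := k) (by omega)
  have hb2 := path_bound (nd_isPath V) (k := k + 1) (by omega)
  rcases below_trichotomy (nd V k) (nd V (k + 1)) with h1 | h1 | h1
  · right
    refine ⟨hk, ?_⟩
    rw [nd_sw_left hk h, nd_sw_right hk h]
    exact code_lt_of_below (by constructor <;> omega) h1
  · have := (nd_isPath V).inj (by omega) (by omega) h1
    omega
  · left
    exact ⟨hk, code_lt_of_below (by constructor <;> omega) h1⟩

theorem exists_ini {ℓ n : ℕ} (U : StdTableau ℓ n) :
    ∃ I : StdTableau ℓ n, I.shape = U.shape ∧ ∀ k, ¬ Des k I := by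
  induction hm : meas U using Nat.strong_induction_on generalizing U with
  | _ m ih =>
    by_cases h : ∃ k, Des k U
    · obtain ⟨k, hk⟩ := h
      obtain ⟨I, h1, h2⟩ := ih _ (by rw [← hm]; exact meas_lt hk) (sw k U) rfl
      exact ⟨I, by rw [h1, sw_shape hk.1], h2⟩
    · push Not at h
      exact ⟨U, rfl, h⟩

/-! ## Idempotents -/

structure HS {K H : Type*} [Field K] [Ring H] [Algebra K H] (n : ℕ) (L T : ℕ → H)
    (st : H →ₗ[K] H) : Prop where
  mul : ∀ a b, st (a * b) = st b * st a
  one : st 1 = 1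
  invol : ∀ a, st (st a) = a
  L : ∀ k, k < n → st (L k) = L k
  T : ∀ k, k + 1 < n → st (T k) = T k

/-- the `b`-coefficient of a tableau -/
noncomputable def be {K : Type*} [Field K] {n ℓ : ℕ} (t : K) (κ : ℕ → ℤ) (k : ℕ)
    (S : StdTableau ℓ n) : K := bb t (qc t κ (nd S k)) (qc t κ (nd S (k + 1)))

structure Ctx {K H : Type*} [Field K] [Ring H] [Algebra K H] (t : K) (n ℓ : ℕ) (κ : ℕ → ℤ)
    (L T : ℕ → H) (st : H →ₗ[K] H) (F : StdTableau ℓ n → H) (a : ℕ → StdTableau ℓ n → K) :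
    Prop where
  sep : Sep t n ℓ κ
  ha : HA t n ℓ κ L T
  hs : HS n L T st
  Fw : ∀ S, Wt t κ L (nd S) n (F S)
  Fst : ∀ S, st (F S) = F S
  F1 : ∀ {S h}, Wt t κ L (nd S) n h → F S * h = h
  F0 : ∀ {S U h}, Wt t κ L (nd S) n h → U ≠ S → F U * h = 0
  Fsum : ∑ S, F S = 1
  a0 : ∀ k S, k + 1 < n → ¬ Sw k S → a k S = 0
  aa : ∀ k S, k + 1 < n → Sw k S → a k S * a k (sw k S) =
    t + be t κ k S * be t κ k (sw k S)
  afar : ∀ j k S, j + 1 < n → k + 1 < n → (j + 1 < k ∨ k + 1 < j) →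
    a j S * a k (sw j S) = a k S * a j (sw k S)
  abr : ∀ k S, k + 2 < n → a k S * a (k + 1) (sw k S) * a k (sw (k + 1) (sw k S)) =
    a (k + 1) S * a k (sw (k + 1) S) * a (k + 1) (sw k (sw (k + 1) S))

section
variable {K H : Type*} [Field K] [Ring H] [Algebra K H] {t : K} {n ℓ : ℕ} {κ : ℕ → ℤ}
    {L T : ℕ → H} {st : H →ₗ[K] H}

theorem orth {M : Type*} [AddCommGroup M] [Module K M] (hs : Sep t n ℓ κ) {S U : StdTableau ℓ n}
    (hSU : S ≠ U) {x : M}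
    (h : ∀ k < n, qc t κ (nd S k) • x = qc t κ (nd U k) • x) : x = 0 := by
  by_contra h0
  apply hSU
  apply tab_sep hs
  intro k hk
  have := h k hk
  rw [← sub_eq_zero, ← sub_smul] at this
  exact sub_eq_zero.1 ((smul_eq_zero.1 this).resolve_right h0)

theorem st_mul_orth (hs : Sep t n ℓ κ) (hst : HS n L T st)
    {S U : StdTableau ℓ n} (hSU : S ≠ U) {x y : H} (hx : Wt t κ L (nd S) n x)
    (hy : Wt t κ L (nd U) n y) : st x * y = 0 := by
  refine orth hs hSU fun k hk => ?_
  have h1 : st x * L k = qc t κ (nd S k) • st x := by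
    rw [← map_smul, ← hx k hk, hst.mul, hst.L k hk]
  rw [← smul_mul_assoc, ← h1, mul_assoc, hy k hk, mul_smul_comm]

theorem exists_F (hs : Sep t n ℓ κ) (hH : HA t n ℓ κ L T) (hst : HS n L T st) :
    ∃ F : StdTableau ℓ n → H, (∀ S, Wt t κ L (nd S) n (F S)) ∧ (∀ S, st (F S) = F S) ∧
      (∀ S h, Wt t κ L (nd S) n h → F S * h = h) ∧
      (∀ S U h, Wt t κ L (nd S) n h → U ≠ S → F U * h = 0) ∧ ∑ S, F S = 1 := by
  obtain ⟨F, hF, h1⟩ := tab_decomp hs hH (1 : H)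
  have e1 : ∀ S, st (F S) = st (F S) * F S := by
    intro S
    conv_lhs => rw [← mul_one (st (F S)), h1, Finset.mul_sum]
    refine Finset.sum_eq_single S (fun U _ hU => ?_) (by simp)
    exact st_mul_orth hs hst hU.symm (hF S) (hF U)
  have e2 : ∀ S, F S = st (F S) * F S := by
    intro S
    conv_lhs => rw [← one_mul (F S), ← hst.one, h1, map_sum, Finset.sum_mul]
    refine Finset.sum_eq_single S (fun U _ hU => ?_) (by simp)
    exact st_mul_orth hs hst hU (hF U) (hF S)
  have e3 : ∀ S, st (F S) = F S := fun S => (e1 S).trans (e2 S).symm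
  have e4 : ∀ S U h, Wt t κ L (nd S) n h → U ≠ S → F U * h = 0 := by
    intro S U h hh hU
    rw [← e3 U]
    exact st_mul_orth hs hst hU (hF U) hh
  refine ⟨F, hF, e3, ?_, e4, h1.symm⟩
  intro S h hh
  conv_rhs => rw [← one_mul h, h1, Finset.sum_mul]
  symm
  refine Finset.sum_eq_single S (fun U _ hU => ?_) (by simp)
  exact e4 S U h hh hU

end
end Paper

namespace Paper

/-! ## The vectors `e_U` -/

theorem sw_comm {ℓ n : ℕ} {j k : ℕ} {U : StdTableau ℓ n} (hj : j + 1 < n) (hk : k + 1 < n)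
    (hjk : j + 1 < k ∨ k + 1 < j) (h1 : Sw j U) (h2 : Sw k U) :
    Sw k (sw j U) ∧ sw k (sw j U) = sw j (sw k U) := by
  have e1 : Sw k (sw j U) := by
    unfold Sw
    rw [nd_sw_ne hj h1 (by omega) (by omega) (by omega),
      nd_sw_ne hj h1 (by omega) (by omega) (by omega)]
    exact h2
  have e2 : Sw j (sw k U) := by
    unfold Sw
    rw [nd_sw_ne hk h2 (by omega) (by omega) (by omega),
      nd_sw_ne hk h2 (by omega) (by omega) (by omega)]
    exact h1
  refine ⟨e1, nd_ext fun i hi => ?_⟩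
  rw [nd_sw hk e1 i hi, nd_sw hj e2 i hi]
  by_cases i1 : i = j
  · subst i1
    rw [swp_left, swp_of_ne _ (by omega) (by omega), nd_sw_left hj h1,
      nd_sw_ne hk h2 (by omega) (by omega) (by omega)]
  by_cases i2 : i = j + 1
  · subst i2
    rw [swp_right, swp_of_ne _ (by omega) (by omega), nd_sw_right hj h1,
      nd_sw_ne hk h2 (by omega) (by omega) (by omega)]
  rw [swp_of_ne _ i1 i2]
  by_cases i3 : i = k
  · subst i3
    rw [swp_left, nd_sw_left hk h2, nd_sw_ne hj h1 (by omega) (by omega) (by omega)]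
  by_cases i4 : i = k + 1
  · subst i4
    rw [swp_right, nd_sw_right hk h2, nd_sw_ne hj h1 (by omega) (by omega) (by omega)]
  rw [swp_of_ne _ i3 i4, nd_sw_ne hj h1 hi i1 i2, nd_sw_ne hk h2 hi i3 i4]

theorem sw_braid {ℓ n : ℕ} {j : ℕ} {U : StdTableau ℓ n} (hj : j + 2 < n)
    (h1 : Sw j U) (h2 : Sw (j + 1) (sw j U)) (h3 : Sw j (sw (j + 1) (sw j U)))
    (h1' : Sw (j + 1) U) (h2' : Sw j (sw (j + 1) U)) (h3' : Sw (j + 1) (sw j (sw (j + 1) U))) :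
    sw j (sw (j + 1) (sw j U)) = sw (j + 1) (sw j (sw (j + 1) U)) := by
  have k1 : j + 1 < n := by omega
  have k2 : j + 1 + 1 < n := by omega
  refine nd_ext fun i hi => ?_
  by_cases i1 : i = j
  · subst i1
    rw [nd_sw_left k1 h3, nd_sw_left k2 h2, nd_sw_ne k1 h1 (by omega) (by omega) (by omega),
      nd_sw_ne k2 h3' (by omega) (by omega) (by omega), nd_sw_left k1 h2', nd_sw_left k2 h1']
  by_cases i2 : i = j + 1
  · subst i2
    rw [nd_sw_right k1 h3, nd_sw_ne k2 h2 (by omega) (by omega) (by omega), nd_sw_left k1 h1,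
      nd_sw_left k2 h3', nd_sw_ne k1 h2' (by omega) (by omega) (by omega), nd_sw_right k2 h1']
  by_cases i3 : i = j + 1 + 1
  · subst i3
    rw [nd_sw_ne k1 h3 (by omega) (by omega) (by omega), nd_sw_right k2 h2, nd_sw_right k1 h1,
      nd_sw_right k2 h3', nd_sw_right k1 h2', nd_sw_ne k2 h1' (by omega) (by omega) (by omega)]
  rw [nd_sw_ne k1 h3 (by omega) (by omega) (by omega),
    nd_sw_ne k2 h2 (by omega) (by omega) (by omega),
    nd_sw_ne k1 h1 (by omega) (by omega) (by omega),
    nd_sw_ne k2 h3' (by omega) (by omega) (by omega),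
    nd_sw_ne k1 h2' (by omega) (by omega) (by omega),
    nd_sw_ne k2 h1' (by omega) (by omega) (by omega)]

section
variable {K H : Type*} [Field K] [Ring H] [Algebra K H] {t : K} {n ℓ : ℕ} {κ : ℕ → ℤ}
    {L T : ℕ → H} {st : H →ₗ[K] H} {F : StdTableau ℓ n → H} {a : ℕ → StdTableau ℓ n → K}

theorem be_sw {k : ℕ} {S : StdTableau ℓ n} (hk : k + 1 < n) (h : Sw k S) :
    be t κ k (sw k S) = bb t (qc t κ (nd S (k + 1))) (qc t κ (nd S k)) := by
  rw [be, nd_sw_left hk h, nd_sw_right hk h]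

theorem Ctx.ane (c : Ctx t n ℓ κ L T st F a) {k : ℕ} {S : StdTableau ℓ n} (hk : k + 1 < n)
    (h : Sw k S) : a k S ≠ 0 := by
  have h1 := c.aa k S hk h
  rw [be_sw hk h] at h1
  have hp := nd_isPath S
  have h2 : t + be t κ k S * bb t (qc t κ (nd S (k + 1))) (qc t κ (nd S k)) ≠ 0 :=
    bb_ne c.sep (hp.mono (by omega : k ≤ n)) (hp k (by omega)) (add_of_not_nxt hp hk h) (by omega)
      (fun e => by have := hp.inj (by omega) (by omega) e; omega)
  intro h0
  rw [h0, zero_mul] at h1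
  exact h2 h1.symm

/-- recursive definition of the vectors `e_U` -/
noncomputable def eV (t : K) (κ : ℕ → ℤ) (T : ℕ → H) (F : StdTableau ℓ n → H)
    (a : ℕ → StdTableau ℓ n → K) (U : StdTableau ℓ n) : H :=
  if h : ∃ k, Des k U then
    (a (Classical.choose h) (sw (Classical.choose h) U))⁻¹ •
      (T (Classical.choose h) * eV t κ T F a (sw (Classical.choose h) U) -
        be t κ (Classical.choose h) (sw (Classical.choose h) U) •
          eV t κ T F a (sw (Classical.choose h) U))
  else F U
termination_by meas U
decreasing_by all_goals exact meas_lt (Classical.choose_spec h)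

theorem eV_ini {U : StdTableau ℓ n} (h : ∀ k, ¬ Des k U) : eV t κ T F a U = F U := by
  rw [eV, dif_neg (by push Not; exact h)]

theorem eV_des {U : StdTableau ℓ n} (h : ∃ k, Des k U) : ∃ k, Des k U ∧ eV t κ T F a U =
    (a k (sw k U))⁻¹ • (T k * eV t κ T F a (sw k U) - be t κ k (sw k U) • eV t κ T F a (sw k U)) := by
  refine ⟨Classical.choose h, Classical.choose_spec h, ?_⟩
  rw [eV, dif_pos h]

theorem Wt.sw (c : Ctx t n ℓ κ L T st F a) {k : ℕ} (hk : k + 1 < n) {V : StdTableau ℓ n}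
    (hV : Sw k V) {v : H} (h : Wt t κ L (nd V) n v) :
    Wt t κ L (nd (sw k V)) n (T k * v - be t κ k V • v) := by
  intro j hj
  rw [nd_sw hk hV j hj]
  exact h.inter c.ha hk le_rfl (ne_adj c.sep V hk) j hj

theorem eV_wt (c : Ctx t n ℓ κ L T st F a) (U : StdTableau ℓ n) :
    Wt t κ L (nd U) n (eV t κ T F a U) := by
  induction hm : meas U using Nat.strong_induction_on generalizing U with
  | _ m ih =>
    by_cases h : ∃ k, Des k U
    · obtain ⟨k, hk, e⟩ := eV_des (t := t) (κ := κ) (T := T) (F := F) (a := a) h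
      have := ih _ (by rw [← hm]; exact meas_lt hk) (Paper.sw k U) rfl
      rw [e]
      apply Wt.smul
      have h2 := this.sw c hk.1 (Sw_sw hk.1 hk.sw)
      rwa [sw_sw hk.1 hk.sw] at h2
    · rw [eV_ini (by push Not at h; exact h)]
      exact c.Fw U

/-- far commutation of intertwiners -/
theorem inter_far_comm (hH : HA t n ℓ κ L T) {j k : ℕ} (hj : j + 1 < n) (hk : k + 1 < n)
    (hjk : j + 1 < k ∨ k + 1 < j) (x y : K) (v : H) :
    T j * (T k * v - x • v) - y • (T k * v - x • v) =
      T k * (T j * v - y • v) - x • (T j * v - y • v) := by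
  simp only [mul_sub, mul_smul_comm, ← mul_assoc, hH.far j k hj hk hjk]
  module

theorem inter_braid (hH : HA t n ℓ κ L T) {j : ℕ} (hj : j + 2 < n) {x y z : K}
    (h : x * y + z * (t - 1 - x - y) = 0) (v v1 v2 v3 w1 w2 w3 : H)
    (e1 : v1 = T j * v - x • v) (e2 : v2 = T (j + 1) * v1 - z • v1)
    (e3 : v3 = T j * v2 - y • v2) (f1 : w1 = T (j + 1) * v - y • v)
    (f2 : w2 = T j * w1 - z • w1) (f3 : w3 = T (j + 1) * w2 - x • w2) : v3 = w3 := by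
  have hb : T j * (T (j + 1) * (T j * v)) = T (j + 1) * (T j * (T (j + 1) * v)) := by
    have : (T j * T (j + 1) * T j) * v = (T (j + 1) * T j * T (j + 1)) * v := by
      rw [hH.braid j hj]
    simpa only [mul_assoc] using this
  have q1 : T j * (T j * v) = (t - 1) • (T j * v) + t • v := by
    rw [← mul_assoc, hH.quad j (by omega), add_mul, smul_mul_assoc, smul_mul_assoc, one_mul]
  have q2 : T (j + 1) * (T (j + 1) * v) = (t - 1) • (T (j + 1) * v) + t • v := by
    rw [← mul_assoc, hH.quad (j + 1) (by omega), add_mul, smul_mul_assoc, smul_mul_assoc, one_mul]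
  have h1 : (x * y + z * (t - 1 - x - y)) • (T j * v) = 0 := by rw [h, zero_smul]
  have h2 : (x * y + z * (t - 1 - x - y)) • (T (j + 1) * v) = 0 := by rw [h, zero_smul]
  subst e3 e2 e1 f3 f2 f1
  simp only [mul_sub, mul_smul_comm, hb, q1, q2]
  linear_combination (norm := module) h2 - h1

/-- descending step for an arbitrary descent -/
theorem eV_step (c : Ctx t n ℓ κ L T st F a) (U : StdTableau ℓ n) : ∀ k, Des k U →
    a k (sw k U) • eV t κ T F a U =
      T k * eV t κ T F a (sw k U) - be t κ k (sw k U) • eV t κ T F a (sw k U) := by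
  induction hm : meas U using Nat.strong_induction_on generalizing U with
  | _ m ih =>
    subst hm
    intro k hk
    obtain ⟨k0, hk0, e⟩ := eV_des (t := t) (κ := κ) (T := T) (F := F) (a := a) ⟨k, hk⟩
    have e0 : a k0 (sw k0 U) • eV t κ T F a U =
      T k0 * eV t κ T F a (sw k0 U) - be t κ k0 (sw k0 U) • eV t κ T F a (sw k0 U) := by
      rw [e, smul_smul, mul_inv_cancel₀ (c.ane hk0.1 (Sw_sw hk0.1 hk0.sw)), one_smul]
    set ev := eV t κ T F a with hev
    by_cases hfar : k0 + 1 < k ∨ k + 1 < k0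
    · -- far case
      have n1 := hk.1
      have n2 := hk0.1
      have s1 := hk.sw
      have s2 := hk0.sw
      obtain ⟨t1, t2⟩ := sw_comm n1 n2 (by omega) s1 s2
      obtain ⟨t3, -⟩ := sw_comm n2 n1 (by omega) s2 s1
      have d1 : Des k0 (sw k U) := ⟨n2, by
        rw [nd_sw_ne n1 s1 (by omega) (by omega) (by omega),
          nd_sw_ne n1 s1 (by omega) (by omega) (by omega)]
        exact hk0.2⟩
      have d2 : Des k (sw k0 U) := ⟨n1, by
        rw [nd_sw_ne n2 s2 (by omega) (by omega) (by omega),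
          nd_sw_ne n2 s2 (by omega) (by omega) (by omega)]
        exact hk.2⟩
      have i1 := ih _ (meas_lt hk) (sw k U) rfl k0 d1
      have i2 := ih _ (meas_lt hk0) (sw k0 U) rfl k d2
      set W := sw k0 (sw k U) with hW
      have w1 : sw k0 W = sw k U := sw_sw n2 t1
      have w2 : sw k W = sw k0 U := by rw [t2]; exact sw_sw n1 t3
      have wk0 : Sw k0 W := Sw_sw n2 t1
      have wk : Sw k W := by rw [t2]; exact Sw_sw n1 t3
      rw [← t2] at i2
      have b1 : be t κ k (sw k U) = be t κ k W := by
        rw [← w1]; unfold be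
        rw [nd_sw_ne n2 wk0 (by omega) (by omega) (by omega),
          nd_sw_ne n2 wk0 (by omega) (by omega) (by omega)]
      have b2 : be t κ k0 (sw k0 U) = be t κ k0 W := by
        rw [← w2]; unfold be
        rw [nd_sw_ne n1 wk (by omega) (by omega) (by omega),
          nd_sw_ne n1 wk (by omega) (by omega) (by omega)]
      have hc := c.afar k k0 W n1 n2 (by omega)
      rw [w1, w2] at hc
      have hfc := inter_far_comm c.ha n1 n2 (by omega) (be t κ k0 W) (be t κ k W) (ev W)
      rw [← i1, ← i2] at hfc
      simp only [mul_smul_comm] at hfc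
      rw [b1]
      rw [b2] at e0
      have hz : a k0 W • (a k (sw k U) • ev U - (T k * ev (sw k U) - be t κ k W • ev (sw k U)))
          = 0 := by
        have q : (a k W * a k0 (sw k0 U)) • ev U = (a k0 W * a k (sw k U)) • ev U := by rw [hc]
        have q' := congrArg (fun x => a k W • x) e0
        linear_combination (norm := module) -q + q' - hfc
      exact sub_eq_zero.1 ((smul_eq_zero.1 hz).resolve_left (c.ane n2 wk0))
    · by_cases hkk : k = k0
      · subst hkk; exact e0
      · have key : ∀ j, Des j U → Des (j + 1) U →
          ∃ P Q : K, P ≠ 0 ∧ Q ≠ 0 ∧ P * a j (sw j U) = Q * a (j + 1) (sw (j + 1) U) ∧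
            P • (T j * ev (sw j U) - be t κ j (sw j U) • ev (sw j U)) =
            Q • (T (j + 1) * ev (sw (j + 1) U) - be t κ (j + 1) (sw (j + 1) U) • ev (sw (j + 1) U)) := by
          intro j hj hj1
          have n1 : j + 1 < n := hj.1
          have n2 : j + 1 + 1 < n := hj1.1
          have c1 := hj.2
          have c2 := hj1.2
          have s1 := hj.sw
          have s1' := hj1.sw
          have z1 : nd (sw j U) j = nd U (j + 1) := nd_sw_left n1 s1
          have z2 : nd (sw j U) (j + 1) = nd U j := nd_sw_right n1 s1
          have z3 : nd (sw j U) (j + 1 + 1) = nd U (j + 1 + 1) :=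
            nd_sw_ne n1 s1 (by omega) (by omega) (by omega)
          have z1' : nd (sw (j + 1) U) j = nd U j :=
            nd_sw_ne n2 s1' (by omega) (by omega) (by omega)
          have z2' : nd (sw (j + 1) U) (j + 1) = nd U (j + 1 + 1) := nd_sw_left n2 s1'
          have z3' : nd (sw (j + 1) U) (j + 1 + 1) = nd U (j + 1) := nd_sw_right n2 s1'
          have d2 : Des (j + 1) (sw j U) := ⟨n2, by rw [z2, z3]; omega⟩
          have d2' : Des j (sw (j + 1) U) := ⟨n1, by rw [z1', z2']; omega⟩
          have s2 := d2.sw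
          have s2' := d2'.sw
          have y1 : nd (sw (j + 1) (sw j U)) j = nd U (j + 1) := by
            rw [nd_sw_ne n2 s2 (by omega) (by omega) (by omega), z1]
          have y2 : nd (sw (j + 1) (sw j U)) (j + 1) = nd U (j + 1 + 1) := by
            rw [nd_sw_left n2 s2, z3]
          have y3 : nd (sw (j + 1) (sw j U)) (j + 1 + 1) = nd U j := by
            rw [nd_sw_right n2 s2, z2]
          have y1' : nd (sw j (sw (j + 1) U)) j = nd U (j + 1 + 1) := by
            rw [nd_sw_left n1 s2', z2']
          have y2' : nd (sw j (sw (j + 1) U)) (j + 1) = nd U j := by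
            rw [nd_sw_right n1 s2', z1']
          have y3' : nd (sw j (sw (j + 1) U)) (j + 1 + 1) = nd U (j + 1) := by
            rw [nd_sw_ne n1 s2' (by omega) (by omega) (by omega), z3']
          have d3 : Des j (sw (j + 1) (sw j U)) := ⟨n1, by rw [y1, y2]; omega⟩
          have d3' : Des (j + 1) (sw j (sw (j + 1) U)) := ⟨n2, by rw [y2', y3']; omega⟩
          have s3 := d3.sw
          have s3' := d3'.sw
          have hW := sw_braid (by omega) s1 s2 s3 s1' s2' s3'
          have i2 := ih _ (meas_lt hj) (sw j U) rfl (j + 1) d2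
          have i2' := ih _ (meas_lt hj1) (sw (j + 1) U) rfl j d2'
          have i3 := ih _ ((meas_lt d2).trans (meas_lt hj)) (sw (j + 1) (sw j U)) rfl j d3
          have i3' := ih _ ((meas_lt d2').trans (meas_lt hj1)) (sw j (sw (j + 1) U)) rfl (j + 1) d3'
          rw [← hW] at i3'
          have sW : Sw j (sw j (sw (j + 1) (sw j U))) := Sw_sw n1 s3
          have sW' : Sw (j + 1) (sw j (sw (j + 1) (sw j U))) := by rw [hW]; exact Sw_sw n2 s3'
          have u1 : sw j (sw j (sw (j + 1) (sw j U))) = sw (j + 1) (sw j U) := sw_sw n1 s3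
          have u1' : sw (j + 1) (sw j (sw (j + 1) (sw j U))) = sw j (sw (j + 1) U) := by
            rw [hW]; exact sw_sw n2 s3'
          have hbr := c.abr j (sw j (sw (j + 1) (sw j U))) (by omega)
          have x1 : nd (sw j (sw (j + 1) (sw j U))) j = nd U (j + 1 + 1) := by
            rw [nd_sw_left n1 s3, y2]
          have x2 : nd (sw j (sw (j + 1) (sw j U))) (j + 1) = nd U (j + 1) := by
            rw [nd_sw_right n1 s3, y1]
          have x3 : nd (sw j (sw (j + 1) (sw j U))) (j + 1 + 1) = nd U j := by
            rw [nd_sw_ne n1 s3 (by omega) (by omega) (by omega), y3]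
          rw [u1, u1', sw_sw n2 s2, sw_sw n1 s2'] at hbr
          simp only [be, x1, x2, x3, y1, y2, y3, y1', y2', y3', z1, z2, z3, z1', z2', z3']
            at i2 i2' i3 i3' ⊢
          generalize sw j (sw (j + 1) (sw j U)) = W at *
          set X1 := sw (j + 1) (sw j U)
          set X2 := sw j (sw (j + 1) U)
          refine ⟨a j W * a (j + 1) X1, a (j + 1) W * a j X2, ?_, ?_, hbr, ?_⟩
          · exact mul_ne_zero (c.ane n1 sW) (c.ane n2 (Sw_sw n2 s2))
          · exact mul_ne_zero (c.ane n2 sW') (c.ane n1 (Sw_sw n1 s2'))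
          · have g1 := ne_adj c.sep U n1
            have g2 := ne_adj c.sep U n2
            have g3 := ne_two c.sep U (k := j) (by omega)
            refine inter_braid c.ha (j := j) (by omega)
              (bb_star t g2.symm g1.symm (a := qc t κ (nd U (j + 1 + 1))) g3.symm)
              (ev W) (a j W • ev X1) ((a j W * a (j + 1) X1) • ev (sw j U)) _
              (a (j + 1) W • ev X2) ((a (j + 1) W * a j X2) • ev (sw (j + 1) U)) _
              i3 ?_ ?_ i3' ?_ ?_
            · rw [mul_smul, i2, mul_smul_comm]; module
            · rw [mul_smul_comm]; module
            · rw [mul_smul, i2', mul_smul_comm]; module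
            · rw [mul_smul_comm]; module
        rcases (by omega : k0 = k + 1 ∨ k = k0 + 1) with h | h
        · subst h
          obtain ⟨P, Q, hP, hQ, h1, h2⟩ := key k hk hk0
          rw [← e0, smul_smul, ← h1, mul_smul] at h2
          exact (smul_right_injective _ hP h2).symm
        · subst h
          obtain ⟨P, Q, hP, hQ, h1, h2⟩ := key k0 hk0 hk
          rw [← e0, smul_smul, h1, mul_smul] at h2
          exact smul_right_injective _ hQ h2

/-- the action of `T_k` on `e_V` -/
theorem eV_T (c : Ctx t n ℓ κ L T st F a) (V : StdTableau ℓ n) {k : ℕ} (hk : k + 1 < n) :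
    T k * eV t κ T F a V = a k V • eV t κ T F a (sw k V) + be t κ k V • eV t κ T F a V := by
  by_cases h : Sw k V
  · rcases Des_or hk h with hd | hd
    · have h1 := eV_step c V k hd
      have h2 := inter_sq c.ha hk (eV t κ T F a (sw k V)) (ne_adj c.sep (sw k V) hk)
      have h3 := c.aa k V hk h
      have e1 : bb t (qc t κ (nd (sw k V) (k + 1))) (qc t κ (nd (sw k V) k)) = be t κ k V := by
        rw [nd_sw_left hk h, nd_sw_right hk h]; rfl
      have e2 : bb t (qc t κ (nd (sw k V) k)) (qc t κ (nd (sw k V) (k + 1))) = be t κ k (sw k V) :=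
        rfl
      rw [e1, e2, ← h1, mul_comm (be t κ k (sw k V)), ← h3, mul_smul_comm] at h2
      have h4 : a k (sw k V) • (T k * eV t κ T F a V - be t κ k V • eV t κ T F a V -
          a k V • eV t κ T F a (sw k V)) = 0 := by
        linear_combination (norm := module) h2
      have h5 := (smul_eq_zero.1 h4).resolve_left (c.ane hk (Sw_sw hk h))
      linear_combination (norm := module) h5
    · have h1 := eV_step c (sw k V) k hd
      rw [sw_sw hk h] at h1
      rw [h1]; module
  · rw [c.a0 k V hk h, zero_smul, zero_add, ← sub_eq_zero]
    have hN : Nxt (nd V k) (nd V (k + 1)) := by_contra h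
    obtain ⟨ε, hε, e⟩ := cont_nxt (κ := κ) hN
    have hp := nd_isPath V
    have w1 := (eV_wt c V).inter c.ha hk le_rfl (ne_adj c.sep V hk)
    refine Spec.pm c.sep (m := k) (by omega) (spec_all c.sep c.ha k (by omega))
      (hp.mono (by omega)) (w := _) ?_ (hp k (by omega)) hε ?_
    · intro i hi
      have := w1 i (by omega)
      rwa [swp_of_ne _ (by omega) (by omega)] at this
    · have := w1 k (by omega)
      rw [swp_left] at this
      rw [← e]
      exact this

end
end Paper

namespace Paper
section
variable {K H : Type*} [Field K] [Ring H] [Algebra K H] {t : K} {n ℓ : ℕ} {κ : ℕ → ℤ}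
    {L T : ℕ → H} {st : H →ₗ[K] H} {F : StdTableau ℓ n → H} {a : ℕ → StdTableau ℓ n → K}

theorem eV_right (c : Ctx t n ℓ κ L T st F a) {U I : StdTableau ℓ n} (hI : ∀ k, ¬ Des k I)
    (hsh : I.shape = U.shape) :
    Wt t κ L (nd I) n (st (eV t κ T F a U)) := by
  induction hm : meas U using Nat.strong_induction_on generalizing U with
  | _ m ih =>
    by_cases h : ∃ k, Des k U
    · obtain ⟨k, hk, e⟩ := eV_des (t := t) (κ := κ) (T := T) (F := F) (a := a) h
      have h1 := ih _ (by rw [← hm]; exact meas_lt hk) (U := Paper.sw k U)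
        (by rw [sw_shape hk.1, hsh]) rfl
      rw [e, map_smul, map_sub, map_smul, c.hs.mul, c.hs.T k hk.1]
      apply Wt.smul
      apply Wt.sub
      · intro j hj
        rw [← mul_assoc, h1 j hj, smul_mul_assoc]
      · exact h1.smul _
    · push Not at h
      have := initial_unique hI h hsh
      subst this
      rw [eV_ini hI, c.Fst]
      exact c.Fw I

theorem eV_mul_F (c : Ctx t n ℓ κ L T st F a) {U I : StdTableau ℓ n} (hI : ∀ k, ¬ Des k I)
    (hsh : I.shape = U.shape) : eV t κ T F a U * F I = eV t κ T F a U := by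
  have h := c.F1 (eV_right c hI hsh)
  have h2 := congrArg st h
  rwa [c.hs.mul, c.hs.invol, c.Fst] at h2

theorem F_FX (c : Ctx t n ℓ κ L T st F a) {k : ℕ} {V : StdTableau ℓ n} (hk : k + 1 < n)
    (hV : Sw k V) : F V * (T k - algebraMap K H (be t κ k V)) =
      (T k - algebraMap K H (be t κ k (sw k V))) * F (sw k V) := by
  have h1 := c.F1 ((c.Fw V).sw c hk hV)
  have h2 := congrArg st h1
  rw [c.hs.mul, map_sub, map_smul, c.hs.mul, c.Fst, c.Fst, c.hs.T k hk] at h2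
  have h3 := c.F1 ((c.Fw (sw k V)).sw c hk (Sw_sw hk hV))
  rw [sw_sw hk hV, mul_sub] at h3
  have hne : V ≠ sw k V := by
    intro e
    have := nd_sw_left hk hV
    rw [← e] at this
    have := (nd_isPath V).inj (by omega) (by omega) this
    omega
  have h0 : F V * F (sw k V) = 0 := c.F0 (c.Fw _) hne
  rw [mul_smul_comm, h0, smul_zero, sub_zero] at h3
  rw [sub_mul, smul_mul_assoc, h0, smul_zero, sub_zero, mul_assoc, h3] at h2
  rw [mul_sub, sub_mul, ← Algebra.commutes, ← Algebra.smul_def, ← Algebra.smul_def, ← h2]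

theorem X_mul (x : H) (b : K) (v : H) : (x - algebraMap K H b) * v = x * v - b • v := by
  rw [sub_mul, Algebra.smul_def]

theorem exists_g (c : Ctx t n ℓ κ L T st F a) : ∀ U : StdTableau ℓ n, ∃ g : K, g ≠ 0 ∧
    (∀ I : StdTableau ℓ n, (∀ k, ¬ Des k I) → I.shape = U.shape →
      st (eV t κ T F a U) * eV t κ T F a U = g • F I) ∧
    eV t κ T F a U * st (eV t κ T F a U) = g • F U ∧ ((∀ k, ¬ Des k U) → g = 1) := by
  intro U
  induction hm : meas U using Nat.strong_induction_on generalizing U with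
  | _ m ih =>
    by_cases h : ∃ k, Des k U
    · obtain ⟨k, hk⟩ := h
      obtain ⟨g, g0, gI, gU, -⟩ := ih _ (by rw [← hm]; exact meas_lt hk) (sw k U) rfl
      have hn : k + 1 < n := hk.1
      have sU : Sw k U := hk.sw
      have hstep := eV_step c U k hk
      have hT := eV_T c U hn
      set ev := eV t κ T F a with hev
      set V := sw k U with hVd
      have sV : Sw k V := Sw_sw hn sU
      have hVU : sw k V = U := sw_sw hn sU
      have aV := c.ane hn sV
      have aU := c.ane hn sU
      have haa := c.aa k V hn sV
      rw [hVU] at haa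
      have hFX := F_FX c hn sV
      rw [hVU] at hFX
      have hne : V ≠ U := by
        intro e
        have h1 := nd_sw_left hn sU
        rw [← hVd, e] at h1
        have := (nd_isPath U).inj (by omega) (by omega) h1
        omega
      have o1 : st (ev V) * ev U = 0 := st_mul_orth c.sep c.hs hne (eV_wt c V) (eV_wt c U)
      have hst : a k V • st (ev U) = st (ev V) * (T k - algebraMap K H (be t κ k V)) := by
        rw [← map_smul, hstep, map_sub, map_smul, c.hs.mul, c.hs.T k hn, mul_sub,
          ← Algebra.commutes, ← Algebra.smul_def]
      refine ⟨g * a k U / a k V, div_ne_zero (mul_ne_zero g0 aU) aV, ?_, ?_, fun h => absurd hk (h k)⟩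
      · intro I hI hsh
        have e1 := gI I hI (by rw [sw_shape hn, hsh])
        have e2 : a k V • (st (ev U) * ev U) = a k U • (st (ev V) * ev V) := by
          rw [← smul_mul_assoc, hst, mul_assoc, X_mul, hT]
          simp only [mul_sub, mul_add, mul_smul_comm, o1, smul_zero, add_zero, sub_zero]
        rw [e1] at e2
        apply_fun (fun x => (a k V)⁻¹ • x) at e2
        simp only [smul_smul, inv_mul_cancel₀ aV, one_smul] at e2
        rw [e2]; congr 1; field_simp
      · have e2 : a k V • a k V • (ev U * st (ev U)) = (g * (a k U * a k V)) • F U := by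
          have : a k V • a k V • (ev U * st (ev U)) = (a k V • ev U) * (a k V • st (ev U)) := by
            rw [smul_mul_assoc, mul_smul_comm]
          rw [this, hst, hstep, ← X_mul, mul_assoc, ← mul_assoc (ev V), gU, smul_mul_assoc, hFX,
            mul_smul_comm, X_mul (T k) (be t κ k U) (F U), X_mul]
          have hq := inter_sq c.ha hn (F U) (ne_adj c.sep U hn)
          rw [← be_sw hn sU, ← hVd] at hq
          change T k * (T k * F U - be t κ k U • F U) - be t κ k V • (T k * F U - be t κ k U • F U) =
            (t + be t κ k U * be t κ k V) • F U at hq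
          rw [hq, mul_comm (be t κ k U), ← haa, smul_smul]
          congr 1; ring
        apply_fun (fun x => (a k V)⁻¹ • (a k V)⁻¹ • x) at e2
        simp only [smul_smul] at e2
        have : (a k V)⁻¹ * ((a k V)⁻¹ * (a k V * a k V)) = 1 := by field_simp
        simp only [mul_assoc, this, one_smul] at e2
        rw [e2]; congr 1; field_simp
    · push Not at h
      refine ⟨1, one_ne_zero, ?_, ?_, fun _ => rfl⟩
      · intro I hI hsh
        have := initial_unique hI h hsh
        subst this
        rw [eV_ini hI, c.Fst, c.F1 (c.Fw I), one_smul]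
      · rw [eV_ini h, c.Fst, c.F1 (c.Fw U), one_smul]

end
end Paper

namespace Paper

/-- Abstract form of the seminormal basis properties. -/
structure SN {K H : Type*} [Field K] [Ring H] [Algebra K H] (t : K) (n ℓ : ℕ) (κ : ℕ → ℤ)
    (L T : ℕ → H) (a : ℕ → StdTableau ℓ n → K) (γ0 : Multipartition ℓ n → K)
    (f : StdTableau ℓ n → StdTableau ℓ n → H) (γ : StdTableau ℓ n → K) : Prop where
  li : LinearIndependent K
      (fun p : {p : StdTableau ℓ n × StdTableau ℓ n // p.1.shape = p.2.shape} => f p.1.1 p.1.2)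
  sp : Submodule.span K (Set.range
      (fun p : {p : StdTableau ℓ n × StdTableau ℓ n // p.1.shape = p.2.shape} =>
        f p.1.1 p.1.2)) = ⊤
  Lr : ∀ S U, S.shape = U.shape → ∀ k, k < n → f S U * L k = qc t κ (nd U k) • f S U
  Ll : ∀ S U, S.shape = U.shape → ∀ k, k < n → L k * f S U = qc t κ (nd S k) • f S U
  Tr : ∀ S U, S.shape = U.shape → ∀ k, k + 1 < n →
    f S U * T k = a k U • f S (sw k U) + be t κ k U • f S U
  Tl : ∀ S U, S.shape = U.shape → ∀ k, k + 1 < n →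
    T k * f S U = a k S • f (sw k S) U + be t κ k S • f S U
  m1 : ∀ S U V, S.shape = U.shape → U.shape = V.shape → f S U * f U V = γ U • f S V
  m0 : ∀ S U U' V, S.shape = U.shape → U'.shape = V.shape → U ≠ U' → f S U * f U' V = 0
  g : ∀ I, (∀ k, ¬ Des k I) → γ I = γ0 I.shape

section
variable {K H : Type*} [Field K] [Ring H] [Algebra K H] {t : K} {n ℓ : ℕ} {κ : ℕ → ℤ}
    {L T : ℕ → H} {st : H →ₗ[K] H} {F : StdTableau ℓ n → H} {a : ℕ → StdTableau ℓ n → K}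

theorem Wt.F_mul (c : Ctx t n ℓ κ L T st F a) {S : StdTableau ℓ n} {h : H}
    (hh : Wt t κ L (nd S) n h) (U : StdTableau ℓ n) : F U * h = if U = S then h else 0 := by
  by_cases e : U = S
  · subst e; rw [if_pos rfl, c.F1 hh]
  · rw [if_neg e, c.F0 hh e]

theorem Wt.mul_F (c : Ctx t n ℓ κ L T st F a) {S : StdTableau ℓ n} {h : H}
    (hh : Wt t κ L (nd S) n (st h)) (U : StdTableau ℓ n) : h * F U = if U = S then h else 0 := by
  have := congrArg st (hh.F_mul c U)
  rw [c.hs.mul, c.Fst, c.hs.invol] at this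
  rw [this]
  split_ifs
  · rw [c.hs.invol]
  · simp

theorem SN.exists (c : Ctx t n ℓ κ L T st F a)
    (gen : ∀ A : Subalgebra K H, (∀ k, k < n → L k ∈ A) → (∀ k, k + 1 < n → T k ∈ A) → A = ⊤)
    (hF : ∀ U, F U ≠ 0) (γ0 : Multipartition ℓ n → K) (hγ0 : ∀ l, γ0 l ≠ 0) :
    ∃ f γ, SN t n ℓ κ L T a γ0 f γ ∧ (∀ U, γ U ≠ 0) ∧
      (∀ I, (∀ k, ¬ Des k I) → f I I = γ0 I.shape • F I) := by
  choose g g0 gI gU g1 using exists_g c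
  have wt := eV_wt c
  have rt := fun U I h1 h2 => eV_right c (U := U) (I := I) h1 h2
  have eT := fun V k hk => eV_T c V (k := k) hk
  have eF := fun U I h1 h2 => eV_mul_F c (U := U) (I := I) h1 h2
  have einI : ∀ I, (∀ k, ¬ Des k I) → eV t κ T F a I = F I := fun I h => eV_ini h
  set e := eV t κ T F a with he
  have orth' : ∀ U U', U ≠ U' → st (e U) * e U' = 0 := fun U U' h =>
    st_mul_orth c.sep c.hs h (wt U) (wt U')
  have eTr : ∀ V k, k + 1 < n → st (e V) * T k = a k V • st (e (sw k V)) + be t κ k V • st (e V) := by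
    intro V k hk
    have := congrArg st (eT V k hk)
    rwa [c.hs.mul, c.hs.T k hk, map_add, map_smul, map_smul] at this
  have eLr : ∀ V k, k < n → st (e V) * L k = qc t κ (nd V k) • st (e V) := by
    intro V k hk
    have := congrArg st (wt V k hk)
    rwa [c.hs.mul, c.hs.L k hk, map_smul] at this
  let f : StdTableau ℓ n → StdTableau ℓ n → H := fun S U => γ0 S.shape • (e S * st (e U))
  have f_def : ∀ S U, f S U = γ0 S.shape • (e S * st (e U)) := fun _ _ => rfl
  have fw : ∀ S U, Wt t κ L (nd S) n (f S U) := fun S U k hk => by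
    rw [f_def, mul_smul_comm, ← mul_assoc, wt S k hk, smul_mul_assoc, smul_comm]
  have fw' : ∀ S U, Wt t κ L (nd U) n (st (f S U)) := fun S U k hk => by
    rw [f_def, map_smul, c.hs.mul, c.hs.invol, mul_smul_comm, ← mul_assoc, wt U k hk,
      smul_mul_assoc, smul_comm]
  have Tl : ∀ S U, S.shape = U.shape → ∀ k, k + 1 < n →
      T k * f S U = a k S • f (sw k S) U + be t κ k S • f S U := by
    intro S U _ k hk
    rw [f_def, f_def, mul_smul_comm, ← mul_assoc, eT S k hk, sw_shape hk, add_mul, smul_mul_assoc,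
      smul_mul_assoc]
    module
  have fne : ∀ S U, S.shape = U.shape → f S U ≠ 0 := by
    intro S U h h0
    obtain ⟨I, h1, h2⟩ := exists_ini S
    have hz : st (e S) * (e S * st (e U)) * e U = 0 := by
      have := (smul_eq_zero.1 h0).resolve_left (hγ0 _)
      rw [this, mul_zero, zero_mul]
    rw [← mul_assoc, mul_assoc, gI S I h2 h1, gI U I h2 (h1.trans h), smul_mul_assoc,
      mul_smul_comm, c.F1 (c.Fw I)] at hz
    rcases smul_eq_zero.1 hz with h3 | h3
    · exact g0 _ h3
    rcases smul_eq_zero.1 h3 with h3 | h3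
    · exact g0 _ h3
    · exact hF _ h3
  refine ⟨f, fun U => γ0 U.shape * g U, ?_, fun U => mul_ne_zero (hγ0 _) (g0 _), ?_⟩
  · constructor
    · rw [linearIndependent_iff']
      rintro s co hco ⟨⟨S, U⟩, hSU⟩ hp
      have h1 : F S * (∑ p ∈ s, co p • f p.1.1 p.1.2) * F U = 0 := by rw [hco]; simp
      rw [Finset.mul_sum, Finset.sum_mul, Finset.sum_eq_single ⟨⟨S, U⟩, hSU⟩] at h1
      · simp only at h1
        rw [mul_smul_comm, smul_mul_assoc, (fw S U).F_mul c, if_pos rfl, (fw' S U).mul_F c,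
          if_pos rfl] at h1
        exact (smul_eq_zero.1 h1).resolve_right (fne _ _ hSU)
      · rintro ⟨⟨S', U'⟩, h'⟩ _ hne
        simp only
        rw [mul_smul_comm, smul_mul_assoc, (fw S' U').F_mul c]
        by_cases e1 : S = S'
        · by_cases e2 : U = U'
          · subst e1; subst e2; exact absurd rfl hne
          · rw [if_pos e1, (fw' S' U').mul_F c, if_neg e2, smul_zero]
        · rw [if_neg e1, zero_mul, smul_zero]
      · intro h; exact absurd hp h
    · set W := Submodule.span K (Set.range
        (fun p : {p : StdTableau ℓ n × StdTableau ℓ n // p.1.shape = p.2.shape} =>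
          f p.1.1 p.1.2)) with hW
      have fW : ∀ S U, S.shape = U.shape → f S U ∈ W := fun S U h =>
        Submodule.subset_span ⟨⟨⟨S, U⟩, h⟩, rfl⟩
      have key : ∀ x : H, (∀ S U, S.shape = U.shape → x * f S U ∈ W) → ∀ w ∈ W, x * w ∈ W := by
        intro x hx w hw
        induction hw using Submodule.span_induction with
        | mem y hy =>
          obtain ⟨p, rfl⟩ := hy
          exact hx _ _ p.2
        | zero => simp
        | add y z _ _ hy hz => rw [mul_add]; exact W.add_mem hy hz
        | smul r y _ hy => rw [mul_smul_comm]; exact W.smul_mem _ hy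
      let A : Subalgebra K H :=
        { carrier := {x | ∀ w ∈ W, x * w ∈ W}
          mul_mem' := fun {x y} hx hy w hw => by rw [mul_assoc]; exact hx _ (hy _ hw)
          add_mem' := fun {x y} hx hy w hw => by rw [add_mul]; exact W.add_mem (hx _ hw) (hy _ hw)
          algebraMap_mem' := fun r w hw => by rw [← Algebra.smul_def]; exact W.smul_mem _ hw }
      have hA : A = ⊤ := by
        apply gen
        · intro k hk
          refine key _ fun S U h => ?_
          rw [fw S U k hk]; exact W.smul_mem _ (fW _ _ h)
        · intro k hk
          refine key _ fun S U h => ?_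
          rw [Tl S U h k hk]
          exact W.add_mem (W.smul_mem _ (fW _ _ (by rw [sw_shape hk, h]))) (W.smul_mem _ (fW _ _ h))
      have h1 : (1 : H) ∈ W := by
        rw [← c.Fsum]
        refine W.sum_mem fun S _ => ?_
        have : F S = ((g S)⁻¹ * (γ0 S.shape)⁻¹) • f S S := by
          rw [f_def, gU, smul_smul, smul_smul]
          have : (g S)⁻¹ * (γ0 S.shape)⁻¹ * γ0 S.shape * g S = 1 := by
            have := g0 S
            have := hγ0 S.shape
            field_simp
          rw [this, one_smul]
        rw [this]
        exact W.smul_mem _ (fW _ _ rfl)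
      rw [eq_top_iff]
      intro x _
      have hx : x ∈ A := by rw [hA]; trivial
      have := hx 1 h1
      rwa [mul_one] at this
    · intro S U _ k hk
      rw [f_def, smul_mul_assoc, mul_assoc, eLr U k hk, mul_smul_comm, smul_comm]
    · intro S U _ k hk
      exact fw S U k hk
    · intro S U _ k hk
      rw [f_def, f_def, smul_mul_assoc, mul_assoc, eTr U k hk, mul_add, mul_smul_comm,
        mul_smul_comm]
      module
    · exact Tl
    · intro S U V h1 h2
      obtain ⟨I, h3, h4⟩ := exists_ini U
      have : e S * st (e U) * (e U * st (e V)) = g U • (e S * st (e V)) := by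
        rw [mul_assoc, ← mul_assoc (st (e U)), gI U I h4 h3, smul_mul_assoc, mul_smul_comm,
          ← mul_assoc, eF S I h4 (h3.trans h1.symm)]
      rw [f_def, f_def, f_def, smul_mul_assoc, mul_smul_comm, this, smul_smul, smul_smul,
        smul_smul, h1]
      congr 1; ring
    · intro S U U' V _ _ hne
      rw [f_def, f_def, smul_mul_assoc, mul_smul_comm, mul_assoc, ← mul_assoc (st (e U)),
        orth' _ _ hne, zero_mul, mul_zero, smul_zero, smul_zero]
    · intro I hI
      rw [g1 I hI, mul_one]
  · intro I hI
    rw [f_def, gU, g1 I hI, one_smul]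

theorem SN.unique (c : Ctx t n ℓ κ L T st F a) {γ0 : Multipartition ℓ n → K}
    (hγ0 : ∀ l, γ0 l ≠ 0) {f f' : StdTableau ℓ n → StdTableau ℓ n → H} {γ γ' : StdTableau ℓ n → K}
    (h : SN t n ℓ κ L T a γ0 f γ) (h' : SN t n ℓ κ L T a γ0 f' γ') (S U : StdTableau ℓ n)
    (hSU : S.shape = U.shape) : f' S U = f S U := by
  have wts : ∀ {f γ}, SN t n ℓ κ L T a γ0 f γ → ∀ S U, S.shape = U.shape →
      Wt t κ L (nd S) n (f S U) ∧ Wt t κ L (nd U) n (st (f S U)) := by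
    intro f γ h S U hSU
    refine ⟨fun k hk => h.Ll S U hSU k hk, fun k hk => ?_⟩
    have := congrArg st (h.Lr S U hSU k hk)
    rwa [c.hs.mul, c.hs.L k hk, map_smul] at this
  have hI : ∀ I, (∀ k, ¬ Des k I) → f' I I = f I I := by
    intro I hI
    have h1 : F I * f' I I * F I ∈ Submodule.span K {f I I} := by
      generalize f' I I = z
      have : z ∈ Submodule.span K (Set.range
        (fun p : {p : StdTableau ℓ n × StdTableau ℓ n // p.1.shape = p.2.shape} =>
          f p.1.1 p.1.2)) := by rw [h.sp]; trivial
      induction this using Submodule.span_induction with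
      | mem y hy =>
        obtain ⟨⟨⟨S, U⟩, hSU⟩, rfl⟩ := hy
        simp only
        rw [(wts h S U hSU).1.F_mul c]
        by_cases e1 : I = S
        · rw [if_pos e1, (wts h S U hSU).2.mul_F c]
          by_cases e2 : I = U
          · rw [if_pos e2]; subst e1; subst e2
            exact Submodule.mem_span_singleton_self _
          · rw [if_neg e2]; exact Submodule.zero_mem _
        · rw [if_neg e1, zero_mul]; exact Submodule.zero_mem _
      | zero => simp
      | add y z _ _ hy hz => rw [mul_add, add_mul]; exact Submodule.add_mem _ hy hz
      | smul r y _ hy => rw [mul_smul_comm, smul_mul_assoc]; exact Submodule.smul_mem _ _ hy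
    rw [(wts h' I I rfl).1.F_mul c, if_pos rfl, (wts h' I I rfl).2.mul_F c, if_pos rfl,
      Submodule.mem_span_singleton] at h1
    obtain ⟨x, hx⟩ := h1
    have n1 : f I I ≠ 0 := h.li.ne_zero ⟨⟨I, I⟩, rfl⟩
    have n2 : f' I I ≠ 0 := h'.li.ne_zero ⟨⟨I, I⟩, rfl⟩
    have e1 := h.m1 I I I rfl rfl
    have e2 := h'.m1 I I I rfl rfl
    rw [h.g I hI] at e1
    rw [h'.g I hI, ← hx, smul_mul_assoc, mul_smul_comm, e1] at e2
    have x0 : x ≠ 0 := by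
      rintro rfl
      rw [zero_smul] at hx
      exact n2 hx.symm
    have e3 : (x * x * γ0 I.shape - γ0 I.shape * x) • f I I = 0 := by
      rw [sub_smul, sub_eq_zero, mul_smul, mul_smul, mul_smul]; exact e2
    have e4 := (smul_eq_zero.1 e3).resolve_right n1
    have e5 : (x * γ0 I.shape) * (x - 1) = 0 := by linear_combination e4
    have e6 := (mul_eq_zero.1 e5).resolve_left (mul_ne_zero x0 (hγ0 _))
    rw [← hx, sub_eq_zero.1 e6, one_smul]
  have hl : ∀ I, (∀ k, ¬ Des k I) → ∀ S, S.shape = I.shape → f' S I = f S I := by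
    intro I hdI S
    induction hm : meas S using Nat.strong_induction_on generalizing S with
    | _ m ih =>
      intro hS
      by_cases hd : ∃ k, Des k S
      · obtain ⟨k, hk⟩ := hd
        have hs : (sw k S).shape = I.shape := by rw [sw_shape hk.1, hS]
        have e1 := ih _ (by rw [← hm]; exact meas_lt hk) (sw k S) rfl hs
        have e2 := h.Tl (sw k S) I hs k hk.1
        have e3 := h'.Tl (sw k S) I hs k hk.1
        rw [sw_sw hk.1 hk.sw] at e2 e3
        rw [e1, e2] at e3
        exact (smul_right_injective H (c.ane hk.1 (Sw_sw hk.1 hk.sw)) (add_right_cancel e3)).symm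
      · push Not at hd
        have := initial_unique hd hdI hS
        subst this
        exact hI _ hd
  induction hm : meas U using Nat.strong_induction_on generalizing U with
  | _ m ih =>
    by_cases hd : ∃ k, Des k U
    · obtain ⟨k, hk⟩ := hd
      have hs : S.shape = (sw k U).shape := by rw [sw_shape hk.1, hSU]
      have e1 := ih _ (by rw [← hm]; exact meas_lt hk) (sw k U) hs rfl
      have e2 := h.Tr S (sw k U) hs k hk.1
      have e3 := h'.Tr S (sw k U) hs k hk.1
      rw [sw_sw hk.1 hk.sw] at e2 e3
      rw [e1, e2] at e3
      exact (smul_right_injective H (c.ane hk.1 (Sw_sw hk.1 hk.sw)) (add_right_cancel e3)).symm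
    · push Not at hd
      exact hl U hd S hSU

end
end Paper

namespace Paper
section

theorem list_prod_aeval {K H : Type*} [Field K] [Ring H] [Algebra K H] (x : H) (ℓ : ℕ)
    (q : ℕ → K) :
    Polynomial.aeval x (∏ l ∈ Finset.range ℓ, (Polynomial.X - Polynomial.C (q l))) =
      ((List.range ℓ).map fun l => x - algebraMap K H (q l)).prod := by
  have : (∏ l ∈ Finset.range ℓ, (Polynomial.X - Polynomial.C (q l))) =
      ((List.range ℓ).map fun l => (Polynomial.X - Polynomial.C (q l))).prod := by
    rw [Finset.prod_eq_multiset_prod, Finset.range_val, ← Multiset.coe_range, Multiset.map_coe,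
      Multiset.prod_coe]
  rw [this, map_list_prod, List.map_map]
  congr 1
  refine List.map_congr_left fun l _ => ?_
  simp

theorem aeval_op {K H : Type*} [Field K] [Ring H] [Algebra K H] (x : H) (p : Polynomial K) :
    Polynomial.aeval (MulOpposite.op x) p = MulOpposite.op (Polynomial.aeval x p) := by
  induction p using Polynomial.induction_on' with
  | add p q hp hq => rw [map_add, map_add, hp, hq, MulOpposite.op_add]
  | monomial k a =>
    rw [Polynomial.aeval_monomial, Polynomial.aeval_monomial, ← Algebra.smul_def,
      ← Algebra.smul_def, MulOpposite.op_smul, MulOpposite.op_pow]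

/-- `TL'` follows from `quad` and `LT`. -/
theorem TL'_of {K H : Type*} [Field K] [Ring H] [Algebra K H] {t : K} (ht : t ≠ 0) {l l' T : H}
    (quad : T * T = (t - 1) • T + t • (1 : H)) (LT : l' * T = T * l + 1 + (t - 1) • l') :
    T * l' = l * T + 1 + (t - 1) • l' := by
  -- multiply LT on the left and the right by T
  have h1 : T * (l' * T) * T = T * (T * l + 1 + (t - 1) • l') * T := by rw [LT]
  have e1 : T * (l' * T) * T = (t - 1) • (T * l' * T) + t • (T * l') := by
    calc T * (l' * T) * T = T * l' * (T * T) := by noncomm_ring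
      _ = _ := by rw [quad, mul_add, mul_smul_comm, mul_smul_comm, mul_one]
  have e2 : T * (T * l + 1 + (t - 1) • l') * T =
      ((t - 1) • (T * l * T) + t • (l * T)) + ((t - 1) • T + t • (1 : H)) +
        (t - 1) • (T * l' * T) := by
    calc T * (T * l + 1 + (t - 1) • l') * T
        = (T * T) * l * T + T * T + (t - 1) • (T * l' * T) := by
          rw [mul_add, mul_add, add_mul, add_mul, mul_smul_comm, smul_mul_assoc, mul_one,
            mul_assoc T T l]
      _ = _ := by
          rw [quad]
          simp only [add_mul, smul_mul_assoc, one_mul]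
  rw [e1, e2] at h1
  have e3 : l' * T * T = (T * l + 1 + (t - 1) • l') * T := by rw [LT]
  rw [mul_assoc, quad, add_mul, add_mul, one_mul, smul_mul_assoc, mul_add, mul_smul_comm,
    mul_smul_comm, mul_one] at e3
  have e4 : t • (T * l' - (l * T + 1 + (t - 1) • l')) = 0 := by
    linear_combination (norm := module) h1 - (t - 1) • e3
  exact sub_eq_zero.1 ((smul_eq_zero.1 e4).resolve_left ht)

theorem HA.op {K H : Type*} [Field K] [Ring H] [Algebra K H] {t : K} {n ℓ : ℕ} {κ : ℕ → ℤ}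
    {L T : ℕ → H} (h : HA t n ℓ κ L T) :
    HA t n ℓ κ (fun k => MulOpposite.op (L k)) (fun k => MulOpposite.op (T k)) where
  LL j k hj hk := by rw [← MulOpposite.op_mul, ← MulOpposite.op_mul, h.LL j k hj hk]
  quad k hk := by rw [← MulOpposite.op_mul, h.quad k hk]; simp
  far j k hj hk hjk := by rw [← MulOpposite.op_mul, ← MulOpposite.op_mul, h.far j k hj hk hjk]
  braid k hk := by
    simp only [← MulOpposite.op_mul, ← mul_assoc]
    rw [h.braid k hk]
  TL k j hk hj h1 h2 := by
    rw [← MulOpposite.op_mul, ← MulOpposite.op_mul, h.TL k j hk hj h1 h2]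
  LT k hk := by
    rw [← MulOpposite.op_mul, ← MulOpposite.op_mul, h.TL' k hk]; simp
  TL' k hk := by
    rw [← MulOpposite.op_mul, ← MulOpposite.op_mul, h.LT k hk]; simp
  cyc hn := by rw [aeval_op, h.cyc hn, MulOpposite.op_zero]

variable (K : Type) [Field K] (t : Kˣ) (n ℓ : ℕ) (κ : ℕ → ℤ)

noncomputable def hLL (k : ℕ) : CycHecke K t n ℓ κ :=
  if h : k < n then Lgen K t n ℓ κ ⟨k, h⟩ else 0

noncomputable def hTT (k : ℕ) : CycHecke K t n ℓ κ :=
  if h : k < n - 1 then Tgen K t n ℓ κ ⟨k, h⟩ else 0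

theorem hLL_eq {k : ℕ} (h : k < n) : hLL K t n ℓ κ k = Lgen K t n ℓ κ ⟨k, h⟩ := dif_pos h
theorem hTT_eq {k : ℕ} (h : k < n - 1) : hTT K t n ℓ κ k = Tgen K t n ℓ κ ⟨k, h⟩ := dif_pos h

theorem hecke_rel {x y : FreeAlgebra K (HeckeGen n)} (h : HeckeRel K t n ℓ κ x y) :
    RingQuot.mkAlgHom K (HeckeRel K t n ℓ κ) x = RingQuot.mkAlgHom K (HeckeRel K t n ℓ κ) y :=
  RingQuot.mkAlgHom_rel K h

theorem hecke_HA : HA (t : K) n ℓ κ (hLL K t n ℓ κ) (hTT K t n ℓ κ) := by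
  have quad : ∀ k, k + 1 < n → hTT K t n ℓ κ k * hTT K t n ℓ κ k =
      ((t : K) - 1) • hTT K t n ℓ κ k + (t : K) • (1 : CycHecke K t n ℓ κ) := by
    intro k hk
    rw [hTT_eq K t n ℓ κ (by omega : k < n - 1)]
    have := hecke_rel K t n ℓ κ (HeckeRel.quad ⟨k, by omega⟩)
    simp only [map_mul, map_add, map_sub, map_one, map_zero, AlgHom.commutes] at this
    change (Tgen K t n ℓ κ _ + 1) * (Tgen K t n ℓ κ _ - _) = 0 at this
    rw [add_mul, mul_sub, one_mul, ← Algebra.commutes, ← Algebra.smul_def,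
      Algebra.algebraMap_eq_smul_one] at this
    linear_combination (norm := module) this
  have LT : ∀ k, k + 1 < n → hLL K t n ℓ κ (k + 1) * hTT K t n ℓ κ k =
      hTT K t n ℓ κ k * hLL K t n ℓ κ k + 1 + ((t : K) - 1) • hLL K t n ℓ κ (k + 1) := by
    intro k hk
    rw [hTT_eq K t n ℓ κ (by omega : k < n - 1), hLL_eq K t n ℓ κ hk,
      hLL_eq K t n ℓ κ (by omega : k < n)]
    have := hecke_rel K t n ℓ κ (HeckeRel.LT ⟨k, by omega⟩)
    simp only [map_mul, map_add, map_sub, map_one, AlgHom.commutes] at this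
    change Lgen K t n ℓ κ ⟨k + 1, hk⟩ * (Tgen K t n ℓ κ _ - _ + 1) =
      Tgen K t n ℓ κ _ * Lgen K t n ℓ κ ⟨k, _⟩ + 1 at this
    rw [mul_add, mul_sub, mul_one, ← Algebra.commutes, ← Algebra.smul_def] at this
    linear_combination (norm := module) this
  refine ⟨?_, quad, ?_, ?_, ?_, LT, ?_, ?_⟩
  · intro j k hj hk
    rw [hLL_eq K t n ℓ κ hj, hLL_eq K t n ℓ κ hk]
    have := hecke_rel K t n ℓ κ (HeckeRel.LL ⟨j, hj⟩ ⟨k, hk⟩)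
    simp only [map_mul] at this
    exact this
  · intro j k hj hk hjk
    rw [hTT_eq K t n ℓ κ (by omega : j < n - 1), hTT_eq K t n ℓ κ (by omega : k < n - 1)]
    have := hecke_rel K t n ℓ κ (HeckeRel.TTfar ⟨j, by omega⟩ ⟨k, by omega⟩ hjk)
    simp only [map_mul] at this
    exact this
  · intro k hk
    rw [hTT_eq K t n ℓ κ (by omega : k < n - 1), hTT_eq K t n ℓ κ (by omega : k + 1 < n - 1)]
    have := hecke_rel K t n ℓ κ (HeckeRel.braid ⟨k, by omega⟩ ⟨k + 1, by omega⟩ rfl)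
    simp only [map_mul] at this
    exact this
  · intro k j hk hj h1 h2
    rw [hTT_eq K t n ℓ κ (by omega : k < n - 1), hLL_eq K t n ℓ κ hj]
    have := hecke_rel K t n ℓ κ (HeckeRel.TL ⟨k, by omega⟩ ⟨j, hj⟩ ⟨h1, h2⟩)
    simp only [map_mul] at this
    exact this
  · intro k hk
    exact TL'_of t.ne_zero (quad k hk) (LT k hk)
  · intro hn
    rw [list_prod_aeval, hLL_eq K t n ℓ κ hn]
    have := hecke_rel K t n ℓ κ (HeckeRel.cyc hn)
    rw [map_list_prod, List.map_map, map_zero] at this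
    rw [← this]
    congr 1
    refine List.map_congr_left fun l _ => ?_
    simp only [Function.comp, map_sub, AlgHom.commutes, qintU_eq]
    rfl

variable {K t n ℓ κ}

theorem hecke_lift {B : Type*} [Ring B] [Algebra K B] {L T : ℕ → B}
    (h : HA (t : K) n ℓ κ L T) : ∃ φ : CycHecke K t n ℓ κ →ₐ[K] B,
      (∀ k, k < n → φ (hLL K t n ℓ κ k) = L k) ∧ (∀ k, k + 1 < n → φ (hTT K t n ℓ κ k) = T k) := by
  let φ0 : FreeAlgebra K (HeckeGen n) →ₐ[K] B := FreeAlgebra.lift K fun x =>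
    match x with
    | HeckeGen.L k => L k.1
    | HeckeGen.T k => T k.1
  have pL' : ∀ k : Fin n, φ0 (hL K k) = L k.1 := fun k => by
    simp only [φ0, hL, FreeAlgebra.lift_ι_apply]
  have pT' : ∀ k : Fin (n - 1), φ0 (hT K k) = T k.1 := fun k => by
    simp only [φ0, hT, FreeAlgebra.lift_ι_apply]
  have hrel : ∀ ⦃x y⦄, HeckeRel K t n ℓ κ x y → φ0 x = φ0 y := by
    intro x y hxy
    cases hxy with
    | cyc hn =>
      rw [map_list_prod, List.map_map, map_zero, ← h.cyc hn, list_prod_aeval]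
      congr 1
      refine List.map_congr_left fun l _ => ?_
      simp only [Function.comp, map_sub, AlgHom.commutes, qintU_eq, pL']
    | quad r =>
      simp only [map_mul, map_add, map_sub, map_one, map_zero, AlgHom.commutes, pT']
      have := h.quad r.1 (by omega)
      rw [add_mul, mul_sub, one_mul, ← Algebra.commutes, ← Algebra.smul_def,
        Algebra.algebraMap_eq_smul_one, this]
      module
    | LL k m => simp only [map_mul, pL']; exact h.LL _ _ k.2 m.2
    | TTfar r s hh => simp only [map_mul, pT']; exact h.far _ _ (by omega) (by omega) hh
    | braid r s hh =>
      simp only [map_mul, pT', hh]; exact h.braid _ (by omega)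
    | TL r k hh => simp only [map_mul, pT', pL']; exact h.TL _ _ (by omega) k.2 hh.1 hh.2
    | LT r =>
      simp only [map_mul, map_add, map_sub, map_one, AlgHom.commutes, pT', pL']
      have := h.LT r.1 (by omega)
      change L (r.1 + 1) * _ = T r.1 * L r.1 + 1
      rw [mul_add, mul_sub, mul_one, ← Algebra.commutes, ← Algebra.smul_def, this]
      module
  refine ⟨RingQuot.liftAlgHom K ⟨φ0, hrel⟩, ?_, ?_⟩
  · intro k hk
    rw [hLL_eq K t n ℓ κ hk, Lgen, RingQuot.liftAlgHom_mkAlgHom_apply, pL']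
  · intro k hk
    rw [hTT_eq K t n ℓ κ (by omega : k < n - 1), Tgen, RingQuot.liftAlgHom_mkAlgHom_apply, pT']

theorem hecke_gen (A : Subalgebra K (CycHecke K t n ℓ κ))
    (h1 : ∀ k, k < n → hLL K t n ℓ κ k ∈ A) (h2 : ∀ k, k + 1 < n → hTT K t n ℓ κ k ∈ A) : A = ⊤ := by
  rw [eq_top_iff]
  intro x _
  obtain ⟨y, rfl⟩ := RingQuot.mkAlgHom_surjective K (HeckeRel K t n ℓ κ) x
  induction y using FreeAlgebra.induction with
  | grade0 r => rw [AlgHom.commutes]; exact A.algebraMap_mem r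
  | grade1 g =>
    cases g with
    | L k => have := h1 k.1 k.2; rw [hLL_eq] at this; exact this
    | T k => have := h2 k.1 (by omega); rw [hTT_eq K t n ℓ κ k.2] at this; exact this
  | mul a b ha hb => rw [map_mul]; exact A.mul_mem (ha trivial) (hb trivial)
  | add a b ha hb => rw [map_add]; exact A.add_mem (ha trivial) (hb trivial)

theorem hecke_HS : ∃ st : CycHecke K t n ℓ κ →ₗ[K] CycHecke K t n ℓ κ,
    HS n (hLL K t n ℓ κ) (hTT K t n ℓ κ) st := by
  obtain ⟨φ, hL, hT⟩ := hecke_lift (hecke_HA K t n ℓ κ).op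
  refine ⟨(MulOpposite.opLinearEquiv K).symm.toLinearMap ∘ₗ φ.toLinearMap, ?_⟩
  have ev : ∀ x, ((MulOpposite.opLinearEquiv K).symm.toLinearMap ∘ₗ φ.toLinearMap) x =
    MulOpposite.unop (φ x) := fun _ => rfl
  refine ⟨?_, ?_, ?_, ?_, ?_⟩
  · intro a b; simp only [ev, map_mul, MulOpposite.unop_mul]
  · simp only [ev, map_one, MulOpposite.unop_one]
  · intro a
    simp only [ev]
    let A : Subalgebra K (CycHecke K t n ℓ κ) :=
      { carrier := {a | MulOpposite.unop (φ (MulOpposite.unop (φ a))) = a}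
        mul_mem' := fun {x y} hx hy => by
          simp only [Set.mem_setOf_eq] at *
          rw [map_mul, MulOpposite.unop_mul, map_mul, MulOpposite.unop_mul, hx, hy]
        add_mem' := fun {x y} hx hy => by
          simp only [Set.mem_setOf_eq] at *
          rw [map_add, MulOpposite.unop_add, map_add, MulOpposite.unop_add, hx, hy]
        algebraMap_mem' := fun r => by
          simp only [Set.mem_setOf_eq, AlgHom.commutes, MulOpposite.algebraMap_apply,
            MulOpposite.unop_op] }
    have hA : A = ⊤ := by
      apply hecke_gen
      · intro k hk
        change MulOpposite.unop (φ (MulOpposite.unop (φ _))) = _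
        rw [hL k hk, MulOpposite.unop_op, hL k hk, MulOpposite.unop_op]
      · intro k hk
        change MulOpposite.unop (φ (MulOpposite.unop (φ _))) = _
        rw [hT k hk, MulOpposite.unop_op, hT k hk, MulOpposite.unop_op]
    have : a ∈ A := by rw [hA]; trivial
    exact this
  · intro k hk; rw [ev, hL k hk, MulOpposite.unop_op]
  · intro k hk; rw [ev, hT k hk, MulOpposite.unop_op]

end
end Paper

namespace Paper

/-- the coefficient conditions -/
structure CS {K : Type*} [Field K] (t : K) (n ℓ : ℕ) (κ : ℕ → ℤ)
    (a : ℕ → StdTableau ℓ n → K) : Prop where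
  a0 : ∀ k S, k + 1 < n → ¬ Sw k S → a k S = 0
  aa : ∀ k S, k + 1 < n → Sw k S → a k S * a k (sw k S) =
    t + be t κ k S * be t κ k (sw k S)
  afar : ∀ j k S, j + 1 < n → k + 1 < n → (j + 1 < k ∨ k + 1 < j) →
    a j S * a k (sw j S) = a k S * a j (sw k S)
  abr : ∀ k S, k + 2 < n → a k S * a (k + 1) (sw k S) * a k (sw (k + 1) (sw k S)) =
    a (k + 1) S * a k (sw (k + 1) S) * a (k + 1) (sw k (sw (k + 1) S))

section
variable {K : Type*} [Field K] {t : K} {n ℓ : ℕ} {κ : ℕ → ℤ} {a : ℕ → StdTableau ℓ n → K}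

theorem be_nxt (hs : Sep t n ℓ κ) {k : ℕ} {S : StdTableau ℓ n} (hk : k + 1 < n) (h : ¬ Sw k S) :
    t + be t κ k S * (t - 1 - be t κ k S) = 0 := by
  have hne := ne_adj hs S hk
  have h1 := bb_bb t hne
  have h2 : bb t (qc t κ (nd S (k + 1))) (qc t κ (nd S k)) = t - 1 - be t κ k S := by
    rw [← bb_add t hne, be]; ring
  rw [h2] at h1
  rw [show be t κ k S = bb t (qc t κ (nd S k)) (qc t κ (nd S (k + 1))) from rfl] at *
  rw [h1]
  have hN : Nxt (nd S k) (nd S (k + 1)) := by_contra h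
  rcases hN with e | e
  · have : qc t κ (nd S (k + 1)) = t * qc t κ (nd S k) + 1 := by
      rw [qc, qc, ← qint_plus hs.ne, e]; congr 1; simp only [cont]; push_cast; ring
    rw [this]; simp
  · have : qc t κ (nd S k) = t * qc t κ (nd S (k + 1)) + 1 := by
      rw [qc, qc, ← qint_plus hs.ne, e]; congr 1; simp only [cont]; push_cast; ring
    rw [this]; simp

theorem be_sw' (hs : Sep t n ℓ κ) {k : ℕ} {S : StdTableau ℓ n} (hk : k + 1 < n) (h : Sw k S) :
    be t κ k (sw k S) = t - 1 - be t κ k S := by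
  rw [be_sw hk h, ← bb_add t (ne_adj hs S hk), be]; ring

theorem CS.aa' (hs : Sep t n ℓ κ) (c : CS t n ℓ κ a) {k : ℕ} (S : StdTableau ℓ n) (hk : k + 1 < n) :
    a k S * a k (sw k S) = t + be t κ k S * (t - 1 - be t κ k S) := by
  by_cases h : Sw k S
  · rw [c.aa k S hk h, be_sw' hs hk h]
  · rw [be_nxt hs hk h, c.a0 k S hk h, zero_mul]

theorem be_far {j k : ℕ} {S : StdTableau ℓ n} (hj : j + 1 < n) (hk : k + 1 < n)
    (hjk : j + 1 < k ∨ k + 1 < j) : be t κ j (sw k S) = be t κ j S := by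
  by_cases h : Sw k S
  · rw [be, be, nd_sw_ne hk h (by omega) (by omega) (by omega),
      nd_sw_ne hk h (by omega) (by omega) (by omega)]
  · rw [sw_of_not hk h]

theorem Sw_far {j k : ℕ} {S : StdTableau ℓ n} (hj : j + 1 < n) (hk : k + 1 < n)
    (hjk : j + 1 < k ∨ k + 1 < j) : Sw j (sw k S) ↔ Sw j S := by
  by_cases h : Sw k S
  · rw [Sw, Sw, nd_sw_ne hk h (by omega) (by omega) (by omega),
      nd_sw_ne hk h (by omega) (by omega) (by omega)]
  · rw [sw_of_not hk h]

variable {M : Type*} [AddCommGroup M] [Module K M]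

theorem rep_HA (hs : Sep t n ℓ κ) (c : CS t n ℓ κ a) (v : StdTableau ℓ n → M)
    (ext : ∀ f g : Module.End K M, (∀ S, f (v S) = g (v S)) → f = g)
    (L T : ℕ → Module.End K M)
    (hL : ∀ k S, L k (v S) = qc t κ (nd S k) • v S)
    (hT : ∀ k S, T k (v S) = a k S • v (sw k S) + be t κ k S • v S) : HA t n ℓ κ L T := by
  have aL : ∀ k, k + 1 < n → ∀ j S, a k S • L j (v (sw k S)) =
      (a k S * qc t κ (nd (sw k S) j)) • v (sw k S) := by
    intro k _ j S; rw [hL, smul_smul]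
  have quad : ∀ k, k + 1 < n → T k * T k = (t - 1) • T k + t • (1 : Module.End K M) := by
    intro k hk
    refine ext _ _ fun S => ?_
    simp only [Module.End.mul_apply, LinearMap.add_apply, LinearMap.smul_apply,
      Module.End.one_apply, hT, map_add, map_smul]
    have h1 := congrArg (fun x => x • v S) (c.aa' hs S hk)
    by_cases h : Sw k S
    · rw [sw_sw hk h, be_sw' hs hk h]
      linear_combination (norm := module) h1
    · have h0 := c.a0 k S hk h
      simp only [h0, zero_mul, zero_smul] at h1 ⊢
      linear_combination (norm := module) h1
  have LT : ∀ k, k + 1 < n → L (k + 1) * T k = T k * L k + 1 + (t - 1) • L (k + 1) := by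
    intro k hk
    refine ext _ _ fun S => ?_
    simp only [Module.End.mul_apply, LinearMap.add_apply, LinearMap.smul_apply,
      Module.End.one_apply, hT, hL, map_add, map_smul]
    have hb : be t κ k S * _ = _ := bb_mul t (ne_adj hs S hk)
    have h1 := congrArg (fun x => x • v S) hb
    have h2 : a k S • qc t κ (nd (sw k S) (k + 1)) • v (sw k S) =
        a k S • qc t κ (nd S k) • v (sw k S) := by
      by_cases h : Sw k S
      · rw [nd_sw_right hk h]
      · rw [c.a0 k S hk h, zero_smul, zero_smul]
    linear_combination (norm := module) h1 + h2
  refine ⟨?_, quad, ?_, ?_, ?_, LT, ?_, ?_⟩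
  · intro j k _ _
    refine ext _ _ fun S => ?_
    simp only [Module.End.mul_apply, hL, map_smul]
    module
  · intro j k hj hk hjk
    refine ext _ _ fun S => ?_
    simp only [Module.End.mul_apply, hT, map_add, map_smul]
    rw [be_far hj hk hjk, be_far hk hj hjk.symm]
    have h1 : (a j S * a k (sw j S)) • v (sw k (sw j S)) =
        (a k S * a j (sw k S)) • v (sw j (sw k S)) := by
      rw [c.afar j k S hj hk hjk]
      by_cases h : Sw j S
      · by_cases h' : Sw k S
        · rw [(sw_comm hj hk hjk h h').2]
        · rw [c.a0 k S hk h']; simp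
      · rw [c.a0 j (sw k S) hj (by rwa [Sw_far hj hk hjk])]; simp
    linear_combination (norm := module) -h1
  · intro k hk
    have k1 : k + 1 < n := by omega
    have k2 : k + 1 + 1 < n := by omega
    refine ext _ _ fun S => ?_
    simp only [Module.End.mul_apply]
    set x := be t κ k S with hx
    set y := be t κ (k + 1) S with hy
    set z := bb t (qc t κ (nd S k)) (qc t κ (nd S (k + 1 + 1))) with hz
    have star : x * y + z * (t - 1 - x - y) = 0 :=
      bb_star t (ne_adj hs S k1) (ne_adj hs S k2) (ne_two hs S hk)
    set p := a k S with hp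
    set q := a (k + 1) S with hq
    set S0 := sw k S with hS0
    set S1 := sw (k + 1) S with hS1
    set S01 := sw (k + 1) S0 with hS01
    set S10 := sw k S1 with hS10
    have h0 : T k (v S) = p • v S0 + x • v S := hT k S
    have h1 : T (k + 1) (v S) = q • v S1 + y • v S := hT (k + 1) S
    have w0 : p = 0 ∨ Sw k S := by
      by_cases h : Sw k S
      · exact Or.inr h
      · exact Or.inl (c.a0 k S k1 h)
    have w1 : q = 0 ∨ Sw (k + 1) S := by
      by_cases h : Sw (k + 1) S
      · exact Or.inr h
      · exact Or.inl (c.a0 (k + 1) S k2 h)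
    have w01 : a (k + 1) S0 = 0 ∨ Sw (k + 1) S0 := by
      by_cases h : Sw (k + 1) S0
      · exact Or.inr h
      · exact Or.inl (c.a0 (k + 1) S0 k2 h)
    have w10 : a k S1 = 0 ∨ Sw k S1 := by
      by_cases h : Sw k S1
      · exact Or.inr h
      · exact Or.inl (c.a0 k S1 k1 h)
    have n0 : Sw k S → nd S0 k = nd S (k + 1) ∧ nd S0 (k + 1) = nd S k ∧
        nd S0 (k + 1 + 1) = nd S (k + 1 + 1) := fun h =>
      ⟨nd_sw_left k1 h, nd_sw_right k1 h, nd_sw_ne k1 h k2 (by omega) (by omega)⟩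
    have n1 : Sw (k + 1) S → nd S1 k = nd S k ∧ nd S1 (k + 1) = nd S (k + 1 + 1) ∧
        nd S1 (k + 1 + 1) = nd S (k + 1) := fun h =>
      ⟨nd_sw_ne k2 h (by omega) (by omega) (by omega), nd_sw_left k2 h, nd_sw_right k2 h⟩
    have n01 : Sw (k + 1) S0 → nd S01 k = nd S0 k ∧ nd S01 (k + 1) = nd S0 (k + 1 + 1) ∧
        nd S01 (k + 1 + 1) = nd S0 (k + 1) := fun h =>
      ⟨nd_sw_ne k2 h (by omega) (by omega) (by omega), nd_sw_left k2 h, nd_sw_right k2 h⟩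
    have n10 : Sw k S1 → nd S10 k = nd S1 (k + 1) ∧ nd S10 (k + 1) = nd S1 k ∧
        nd S10 (k + 1 + 1) = nd S1 (k + 1 + 1) := fun h =>
      ⟨nd_sw_left k1 h, nd_sw_right k1 h, nd_sw_ne k1 h k2 (by omega) (by omega)⟩
    have h2 : p • T (k + 1) (v S0) = p • (a (k + 1) S0 • v S01 + z • v S0) := by
      rcases w0 with w | w
      · rw [w, zero_smul, zero_smul]
      · rw [hT, be, (n0 w).2.1, (n0 w).2.2]
    have h3 : p • T k (v S0) = p • (a k S0 • v S + (t - 1 - x) • v S0) := by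
      rcases w0 with w | w
      · rw [w, zero_smul, zero_smul]
      · rw [hT, be_sw' hs k1 w, sw_sw k1 w]
    have h4 : q • T k (v S1) = q • (a k S1 • v S10 + z • v S1) := by
      rcases w1 with w | w
      · rw [w, zero_smul, zero_smul]
      · rw [hT, be, (n1 w).1, (n1 w).2.1]
    have h5 : q • T (k + 1) (v S1) = q • (a (k + 1) S1 • v S + (t - 1 - y) • v S1) := by
      rcases w1 with w | w
      · rw [w, zero_smul, zero_smul]
      · rw [hT, be_sw' hs k2 w, sw_sw k2 w]
    have h6 : (p * a (k + 1) S0) • T k (v S01) =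
        (p * a (k + 1) S0) • (a k S01 • v (sw k S01) + y • v S01) := by
      rcases w0 with w | w
      · rw [w, zero_mul, zero_smul, zero_smul]
      rcases w01 with w' | w'
      · rw [w', mul_zero, zero_smul, zero_smul]
      · rw [hT, be, (n01 w').1, (n01 w').2.1, (n0 w).1, (n0 w).2.2]; rfl
    have h7 : (q * a k S1) • T (k + 1) (v S10) =
        (q * a k S1) • (a (k + 1) S10 • v (sw (k + 1) S10) + x • v S10) := by
      rcases w1 with w | w
      · rw [w, zero_mul, zero_smul, zero_smul]
      rcases w10 with w' | w'
      · rw [w', mul_zero, zero_smul, zero_smul]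
      · rw [hT, be, (n10 w').2.1, (n10 w').2.2, (n1 w).1, (n1 w).2.2]; rfl
    have h8 : (p * a (k + 1) S0 * a k S01) • v (sw k S01) =
        (q * a k S1 * a (k + 1) S10) • v (sw (k + 1) S10) := by
      have hbr : p * a (k + 1) S0 * a k S01 = q * a k S1 * a (k + 1) S10 := c.abr k S hk
      by_cases hzz : p * a (k + 1) S0 * a k S01 = 0
      · rw [← hbr, hzz, zero_smul, zero_smul]
      · have hzz' := hzz
        rw [hbr] at hzz'
        have : sw k S01 = sw (k + 1) S10 := by
          apply sw_braid hk
          · by_contra h; exact hzz (by rw [hp, c.a0 k S k1 h]; simp)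
          · by_contra h; exact hzz (by rw [c.a0 (k + 1) S0 k2 h]; simp)
          · by_contra h; exact hzz (by rw [c.a0 k S01 k1 h]; simp)
          · by_contra h; exact hzz' (by rw [hq, c.a0 (k + 1) S k2 h]; simp)
          · by_contra h; exact hzz' (by rw [c.a0 k S1 k1 h]; simp)
          · by_contra h; exact hzz' (by rw [c.a0 (k + 1) S10 k2 h]; simp)
        rw [this, hbr]
    have aap : p * a k S0 = t + x * (t - 1 - x) := c.aa' hs S k1
    have aaq : q * a (k + 1) S1 = t + y * (t - 1 - y) := c.aa' hs S k2
    clear_value x y z p q S0 S1 S01 S10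
    have h2' := congrArg (T k) h2
    have h4' := congrArg (T (k + 1)) h4
    simp only [map_smul, map_add] at h2' h4'
    have s0 := congrArg (fun u => (p * u) • v S0) star
    have s1 := congrArg (fun u => (q * u) • v S1) star
    have s2 := congrArg (fun u => ((x - y) * u) • v S) star
    have s3 := congrArg (fun u => (z * u) • v S) aap
    have s4 := congrArg (fun u => (z * u) • v S) aaq
    simp only [h0, h1, map_add, map_smul]
    linear_combination (norm := module) h2' - h4' + z • h3 - z • h5 + h6 - h7 + h8
      + x • h4 - y • h2 + s0 - s1 + s2 + s3 - s4
  · intro k j hk hj h1 h2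
    refine ext _ _ fun S => ?_
    simp only [Module.End.mul_apply, hT, hL, map_add, map_smul]
    have h2 : a k S • qc t κ (nd (sw k S) j) • v (sw k S) =
        a k S • qc t κ (nd S j) • v (sw k S) := by
      by_cases h : Sw k S
      · rw [nd_sw_ne hk h hj h1 h2]
      · rw [c.a0 k S hk h, zero_smul, zero_smul]
    linear_combination (norm := module) -h2
  · intro k hk
    exact TL'_of hs.ne (quad k hk) (LT k hk)
  · intro hn
    refine ext _ _ fun S => ?_
    rw [LinearMap.zero_apply]
    have h1 : ∀ p : Polynomial K, Polynomial.aeval (L 0) p (v S) =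
        p.eval (qc t κ (nd S 0)) • v S := by
      intro p
      induction p using Polynomial.induction_on' with
      | add p q hp hq => rw [map_add, LinearMap.add_apply, hp, hq, Polynomial.eval_add, add_smul]
      | monomial k a =>
        have : ∀ k, (L 0 ^ k) (v S) = (qc t κ (nd S 0)) ^ k • v S := by
          intro k
          induction k with
          | zero => simp
          | succ k ih => rw [pow_succ', Module.End.mul_apply, ih, map_smul, hL, smul_smul, pow_succ]
        rw [Polynomial.aeval_monomial, ← Algebra.smul_def, LinearMap.smul_apply, this,
          Polynomial.eval_monomial, smul_smul]
    rw [h1, Polynomial.eval_prod]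
    obtain ⟨q1, _, q3, q4⟩ := nd_isPath S 0 hn
    have e2 : (nd S 0).2.1 = 0 := by
      by_contra h
      obtain ⟨r, hr⟩ := Nat.exists_eq_succ_of_ne_zero h
      obtain ⟨j, hj, -⟩ := q3 r hr
      omega
    have e3 : (nd S 0).2.2 = 0 := by
      by_contra h
      obtain ⟨r, hr⟩ := Nat.exists_eq_succ_of_ne_zero h
      obtain ⟨j, hj, -⟩ := q4 r hr
      omega
    rw [Finset.prod_eq_zero (Finset.mem_range.2 q1), zero_smul]
    simp [qc, cont, e2, e3]

end
end Paper

namespace Paper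
section

theorem be_rho {K : Type*} [Field K] {t : K} (ht : t ≠ 0) {n ℓ : ℕ} (κ : ℕ → ℤ) (k : ℕ)
    (S : StdTableau ℓ n) : be t κ k S = -(qint t (rhoTab κ S (k + 1)))⁻¹ := by
  have e : rhoTab κ S (k + 1) = cont κ (nd S k) - cont κ (nd S (k + 1)) := rfl
  rw [be, bb, e, qc, qc, ← qint_zpow ht, ← neg_sub, qint_sub ht, div_neg]
  have := zpow_ne_zero (cont κ (nd S (k + 1))) ht
  rw [← div_div, div_self this, one_div]

theorem rho_ne {K : Type*} [Field K] {t : K} {n ℓ : ℕ} {κ : ℕ → ℤ} (hs : Sep t n ℓ κ) {k : ℕ}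
    (hk : k + 1 < n) (S : StdTableau ℓ n) : qint t (rhoTab κ S (k + 1)) ≠ 0 := by
  have e : rhoTab κ S (k + 1) = cont κ (nd S k) - cont κ (nd S (k + 1)) := rfl
  intro h
  apply ne_adj hs S hk
  rw [← sub_eq_zero, qc, qc, qint_sub hs.ne, ← e, h, mul_zero]

theorem aa_rho {K : Type*} [Field K] {t : K} {n ℓ : ℕ} {κ : ℕ → ℤ} (hs : Sep t n ℓ κ) {k : ℕ}
    (hk : k + 1 < n) (S : StdTableau ℓ n) (h : Sw k S) :
    qint t (1 + rhoTab κ S (k + 1)) * qint t (1 + rhoTab κ (sw k S) (k + 1)) /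
      (qint t (rhoTab κ S (k + 1)) * qint t (rhoTab κ (sw k S) (k + 1))) =
    t + be t κ k S * be t κ k (sw k S) := by
  have r1 := rho_ne hs hk S
  have r2 := rho_ne hs hk (sw k S)
  rw [be_rho hs.ne, be_rho hs.ne]
  have e : rhoTab κ (sw k S) (k + 1) = - rhoTab κ S (k + 1) := by
    have e1 : rhoTab κ S (k + 1) = cont κ (nd S k) - cont κ (nd S (k + 1)) := rfl
    have e2 : rhoTab κ (sw k S) (k + 1) =
      cont κ (nd (sw k S) k) - cont κ (nd (sw k S) (k + 1)) := rfl
    rw [e2, nd_sw_left hk h, nd_sw_right hk h, e1]; ring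
  rw [e] at r2 ⊢
  set r := rhoTab κ S (k + 1) with hr
  have h1 := qint_add hs.ne r (-r)
  rw [add_neg_cancel, qint_zero, qint_zpow hs.ne] at h1
  have h2 := qint_add hs.ne 1 r
  have h3 := qint_add hs.ne 1 (-r)
  rw [qint_one, zpow_one] at h2 h3
  rw [h2, h3]
  field_simp
  linear_combination (-t) * h1

theorem CS_of {K : Type} [Field K] {t : Kˣ} {n ℓ : ℕ} {κ : ℕ → ℤ} (hs : Sep (t : K) n ℓ κ)
    {α : ℕ → StdTableau ℓ n → K}
    (hα0 : ∀ (r : ℕ) (T : StdTableau ℓ n), 1 ≤ r → r < n →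
      oSwapO T r = none → α r T = 0)
    (hαc : ∀ (r : ℕ) (T V : StdTableau ℓ n), 1 ≤ r → r < n → oSwapO T r = some V →
      α r T * α r V =
        qint (t : K) (1 + rhoTab κ T r) * qint (t : K) (1 + rhoTab κ V r) /
          (qint (t : K) (rhoTab κ T r) * qint (t : K) (rhoTab κ V r)))
    (hαa : ∀ (r : ℕ) (T : StdTableau ℓ n), 1 ≤ r → r + 1 < n →
      aE α r (some T) * aE α (r + 1) (oSwap (some T) r) *
          aE α r (oSwap (oSwap (some T) r) (r + 1)) =
        aE α (r + 1) (some T) * aE α r (oSwap (some T) (r + 1)) *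
          aE α (r + 1) (oSwap (oSwap (some T) (r + 1)) r))
    (hαb : ∀ (r k : ℕ) (T : StdTableau ℓ n), 1 ≤ r → r < n → 1 ≤ k → k < n →
      (r + 1 < k ∨ k + 1 < r) →
      α r T * aE α k (oSwapO T r) = α k T * aE α r (oSwapO T k)) :
    CS (t : K) n ℓ κ (fun k S => α (k + 1) S) := by
  have a0 : ∀ k S, k + 1 < n → ¬ Sw k S → α (k + 1) S = 0 := fun k S hk h =>
    hα0 (k + 1) S (by omega) hk (not_Sw_none hk h)
  refine ⟨a0, ?_, ?_, ?_⟩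
  · intro k S hk h
    rw [hαc (k + 1) S (sw k S) (by omega) hk (h.some hk), aa_rho hs hk S h]
  · intro j k S hj hk hjk
    have h1 := hαb (j + 1) (k + 1) S (by omega) hj (by omega) hk (by omega)
    have key : ∀ j k, j + 1 < n →
        α (j + 1) S * aE α (k + 1) (oSwapO S (j + 1)) =
          α (j + 1) S * α (k + 1) (sw j S) := by
      intro j k hj
      by_cases h : Sw j S
      · rw [h.some hj]; rfl
      · rw [a0 j S hj h, zero_mul, zero_mul]
    rw [key j k hj, key k j hk] at h1
    exact h1
  · intro k S hk
    have h1 := hαa (k + 1) S (by omega) (by omega)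
    have key : ∀ i j, i + 1 < n → j + 1 < n →
        aE α (i + 1) (some S) * aE α (j + 1) (oSwap (some S) (i + 1)) *
          aE α (i + 1) (oSwap (oSwap (some S) (i + 1)) (j + 1)) =
        α (i + 1) S * α (j + 1) (sw i S) * α (i + 1) (sw j (sw i S)) := by
      intro i j hi hj
      have e0 : aE α (i + 1) (some S) = α (i + 1) S := rfl
      have e1 : oSwap (some S) (i + 1) = oSwapO S (i + 1) := rfl
      rw [e0, e1]
      by_cases h : Sw i S
      · rw [h.some hi]
        have e2 : aE α (j + 1) (some (sw i S)) = α (j + 1) (sw i S) := rfl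
        have e3 : oSwap (some (sw i S)) (j + 1) = oSwapO (sw i S) (j + 1) := rfl
        rw [e2, e3]
        by_cases h' : Sw j (sw i S)
        · rw [h'.some hj]; rfl
        · rw [a0 j _ hj h']; simp
      · rw [a0 i S hi h]; simp
    rw [key k (k + 1) (by omega) (by omega), key (k + 1) k (by omega) (by omega)] at h1
    exact h1

theorem F_ne {K : Type} [Field K] {t : Kˣ} {n ℓ : ℕ} {κ : ℕ → ℤ}
    {st : CycHecke K t n ℓ κ →ₗ[K] CycHecke K t n ℓ κ} {F : StdTableau ℓ n → CycHecke K t n ℓ κ}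
    {a : ℕ → StdTableau ℓ n → K}
    (c : Ctx (t : K) n ℓ κ (hLL K t n ℓ κ) (hTT K t n ℓ κ) st F a)
    (cs : CS (t : K) n ℓ κ a) (S : StdTableau ℓ n) : F S ≠ 0 := by
  let v : StdTableau ℓ n → (StdTableau ℓ n →₀ K) := fun S => Finsupp.single S 1
  let Lr : ℕ → Module.End K (StdTableau ℓ n →₀ K) := fun k =>
    Finsupp.linearCombination K (fun S => qc (t : K) κ (nd S k) • v S)
  let Tr : ℕ → Module.End K (StdTableau ℓ n →₀ K) := fun k =>
    Finsupp.linearCombination K (fun S => a k S • v (sw k S) + be (t : K) κ k S • v S)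
  have hL : ∀ k S, Lr k (v S) = qc (t : K) κ (nd S k) • v S := fun k S => by
    simp only [Lr, v, Finsupp.linearCombination_single, one_smul]
  have hT : ∀ k S, Tr k (v S) = a k S • v (sw k S) + be (t : K) κ k S • v S := fun k S => by
    simp only [Tr, v, Finsupp.linearCombination_single, one_smul]
  have hext : ∀ f g : Module.End K (StdTableau ℓ n →₀ K), (∀ S, f (v S) = g (v S)) → f = g := by
    intro f g h
    refine Finsupp.lhom_ext' fun S => LinearMap.ext_ring (h S)
  obtain ⟨φ, h1, h2⟩ := hecke_lift (rep_HA c.sep cs v hext Lr Tr hL hT)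
  have h0 : ∀ U, U ≠ S → φ (F U) (v S) = 0 := by
    intro U hU
    refine orth c.sep hU fun k hk => ?_
    have e1 := congrArg st (c.Fw U k hk)
    rw [c.hs.mul, c.hs.L k hk, map_smul, c.Fst] at e1
    have e2 := congrArg (fun z => φ z (v S)) e1
    simp only [map_mul, Module.End.mul_apply, h1 k hk, hL, map_smul, LinearMap.smul_apply] at e2
    exact e2.symm
  intro hz
  have e : v S = 0 := by
    have e1 : φ 1 (v S) = v S := by rw [map_one, Module.End.one_apply]
    rw [← e1, ← c.Fsum, map_sum, LinearMap.sum_apply]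
    refine Finset.sum_eq_zero fun U _ => ?_
    by_cases hU : U = S
    · rw [hU, hz, map_zero, LinearMap.zero_apply]
    · exact h0 U hU
  exact one_ne_zero (Finsupp.single_eq_zero.1 e)

theorem sx1 {K H : Type*} [Field K] [Ring H] [Algebra K H] {y v x : H} {a b : K}
    (h : y = a • v - b • x) : y = a • v + (-b) • x := by
  rw [h, neg_smul, sub_eq_add_neg]

theorem sx2 {K H : Type*} [Field K] [Ring H] [Algebra K H] {y v x : H} {a b : K}
    (ha : a = 0) (h : y = -(b • x)) : y = a • v + (-b) • x := by
  rw [h, ha, neg_smul, zero_smul, zero_add]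

theorem sx3 {K H : Type*} [Field K] [Ring H] [Algebra K H] {y v x : H} {a b : K}
    (h : y = a • v + (-b) • x) : y = a • v - b • x := by
  rw [h, neg_smul, sub_eq_add_neg]

theorem sx4 {K H : Type*} [Field K] [Ring H] [Algebra K H] {y v x : H} {a b : K}
    (ha : a = 0) (h : y = a • v + (-b) • x) : y = -(b • x) := by
  rw [h, ha, neg_smul, zero_smul, zero_add]

theorem SN_of_props {K : Type} [Field K] {t : Kˣ} {n ℓ : ℕ} {κ : ℕ → ℤ}
    {α : ℕ → StdTableau ℓ n → K} (a0 : ∀ k S, k + 1 < n → ¬ Sw k S → α (k + 1) S = 0)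
    {γ0 : Multipartition ℓ n → Kˣ}
    {f : StdTableau ℓ n → StdTableau ℓ n → CycHecke K t n ℓ κ} {γ : StdTableau ℓ n → Kˣ}
    (h : SeminormalProps K t n ℓ κ α γ0 f γ) :
    SN (t : K) n ℓ κ (hLL K t n ℓ κ) (hTT K t n ℓ κ) (fun k S => α (k + 1) S)
      (fun l => (γ0 l : K)) f (fun U => (γ U : K)) := by
  obtain ⟨⟨li, sp⟩, hL, hTr, hTl, hm, hg⟩ := h
  refine ⟨li, sp, ?_, ?_, ?_, ?_, ?_, ?_, ?_⟩
  · intro S U hSU k hk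
    rw [hLL_eq K t n ℓ κ hk]
    exact (hL S U hSU ⟨k, hk⟩).1
  · intro S U hSU k hk
    rw [hLL_eq K t n ℓ κ hk]
    exact (hL S U hSU ⟨k, hk⟩).2
  · intro S U hSU k hk
    rw [hTT_eq K t n ℓ κ (by omega : k < n - 1), be_rho t.ne_zero]
    have h1 := hTr S U hSU ⟨k, by omega⟩
    by_cases h : Sw k U
    · exact sx1 (h1.1 _ (h.some hk))
    · exact sx2 (a0 k U hk h) (h1.2 (not_Sw_none hk h))
  · intro S U hSU k hk
    rw [hTT_eq K t n ℓ κ (by omega : k < n - 1), be_rho t.ne_zero]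
    have h1 := hTl S U hSU ⟨k, by omega⟩
    by_cases h : Sw k S
    · exact sx1 (h1.1 _ (h.some hk))
    · exact sx2 (a0 k S hk h) (h1.2 (not_Sw_none hk h))
  · intro S U V h1 h2
    exact (hm S U U V h1 h2).1 rfl
  · intro S U U' V h1 h2 h3
    exact (hm S U U' V h1 h2).2 h3
  · intro I hI
    rw [hg I (tlam_of_not_des hI)]

theorem props_of_SN {K : Type} [Field K] {t : Kˣ} {n ℓ : ℕ} {κ : ℕ → ℤ}
    {α : ℕ → StdTableau ℓ n → K} (a0 : ∀ k S, k + 1 < n → ¬ Sw k S → α (k + 1) S = 0)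
    {γ0 : Multipartition ℓ n → Kˣ}
    {f : StdTableau ℓ n → StdTableau ℓ n → CycHecke K t n ℓ κ} {γ : StdTableau ℓ n → Kˣ}
    (h : SN (t : K) n ℓ κ (hLL K t n ℓ κ) (hTT K t n ℓ κ) (fun k S => α (k + 1) S)
      (fun l => (γ0 l : K)) f (fun U => (γ U : K))) :
    SeminormalProps K t n ℓ κ α γ0 f γ := by
  refine ⟨⟨h.li, h.sp⟩, ?_, ?_, ?_, ?_, ?_⟩
  · intro S U hSU k
    have h1 := h.Lr S U hSU k.1 k.2
    have h2 := h.Ll S U hSU k.1 k.2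
    rw [hLL_eq K t n ℓ κ k.2] at h1 h2
    exact ⟨h1, h2⟩
  · intro S U hSU r
    have hk : r.1 + 1 < n := by omega
    have h1 := h.Tr S U hSU r.1 hk
    rw [hTT_eq K t n ℓ κ r.2, be_rho t.ne_zero] at h1
    constructor
    · intro V hV
      have : sw r.1 U = V := by unfold sw; rw [hV]; rfl
      rw [this] at h1
      exact sx3 h1
    · intro hV
      have : ¬ Sw r.1 U := fun h' => by rw [h'.some hk] at hV; exact absurd hV (by simp)
      exact sx4 (a0 r.1 U hk this) h1
  · intro S U hSU r
    have hk : r.1 + 1 < n := by omega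
    have h1 := h.Tl S U hSU r.1 hk
    rw [hTT_eq K t n ℓ κ r.2, be_rho t.ne_zero] at h1
    constructor
    · intro V hV
      have : sw r.1 S = V := by unfold sw; rw [hV]; rfl
      rw [this] at h1
      exact sx3 h1
    · intro hV
      have : ¬ Sw r.1 S := fun h' => by rw [h'.some hk] at hV; exact absurd hV (by simp)
      exact sx4 (a0 r.1 S hk this) h1
  · intro S U U' V h1 h2
    refine ⟨?_, fun hne => h.m0 S U U' V h1 h2 hne⟩
    rintro rfl
    exact h.m1 S U V h1 h2
  · intro I hI
    exact Units.ext (h.g I (not_des_of_tlam hI))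

end

/-- the Seminormal Basis Theorem: if `(K, t)` separates `Std(P_n)`
then every seminormal coefficient system `α`, together with any choice of nonzero
scalars `γ₀(λ)` for the initial tableaux `t^λ`, determines a unique seminormal basis
`{f_{S,T}}` of `H_n(K, t, κ)` with the properties (i)–(iv). -/
theorem seminormal_basis_theorem (K : Type) [Field K] (t : Kˣ) (n ℓ : ℕ) (hℓ : 1 ≤ ℓ)
    (κ : ℕ → ℤ) (hsep : SeparatesF t n ℓ κ)
    (α : ℕ → StdTableau ℓ n → K)
    (hα0 : ∀ (r : ℕ) (T : StdTableau ℓ n), 1 ≤ r → r < n →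
      oSwapO T r = none → α r T = 0)
    (hαc : ∀ (r : ℕ) (T V : StdTableau ℓ n), 1 ≤ r → r < n → oSwapO T r = some V →
      α r T * α r V =
        qint (t : K) (1 + rhoTab κ T r) * qint (t : K) (1 + rhoTab κ V r) /
          (qint (t : K) (rhoTab κ T r) * qint (t : K) (rhoTab κ V r)))
    (hαa : ∀ (r : ℕ) (T : StdTableau ℓ n), 1 ≤ r → r + 1 < n →
      aE α r (some T) * aE α (r + 1) (oSwap (some T) r) *
          aE α r (oSwap (oSwap (some T) r) (r + 1)) =
        aE α (r + 1) (some T) * aE α r (oSwap (some T) (r + 1)) *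
          aE α (r + 1) (oSwap (oSwap (some T) (r + 1)) r))
    (hαb : ∀ (r k : ℕ) (T : StdTableau ℓ n), 1 ≤ r → r < n → 1 ≤ k → k < n →
      (r + 1 < k ∨ k + 1 < r) →
      α r T * aE α k (oSwapO T r) = α k T * aE α r (oSwapO T k))
    (γ0 : Multipartition ℓ n → Kˣ) :
    ∃ (f : StdTableau ℓ n → StdTableau ℓ n → CycHecke K t n ℓ κ)
      (γ : StdTableau ℓ n → Kˣ),
      SeminormalProps K t n ℓ κ α γ0 f γ ∧
      ∀ (f' : StdTableau ℓ n → StdTableau ℓ n → CycHecke K t n ℓ κ)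
        (γ' : StdTableau ℓ n → Kˣ),
        SeminormalProps K t n ℓ κ α γ0 f' γ' →
        ∀ S T : StdTableau ℓ n, S.shape = T.shape → f' S T = f S T := by
  have hs : Sep (t : K) n ℓ κ := Sep.of hsep
  have cs := CS_of hs hα0 hαc hαa hαb
  have a0 : ∀ k S, k + 1 < n → ¬ Sw k S → α (k + 1) S = 0 := cs.a0
  obtain ⟨st, hst⟩ := hecke_HS (K := K) (t := t) (n := n) (ℓ := ℓ) (κ := κ)
  obtain ⟨F, F1, F2, F3, F4, F5⟩ := exists_F hs (hecke_HA K t n ℓ κ) hst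
  have c : Ctx (t : K) n ℓ κ (hLL K t n ℓ κ) (hTT K t n ℓ κ) st F (fun k S => α (k + 1) S) :=
    ⟨hs, hecke_HA K t n ℓ κ, hst, F1, F2, fun {S h} => F3 S h, fun {S U h} => F4 S U h, F5,
      cs.a0, cs.aa, cs.afar, cs.abr⟩
  obtain ⟨f, γ, hf, hγ, -⟩ := SN.exists c (fun A => hecke_gen A) (F_ne c cs)
    (fun l => (γ0 l : K)) (fun l => (γ0 l).ne_zero)
  refine ⟨f, fun U => Units.mk0 (γ U) (hγ U), props_of_SN a0 hf, ?_⟩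
  intro f' γ' h' S T hST
  exact SN.unique c (fun l => (γ0 l).ne_zero) hf (SN_of_props a0 h') S T hST

end Paper
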